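/- There exists an absolute constant C > 0 such that for every odd prime q and every integer k ≥ 1 with r = gcd(k, q−1) and h = (q−1)/r even, one has |γ_{k,q} − γ| ≤ C·( (log q)³/(q^{1/r}·log log q) + r·(log q)²/√q ), where γ is the Euler–Mascheroni constant. -/

import Mathlib

open Filter Topology

/-- The `k`-th divisor sum function `σ_k(n) = ∑_{d ∣ n} d^k`. -/
def sigmak (k n : ℕ) : ℕ := ∑ d ∈ n.divisors, d ^ k

/-- The multiplicative order `g_p` of `p^m` modulo `q`. -/
noncomputable def gp (q m p : ℕ) : ℕ := orderOf ((p : ZMod q) ^ m)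

/-- The local term at a prime `p` of the prime sum `S(m,q)` of the paper. -/
noncomputable def Sterm (q m p : ℕ) : ℝ :=
  if p = q then 0 else
    (if gp q m p = 1 then
        (q : ℝ) * Real.log p / ((p : ℝ) ^ q - 1)
          - ((q : ℝ) - 1) * Real.log p / ((p : ℝ) ^ (q - 1) - 1)
      else 0)
    + (if 3 ≤ gp q m p then
        (gp q m p : ℝ) * Real.log p / ((p : ℝ) ^ gp q m p - 1)
          - ((gp q m p : ℝ) - 1) * Real.log p / ((p : ℝ) ^ (gp q m p - 1) - 1)
      else 0)
    + (if gp q m p = 2 then Real.log p / ((p : ℝ) ^ 2 - 1) else 0)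
    + (if 4 ≤ gp q m p ∧ 2 ∣ gp q m p then
        Real.log p / ((p : ℝ) ^ (gp q m p / 2) - ((p : ℝ) ^ (gp q m p / 2))⁻¹)
      else 0)

/-- The prime sum `S(m,q)` of the paper (a sum over all primes `p ≠ q`). -/
noncomputable def Smq (q m : ℕ) : ℝ := ∑' p : Nat.Primes, Sterm q m (p : ℕ)

/-- The Dirichlet L-function attached to a Dirichlet character mod `q` (junk value for `q = 0`). -/
noncomputable def Lfun {q : ℕ} (χ : DirichletCharacter ℂ q) (s : ℂ) : ℂ :=
  if h : q = 0 then 0 else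
    haveI : NeZero q := ⟨h⟩
    DirichletCharacter.LFunction χ s

/-- `γ_{K_m} = γ + ∑_{χ ∈ X_m^*} (L'/L)(1,χ)`, the Euler–Kronecker constant of the unique
subfield of `ℚ(ζ_q)` of degree `(q-1)/m`; here `X_m^*` is the set of nonprincipal Dirichlet
characters mod `q` that are trivial on the group `C_m` of `m`-th roots of unity mod `q`. -/
noncomputable def gammaK (q m : ℕ) : ℝ :=
  Real.eulerMascheroniConstant +
    (∑ᶠ χ ∈ {χ : DirichletCharacter ℂ q | χ ≠ 1 ∧ ∀ a : ZMod q, a ^ m = 1 → χ a = 1},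
      deriv (Lfun χ) 1 / Lfun χ 1).re

/-- The Euler–Kronecker constant `γ_{k,q}`, for `q` an odd prime, `r = gcd(k, q-1)` and
`h = (q-1)/r` even:  `γ_{k,q} = γ − (1/h)(2γ_{K_{2r}} − γ_{K_r}) − log q/(h(q−1)) − S(r,q)`. -/
noncomputable def gammakq (q k : ℕ) : ℝ :=
  Real.eulerMascheroniConstant
    - (1 / (((q - 1) / Nat.gcd k (q - 1) : ℕ) : ℝ)) *
        (2 * gammaK q (2 * Nat.gcd k (q - 1)) - gammaK q (Nat.gcd k (q - 1)))
    - Real.log q / ((((q - 1) / Nat.gcd k (q - 1) : ℕ) : ℝ) * ((q : ℝ) - 1))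
    - Smq q (Nat.gcd k (q - 1))

/-- `γ'_{k,q} = γ_{k,q} + log q/(q-1)`. -/
noncomputable def gammakq' (q k : ℕ) : ℝ := gammakq q k + Real.log q / ((q : ℝ) - 1)

/-- Telescoping bound for the terms of a convergent `p`-series. -/
lemma rpow_neg_le_telescope {x : ℝ} (hx : 0 < x) {n : ℕ} (hn : 1 ≤ n) :
    ((n + 1 : ℕ) : ℝ) ^ (-(1 + x)) ≤ ((n : ℝ) ^ (-x) - ((n + 1 : ℕ) : ℝ) ^ (-x)) / x := by
  have hn0 : (0 : ℝ) < n := by exact_mod_cast hn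
  set a : ℝ := ((n + 1 : ℕ) : ℝ) with ha
  have han : a = n + 1 := by simp [ha]
  have ha0 : 0 < a := by rw [han]; positivity
  have h1 : (n : ℝ) = a * (n / a) := by field_simp
  have h2 : (n : ℝ) ^ (-x) = a ^ (-x) * ((n : ℝ) / a) ^ (-x) := by
    rw [← Real.mul_rpow ha0.le (by positivity), ← h1]
  have h3 : 1 + x / a ≤ ((n : ℝ) / a) ^ (-x) := by
    have hpos : (0 : ℝ) < n / a := by positivity
    rw [Real.rpow_def_of_pos hpos]
    have hlog : Real.log (n / a) ≤ n / a - 1 := Real.log_le_sub_one_of_pos hpos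
    have hval : (n : ℝ) / a - 1 = -(1 / a) := by rw [han]; field_simp; ring
    have : x / a ≤ Real.log (n / a) * (-x) := by
      rw [hval] at hlog
      have := mul_le_mul_of_nonneg_left hlog hx.le
      have e : x * -(1 / a) = -(x / a) := by ring
      linarith
    have := Real.add_one_le_exp (Real.log (n / a) * (-x))
    linarith
  rw [le_div_iff₀ hx, neg_add, Real.rpow_add ha0, Real.rpow_neg_one, h2]
  have hp : 0 < a ^ (-x) := by positivity
  have := mul_le_mul_of_nonneg_left h3 hp.le
  have e : a ^ (-x) * (1 + x / a) = a ^ (-x) + a⁻¹ * a ^ (-x) * x := by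
    field_simp
  linarith

lemma sum_rpow_tail_le {x : ℝ} (hx : 0 < x) {N : ℕ} (hN : 1 ≤ N) (M : ℕ) :
    ∑ n ∈ Finset.range M, ((N + n + 1 : ℕ) : ℝ) ^ (-(1 + x)) ≤ (N : ℝ) ^ (-x) / x := by
  have : ∑ n ∈ Finset.range M, ((N + n + 1 : ℕ) : ℝ) ^ (-(1 + x)) ≤
      ((N : ℝ) ^ (-x) - ((N + M : ℕ) : ℝ) ^ (-x)) / x := by
    induction M with
    | zero => simp
    | succ k ih =>
      rw [Finset.sum_range_succ]
      have := rpow_neg_le_telescope hx (n := N + k) (by omega)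
      rw [← add_assoc]
      have e : ((N : ℝ) ^ (-x) - ((N + k + 1 : ℕ) : ℝ) ^ (-x)) / x =
        ((N : ℝ) ^ (-x) - ((N + k : ℕ) : ℝ) ^ (-x)) / x +
        (((N + k : ℕ) : ℝ) ^ (-x) - ((N + k + 1 : ℕ) : ℝ) ^ (-x)) / x := by ring
      rw [e]
      linarith
  refine this.trans ?_
  gcongr
  have : (0 : ℝ) ≤ ((N + M : ℕ) : ℝ) ^ (-x) := by positivity
  linarith

lemma summable_rpow_tail {x : ℝ} (hx : 0 < x) {N : ℕ} (hN : 1 ≤ N) :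
    Summable fun n : ℕ => ((N + n + 1 : ℕ) : ℝ) ^ (-(1 + x)) :=
  summable_of_sum_range_le (fun _ => by positivity) (sum_rpow_tail_le hx hN)

lemma tsum_rpow_tail_le {x : ℝ} (hx : 0 < x) {N : ℕ} (hN : 1 ≤ N) :
    ∑' n : ℕ, ((N + n + 1 : ℕ) : ℝ) ^ (-(1 + x)) ≤ (N : ℝ) ^ (-x) / x :=
  Real.tsum_le_of_sum_range_le (fun _ => by positivity) (sum_rpow_tail_le hx hN)

lemma summable_rpow_succ {x : ℝ} (hx : 0 < x) :
    Summable fun n : ℕ => ((n + 1 : ℕ) : ℝ) ^ (-(1 + x)) := by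
  rw [← summable_nat_add_iff 1]
  refine (summable_rpow_tail hx le_rfl).congr fun n => ?_
  rw [add_comm 1 n]

lemma tsum_rpow_succ_le {x : ℝ} (hx : 0 < x) (hx1 : x ≤ 1) :
    ∑' n : ℕ, ((n + 1 : ℕ) : ℝ) ^ (-(1 + x)) ≤ 2 / x := by
  rw [(summable_rpow_succ hx).tsum_eq_zero_add]
  have h := tsum_rpow_tail_le hx (N := 1) le_rfl
  have e : ∀ n : ℕ, 1 + n + 1 = n + 1 + 1 := by intro n; ring
  simp only [e] at h
  simp only [zero_add, Nat.cast_one, Real.one_rpow] at h ⊢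
  have : 2 / x = 1 / x + 1 / x := by ring
  have : 1 ≤ 1 / x := by rw [le_div_iff₀ hx]; linarith
  linarith

/-- `∑_{n > N} n^{-3/2} ≪ N^{-1/2}`, written as a sum over all `n` of an indicator. -/
lemma tsum_tail_three_halves {N : ℕ} (hN : 1 ≤ N) :
    (Summable fun n : ℕ => if N < n then (n : ℝ) ^ (-(3 / 2) : ℝ) else 0) ∧
    ∑' n : ℕ, (if N < n then (n : ℝ) ^ (-(3 / 2) : ℝ) else 0) ≤ 2 / Real.sqrt N := by
  have hs := summable_rpow_tail (x := 1 / 2) (by norm_num) hN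
  have ht := tsum_rpow_tail_le (x := 1 / 2) (by norm_num) hN
  have e : ∀ n : ℕ, (if N < n + (N + 1) then ((n + (N + 1) : ℕ) : ℝ) ^ (-(3 / 2) : ℝ) else 0) =
      ((N + n + 1 : ℕ) : ℝ) ^ (-(1 + 1 / 2 : ℝ)) := by
    intro n
    rw [if_pos (by omega), show n + (N + 1) = N + n + 1 by ring]
    norm_num
  have hs' : Summable fun n : ℕ => if N < n then (n : ℝ) ^ (-(3 / 2) : ℝ) else 0 := by
    rw [← summable_nat_add_iff (N + 1)]
    exact hs.congr fun n => (e n).symm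
  refine ⟨hs', ?_⟩
  rw [← hs'.sum_add_tsum_nat_add (N + 1), Finset.sum_eq_zero, zero_add, tsum_congr e]
  · refine ht.trans (le_of_eq ?_)
    rw [Real.rpow_neg (by positivity), ← Real.sqrt_eq_rpow]
    field_simp
  · intro n hn
    rw [if_neg]
    have := Finset.mem_range.mp hn
    omega

lemma sum_inv_le_log {N : ℕ} :
    ∑ n ∈ Finset.range N, ((n + 1 : ℕ) : ℝ)⁻¹ ≤ 1 + Real.log N := by
  have := harmonic_le_one_add_log N
  simpa [harmonic] using this

lemma one_le_log_three : 1 ≤ Real.log 3 := by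
  rw [Real.le_log_iff_exp_le (by norm_num)]
  have := Real.exp_one_lt_d9
  linarith

lemma one_le_log_of_three_le {q : ℕ} (hq : 3 ≤ q) : 1 ≤ Real.log q :=
  one_le_log_three.trans (Real.log_le_log (by norm_num) (by exact_mod_cast hq))

/-- Partial sums `∑_{m ≤ n} χ(m)` of a Dirichlet character. -/
noncomputable def charSum {q : ℕ} (χ : DirichletCharacter ℂ q) (n : ℕ) : ℂ :=
  ∑ m ∈ Finset.range (n + 1), χ m

lemma charSum_succ {q : ℕ} (χ : DirichletCharacter ℂ q) (n : ℕ) :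
    charSum χ (n + 1) = charSum χ n + χ ((n + 1 : ℕ) : ZMod q) := by
  rw [charSum, Finset.sum_range_succ, charSum]

lemma charSum_zero {q : ℕ} (hq : 1 < q) (χ : DirichletCharacter ℂ q) : charSum χ 0 = 0 := by
  have : Fact (1 < q) := ⟨hq⟩
  simp only [charSum, zero_add, Finset.range_one, Finset.sum_singleton, Nat.cast_zero]
  exact MulChar.map_zero χ

lemma norm_charSum_le_self {q : ℕ} (hq : 1 < q) (χ : DirichletCharacter ℂ q) (n : ℕ) :
    ‖charSum χ n‖ ≤ n := by
  induction n with
  | zero => simp [charSum_zero hq]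
  | succ n ih =>
    rw [charSum_succ]
    refine (norm_add_le _ _).trans ?_
    push_cast
    have := χ.norm_le_one ((n + 1 : ℕ) : ZMod q)
    push_cast at this
    linarith

lemma charSum_add_period {q : ℕ} [NeZero q] {χ : DirichletCharacter ℂ q} (hχ : χ ≠ 1) (n : ℕ) :
    charSum χ (n + q) = charSum χ n := by
  have hsum : ∑ m ∈ Finset.range q, χ (m : ZMod q) = 0 := by
    rw [← MulChar.sum_eq_zero_of_ne_one hχ]
    refine Finset.sum_bij' (fun m _ => (m : ZMod q)) (fun a _ => a.val) ?_ ?_ ?_ ?_ ?_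
    · simp
    · intro a _; simpa using ZMod.val_lt a
    · intro a ha; simpa using ZMod.val_cast_of_lt (Finset.mem_range.mp ha)
    · intro a _; simp
    · simp
  rw [charSum, charSum, show n + q + 1 = q + (n + 1) by ring, Finset.sum_range_add, hsum, zero_add]
  simp

lemma norm_charSum_le {q : ℕ} (hq : 1 < q) {χ : DirichletCharacter ℂ q} (hχ : χ ≠ 1) (n : ℕ) :
    ‖charSum χ n‖ ≤ q := by
  have : NeZero q := ⟨by omega⟩
  have key : ∀ k m, m < q → ‖charSum χ (m + k * q)‖ ≤ q := by
    intro k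
    induction k with
    | zero =>
      intro m hm
      simp only [zero_mul, add_zero]
      exact (norm_charSum_le_self hq χ m).trans (by exact_mod_cast hm.le)
    | succ k ih =>
      intro m hm
      rw [show m + (k + 1) * q = m + k * q + q by ring, charSum_add_period hχ]
      exact ih m hm
  have := key (n / q) (n % q) (Nat.mod_lt _ (by omega))
  rwa [mul_comm, Nat.mod_add_div] at this

lemma norm_cpow_sub_cpow_succ_le {s : ℂ} (hs : 0 < s.re) {n : ℕ} (hn : 1 ≤ n) :
    ‖(n : ℂ) ^ (-s) - ((n + 1 : ℕ) : ℂ) ^ (-s)‖ ≤ ‖s‖ * (n : ℝ) ^ (-(1 + s.re)) := by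
  have hn0 : (0 : ℝ) < n := by exact_mod_cast hn
  have hs0 : -s ≠ 0 := by
    intro h
    have : s = 0 := neg_eq_zero.mp h
    simp [this] at hs
  have hder : ∀ t ∈ Set.Icc (n : ℝ) (n + 1), HasDerivWithinAt (fun t : ℝ => (t : ℂ) ^ (-s))
      (-s * (t : ℂ) ^ (-s - 1)) (Set.Icc (n : ℝ) (n + 1)) t := by
    intro t ht
    have ht0 : t ≠ 0 := (hn0.trans_le ht.1).ne'
    exact (hasDerivAt_ofReal_cpow_const ht0 hs0).hasDerivWithinAt
  have hb : ∀ t ∈ Set.Icc (n : ℝ) (n + 1),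
      ‖-s * (t : ℂ) ^ (-s - 1)‖ ≤ ‖s‖ * (n : ℝ) ^ (-(1 + s.re)) := by
    intro t ht
    have ht0 : 0 < t := hn0.trans_le ht.1
    rw [norm_mul, norm_neg, Complex.norm_cpow_eq_rpow_re_of_pos ht0]
    gcongr
    have : (-s - 1).re = -(1 + s.re) := by simp; ring
    rw [this]
    exact Real.rpow_le_rpow_of_nonpos hn0 ht.1 (by linarith)
  have := Convex.norm_image_sub_le_of_norm_hasDerivWithin_le hder hb (convex_Icc _ _)
    (x := (n + 1 : ℝ)) (y := n) (by simp) (by simp)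
  simpa using this

/-- The summands of the Abel-summed Dirichlet `L`-series. -/
noncomputable def abelTerm {q : ℕ} (χ : DirichletCharacter ℂ q) (n : ℕ) (s : ℂ) : ℂ :=
  charSum χ (n + 1) * (((n + 1 : ℕ) : ℂ) ^ (-s) - ((n + 2 : ℕ) : ℂ) ^ (-s))

lemma norm_abelTerm_le {q : ℕ} (χ : DirichletCharacter ℂ q) (n : ℕ) {s : ℂ} (hs : 0 < s.re) :
    ‖abelTerm χ n s‖ ≤ ‖charSum χ (n + 1)‖ * (‖s‖ * ((n + 1 : ℕ) : ℝ) ^ (-(1 + s.re))) := by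
  rw [abelTerm, norm_mul]
  gcongr
  exact norm_cpow_sub_cpow_succ_le hs (n := n + 1) (by omega)

lemma differentiable_abelTerm {q : ℕ} (χ : DirichletCharacter ℂ q) (n : ℕ) :
    Differentiable ℂ (abelTerm χ n) := by
  unfold abelTerm
  intro s
  have h1 : ((n + 1 : ℕ) : ℂ) ≠ 0 := Nat.cast_ne_zero.mpr (by omega)
  have h2 : ((n + 2 : ℕ) : ℂ) ≠ 0 := Nat.cast_ne_zero.mpr (by omega)
  refine DifferentiableAt.const_mul (DifferentiableAt.sub ?_ ?_) _
  · exact (differentiableAt_neg_iff.mpr differentiableAt_id).const_cpow (Or.inl h1)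
  · exact (differentiableAt_neg_iff.mpr differentiableAt_id).const_cpow (Or.inl h2)

lemma differentiableOn_tsum_abelTerm {q : ℕ} (hq : 1 < q) {χ : DirichletCharacter ℂ q}
    (hχ : χ ≠ 1) : DifferentiableOn ℂ (fun s => ∑' n, abelTerm χ n s) {s : ℂ | 0 < s.re} := by
  intro s₀ hs₀
  have hs₀' : 0 < s₀.re := hs₀
  set ε := s₀.re / 2 with hε
  set U : Set ℂ := {s | ε < s.re} ∩ Metric.ball 0 (‖s₀‖ + 1) with hU
  have hUo : IsOpen U :=
    (isOpen_lt continuous_const Complex.continuous_re).inter Metric.isOpen_ball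
  have hmem : s₀ ∈ U := ⟨by simp only [Set.mem_ofPred_eq]; linarith, by simp⟩
  have hε0 : 0 < ε := by positivity
  have hd : DifferentiableOn ℂ (fun s => ∑' n, abelTerm χ n s) U := by
    refine Complex.differentiableOn_tsum_of_summable_norm
      (u := fun n => (q * (‖s₀‖ + 1)) * ((n + 1 : ℕ) : ℝ) ^ (-(1 + ε)))
      ((summable_rpow_succ hε0).mul_left _)
      (fun n => (differentiable_abelTerm χ n).differentiableOn) hUo ?_
    rintro n w ⟨hw1, hw2⟩
    have hw1' : ε < w.re := hw1
    refine (norm_abelTerm_le χ n (hε0.trans hw1')).trans ?_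
    rw [mul_assoc]
    have : ‖w‖ ≤ ‖s₀‖ + 1 := by simpa using (mem_ball_zero_iff.mp hw2).le
    gcongr
    · exact norm_charSum_le hq hχ _
    · exact_mod_cast Nat.le_add_left 1 n
  exact (hd.differentiableAt (hUo.mem_nhds hmem)).differentiableWithinAt

lemma sum_char_mul_cpow {q : ℕ} (hq : 1 < q) (χ : DirichletCharacter ℂ q) (s : ℂ) (N : ℕ) :
    ∑ n ∈ Finset.range N, χ ((n + 1 : ℕ) : ZMod q) * ((n + 1 : ℕ) : ℂ) ^ (-s) =
      charSum χ N * ((N + 1 : ℕ) : ℂ) ^ (-s) + ∑ n ∈ Finset.range N, abelTerm χ n s := by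
  induction N with
  | zero => simp [charSum_zero hq]
  | succ N ih =>
    rw [Finset.sum_range_succ, ih, Finset.sum_range_succ, abelTerm, charSum_succ]
    ring

lemma LFunction_eq_tsum_abelTerm_of_one_lt {q : ℕ} [NeZero q] (hq : 1 < q)
    {χ : DirichletCharacter ℂ q} (hχ : χ ≠ 1) {s : ℂ} (hs : 1 < s.re) :
    DirichletCharacter.LFunction χ s = ∑' n, abelTerm χ n s := by
  rw [DirichletCharacter.LFunction_eq_LSeries χ hs]
  have hS : LSeriesSummable (fun n => χ n) s := by
    exact ZMod.LSeriesSummable_of_one_lt_re χ hs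
  have h1 : Tendsto (fun N => ∑ n ∈ Finset.range N,
      χ ((n + 1 : ℕ) : ZMod q) * ((n + 1 : ℕ) : ℂ) ^ (-s)) atTop
      (𝓝 (LSeries (fun n => χ n) s)) := by
    have := hS.hasSum
    have h2 := (hasSum_nat_add_iff' 1).mpr this
    simp only [Finset.range_one, Finset.sum_singleton, LSeries.term_zero, sub_zero] at h2
    refine (h2.tendsto_sum_nat).congr fun N => Finset.sum_congr rfl fun n _ => ?_
    rw [LSeries.term_of_ne_zero (by omega), Complex.cpow_neg, div_eq_mul_inv]
  have hs0 : 0 < s.re := by linarith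
  have hsum : Summable fun n => abelTerm χ n s := by
    refine Summable.of_norm_bounded
      (g := fun n => (q * ‖s‖) * ((n + 1 : ℕ) : ℝ) ^ (-(1 + s.re)))
      ((summable_rpow_succ hs0).mul_left _) fun n => ?_
    refine (norm_abelTerm_le χ n hs0).trans ?_
    rw [mul_assoc]
    gcongr
    exact norm_charSum_le hq hχ _
  have h3 : Tendsto (fun N : ℕ => charSum χ N * ((N + 1 : ℕ) : ℂ) ^ (-s)) atTop (𝓝 0) := by
    rw [tendsto_zero_iff_norm_tendsto_zero]
    have h4 : Tendsto (fun N : ℕ => (q : ℝ) * ((N + 1 : ℕ) : ℝ) ^ (-s.re)) atTop (𝓝 0) := by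
      have := (tendsto_rpow_neg_atTop hs0).comp
        (tendsto_natCast_atTop_atTop.comp (tendsto_add_atTop_nat 1))
      simpa using this.const_mul (q : ℝ)
    refine squeeze_zero (fun _ => norm_nonneg _) (fun N => ?_) h4
    rw [norm_mul, Complex.norm_natCast_cpow_of_pos (by omega), Complex.neg_re]
    gcongr
    exact norm_charSum_le hq hχ _
  have h5 := h3.add hsum.hasSum.tendsto_sum_nat
  rw [zero_add] at h5
  exact tendsto_nhds_unique h1 (h5.congr fun N => (sum_char_mul_cpow hq χ s N).symm)

/-- Abel summation continues the Dirichlet `L`-series to `re s > 0`. -/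
lemma LFunction_eq_tsum_abelTerm {q : ℕ} [NeZero q] (hq : 1 < q)
    {χ : DirichletCharacter ℂ q} (hχ : χ ≠ 1) {s : ℂ} (hs : 0 < s.re) :
    DirichletCharacter.LFunction χ s = ∑' n, abelTerm χ n s := by
  have hUo : IsOpen {s : ℂ | 0 < s.re} := isOpen_lt continuous_const Complex.continuous_re
  have h1 : AnalyticOnNhd ℂ (DirichletCharacter.LFunction χ) {s : ℂ | 0 < s.re} :=
    (DirichletCharacter.differentiable_LFunction hχ).differentiableOn.analyticOnNhd hUo
  have h2 := (differentiableOn_tsum_abelTerm hq hχ).analyticOnNhd hUo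
  refine h1.eqOn_of_preconnected_of_eventuallyEq h2 (convex_halfSpace_re_gt 0).isPreconnected
    (z₀ := 2) (by simp) ?_ hs
  have : {s : ℂ | 1 < s.re} ∈ 𝓝 (2 : ℂ) :=
    (isOpen_lt continuous_const Complex.continuous_re).mem_nhds (by simp)
  filter_upwards [this] with w hw
  exact LFunction_eq_tsum_abelTerm_of_one_lt hq hχ hw

/-- `L(s, χ) ≪ log q` near `s = 1`. -/
lemma norm_LFunction_le {q : ℕ} [NeZero q] (hq : 3 ≤ q) {χ : DirichletCharacter ℂ q} (hχ : χ ≠ 1)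
    {s : ℂ} (hs : ‖s - 1‖ ≤ 1 / (2 * Real.log q)) :
    ‖DirichletCharacter.LFunction χ s‖ ≤ 16 * Real.log q := by
  have hL := one_le_log_of_three_le hq
  set L := Real.log q with hLdef
  have hq0 : (0 : ℝ) < q := by positivity
  have hs2 : ‖s - 1‖ ≤ 1 / 2 := hs.trans (by
    rw [div_le_div_iff₀ (by positivity) (by norm_num)]; linarith)
  have hre : |s.re - 1| ≤ 1 / (2 * L) := by
    have := (Complex.abs_re_le_norm (s - 1)).trans hs
    simpa using this
  have hre2 : |s.re - 1| ≤ 1 / 2 := by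
    have := (Complex.abs_re_le_norm (s - 1)).trans hs2
    simpa using this
  have hσ : 1 / 2 ≤ s.re := by have := (abs_le.mp hre2).1; linarith
  have hσ1 : 1 - s.re ≤ 1 / (2 * L) := by have := (abs_le.mp hre).1; linarith
  have hn2 : ‖s‖ ≤ 2 := by
    have := norm_add_le (s - 1) 1
    simp only [sub_add_cancel, norm_one] at this
    linarith
  have hpow : ∀ a : ℝ, 0 < a → a ≤ q → 1 ≤ a → a ^ (1 - s.re) ≤ 2 := by
    intro a ha haq ha1
    rw [Real.rpow_def_of_pos ha]
    have h1 : Real.log a * (1 - s.re) ≤ 1 / 2 := by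
      have hla : 0 ≤ Real.log a := Real.log_nonneg ha1
      have hle : Real.log a ≤ L := Real.log_le_log ha haq
      calc Real.log a * (1 - s.re) ≤ Real.log a * (1 / (2 * L)) := by gcongr
        _ ≤ L * (1 / (2 * L)) := by gcongr
        _ = 1 / 2 := by field_simp
    refine (Real.exp_le_exp.mpr h1).trans ?_
    have h2 := Real.exp_one_lt_d9
    have h3 : Real.exp (1 / 2) * Real.exp (1 / 2) = Real.exp 1 := by
      rw [← Real.exp_add]; norm_num
    nlinarith [Real.exp_pos (1 / 2)]
  obtain ⟨hts, htl⟩ := tsum_tail_three_halves (N := q) (by omega)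
  set g1 : ℕ → ℝ := fun n => if n + 1 ≤ q then 4 * ((n + 1 : ℕ) : ℝ)⁻¹ else 0 with hg1
  set g2 : ℕ → ℝ := fun n => if q < n then (n : ℝ) ^ (-(3 / 2) : ℝ) else 0 with hg2
  have hg1s : Summable g1 := by
    refine summable_of_ne_finset_zero (s := Finset.range q) fun n hn => ?_
    simp only [hg1]
    rw [if_neg]
    simpa using hn
  have hg1t : ∑' n, g1 n ≤ 4 * (1 + L) := by
    rw [tsum_eq_sum (s := Finset.range q)]
    · calc ∑ n ∈ Finset.range q, g1 n = 4 * ∑ n ∈ Finset.range q, ((n + 1 : ℕ) : ℝ)⁻¹ := by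
            rw [Finset.mul_sum]
            refine Finset.sum_congr rfl fun n hn => ?_
            simp only [hg1]
            rw [if_pos]
            have := Finset.mem_range.mp hn
            omega
        _ ≤ 4 * (1 + L) := by gcongr; exact sum_inv_le_log
    · intro n hn
      simp only [hg1]
      rw [if_neg]
      simpa using hn
  have hg2s : Summable fun n => g2 (n + 1) := (summable_nat_add_iff 1).mpr hts
  have hg2t : ∑' n, g2 (n + 1) ≤ 2 / Real.sqrt q := by
    rw [hts.tsum_eq_zero_add] at htl
    simpa [hg2] using htl
  have hbound : ∀ n, ‖abelTerm χ n s‖ ≤ g1 n + 4 * Real.sqrt q * g2 (n + 1) := by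
    intro n
    refine (norm_abelTerm_le χ n (by linarith)).trans ?_
    have hn0 : (0 : ℝ) < ((n + 1 : ℕ) : ℝ) := by positivity
    by_cases hn : n + 1 ≤ q
    · have hg : g2 (n + 1) = 0 := by simp only [hg2]; rw [if_neg]; omega
      simp only [hg1, if_pos hn, hg, mul_zero, add_zero]
      have h1 := norm_charSum_le_self (by omega) χ (n + 1)
      have h2 := hpow ((n + 1 : ℕ) : ℝ) hn0 (by exact_mod_cast hn) (by exact_mod_cast Nat.le_add_left 1 n)
      calc ‖charSum χ (n + 1)‖ * (‖s‖ * ((n + 1 : ℕ) : ℝ) ^ (-(1 + s.re)))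
          ≤ ((n + 1 : ℕ) : ℝ) * (2 * ((n + 1 : ℕ) : ℝ) ^ (-(1 + s.re))) := by gcongr
        _ = 2 * ((n + 1 : ℕ) : ℝ)⁻¹ * ((n + 1 : ℕ) : ℝ) ^ (1 - s.re) := by
            rw [show -(1 + s.re) = (1 - s.re) + (-1) + (-1) by ring, Real.rpow_add hn0,
              Real.rpow_add hn0, Real.rpow_neg_one]
            field_simp
        _ ≤ 2 * ((n + 1 : ℕ) : ℝ)⁻¹ * 2 := by gcongr
        _ = 4 * ((n + 1 : ℕ) : ℝ)⁻¹ := by ring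
    · have hqn : q < n + 1 := by omega
      simp only [hg1, if_neg hn, hg2, if_pos hqn, zero_add]
      have h1 := norm_charSum_le (by omega) hχ (n + 1)
      have h2 := hpow q hq0 le_rfl (by exact_mod_cast (by omega : 1 ≤ q))
      have hqn' : (q : ℝ) ≤ ((n + 1 : ℕ) : ℝ) := by exact_mod_cast hqn.le
      calc ‖charSum χ (n + 1)‖ * (‖s‖ * ((n + 1 : ℕ) : ℝ) ^ (-(1 + s.re)))
          ≤ q * (2 * ((n + 1 : ℕ) : ℝ) ^ (-(1 + s.re))) := by gcongr
        _ = 2 * q * ((n + 1 : ℕ) : ℝ) ^ (-(3 / 2) : ℝ) * ((n + 1 : ℕ) : ℝ) ^ (1 / 2 - s.re) := by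
            rw [show -(1 + s.re) = -(3 / 2) + (1 / 2 - s.re) by ring, Real.rpow_add hn0]
            ring
        _ ≤ 2 * q * ((n + 1 : ℕ) : ℝ) ^ (-(3 / 2) : ℝ) * (q : ℝ) ^ (1 / 2 - s.re) := by
            exact mul_le_mul_of_nonneg_left
              (Real.rpow_le_rpow_of_nonpos hq0 hqn' (by linarith)) (by positivity)
        _ = 2 * Real.sqrt q * ((n + 1 : ℕ) : ℝ) ^ (-(3 / 2) : ℝ) * (q : ℝ) ^ (1 - s.re) := by
            rw [show (1 - s.re) = (1 / 2 - s.re) + 1 / 2 by ring, Real.rpow_add hq0,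
              ← Real.sqrt_eq_rpow]
            nth_rewrite 1 [← Real.mul_self_sqrt hq0.le]
            ring
        _ ≤ 2 * Real.sqrt q * ((n + 1 : ℕ) : ℝ) ^ (-(3 / 2) : ℝ) * 2 := by gcongr
        _ = 4 * Real.sqrt q * ((n + 1 : ℕ) : ℝ) ^ (-(3 / 2) : ℝ) := by ring
  rw [LFunction_eq_tsum_abelTerm (by omega) hχ (by linarith)]
  have hS := hg1s.add (hg2s.mul_left (4 * Real.sqrt q))
  refine (tsum_of_norm_bounded hS.hasSum hbound).trans ?_
  rw [hg1s.tsum_add (hg2s.mul_left _), tsum_mul_left]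
  have hsq : 0 < Real.sqrt q := Real.sqrt_pos.mpr hq0
  have : 4 * Real.sqrt q * ∑' n, g2 (n + 1) ≤ 4 * Real.sqrt q * (2 / Real.sqrt q) := by gcongr
  have e : 4 * Real.sqrt q * (2 / Real.sqrt q) = 8 := by field_simp; norm_num
  linarith

/-- `L'(s, χ) ≪ (log q)²` near `s = 1`. -/
lemma norm_deriv_LFunction_le {q : ℕ} [NeZero q] (hq : 3 ≤ q) {χ : DirichletCharacter ℂ q}
    (hχ : χ ≠ 1) {s : ℂ} (hs : ‖s - 1‖ ≤ 1 / (4 * Real.log q)) :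
    ‖deriv (DirichletCharacter.LFunction χ) s‖ ≤ 64 * Real.log q ^ 2 := by
  have hL := one_le_log_of_three_le hq
  have h := Complex.norm_deriv_le_of_forall_mem_sphere_norm_le (f := DirichletCharacter.LFunction χ)
    (c := s) (R := 1 / (4 * Real.log q)) (C := 16 * Real.log q) (by positivity)
    (DirichletCharacter.differentiable_LFunction hχ).diffContOnCl ?_
  · refine h.trans (le_of_eq ?_)
    field_simp
    norm_num
  · intro z hz
    apply norm_LFunction_le hq hχ
    rw [mem_sphere_iff_norm] at hz
    calc ‖z - 1‖ = ‖(z - s) + (s - 1)‖ := by ring_nf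
      _ ≤ ‖z - s‖ + ‖s - 1‖ := norm_add_le _ _
      _ ≤ 1 / (4 * Real.log q) + 1 / (4 * Real.log q) := by rw [hz]; gcongr
      _ = _ := by field_simp; norm_num

lemma norm_LFunction_one_add_le {q : ℕ} [NeZero q] (χ : DirichletCharacter ℂ q) {x : ℝ}
    (hx : 0 < x) (hx1 : x ≤ 1) : ‖DirichletCharacter.LFunction χ (1 + x)‖ ≤ 2 / x := by
  have hre : 1 < (1 + x : ℂ).re := by simpa using hx
  rw [DirichletCharacter.LFunction_eq_LSeries χ hre]
  have hS : LSeriesSummable (fun n => χ n) (1 + x : ℂ) := ZMod.LSeriesSummable_of_one_lt_re χ hre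
  rw [LSeries, hS.tsum_eq_zero_add, LSeries.term_zero, zero_add]
  refine (tsum_of_norm_bounded (summable_rpow_succ hx).hasSum fun n => ?_).trans
    (tsum_rpow_succ_le hx hx1)
  rw [LSeries.term_of_ne_zero (by omega), norm_div, Complex.norm_natCast_cpow_of_pos (by omega),
    Real.rpow_neg (by positivity)]
  have h1 := χ.norm_le_one ((n + 1 : ℕ) : ZMod q)
  have : (1 + x : ℂ).re = 1 + x := by simp
  rw [this, div_eq_mul_inv]
  have h2 : 0 ≤ ((((n + 1 : ℕ) : ℝ)) ^ (1 + x))⁻¹ := by positivity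
  nlinarith

/-- Zero-free disc around `1` for a complex character, with a bound for `L'/L` there. -/
lemma logDeriv_LFunction_bound_of_sq_ne_one {q : ℕ} [NeZero q] (hq : 3 ≤ q)
    {χ : DirichletCharacter ℂ q} (hχ : χ ^ 2 ≠ 1) {x : ℝ} (hx : x = 1 / (2 ^ 40 * Real.log q ^ 9))
    {s : ℂ} (hs : ‖s - 1‖ ≤ x) :
    DirichletCharacter.LFunction χ s ≠ 0 ∧
    ‖deriv (DirichletCharacter.LFunction χ) s / DirichletCharacter.LFunction χ s‖ ≤ 1 / (2 * x) := by
  have hχ1 : χ ≠ 1 := by rintro rfl; simp at hχ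
  have hL := one_le_log_of_three_le hq
  set L := Real.log q with hLdef
  have hx0 : 0 < x := by rw [hx]; positivity
  have hL9 : L ≤ L ^ 9 := le_self_pow₀ hL (by norm_num)
  have hxL : x ≤ 1 / (4 * L) := by
    rw [hx]
    apply one_div_le_one_div_of_le (by positivity)
    nlinarith
  have hx1 : x ≤ 1 := hxL.trans (by rw [div_le_one (by positivity)]; linarith)
  have hxL2 : x ≤ 1 / (2 * L) := hxL.trans (by
    apply one_div_le_one_div_of_le (by positivity); linarith)
  have hnx : ‖(1 + x : ℂ) - 1‖ = x := by simp [abs_of_pos hx0]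
  set D := DirichletCharacter.LFunction χ with hD
  have h341 := DirichletCharacter.norm_LFunction_product_ge_one χ hx0 0
  simp only [Complex.ofReal_zero, mul_zero, add_zero, norm_mul, norm_pow] at h341
  have ha : ‖DirichletCharacter.LFunctionTrivChar q (1 + x)‖ ≤ 2 / x :=
    norm_LFunction_one_add_le 1 hx0 hx1
  have hb : ‖DirichletCharacter.LFunction (χ ^ 2) (1 + x)‖ ≤ 16 * L :=
    norm_LFunction_le hq hχ (by rw [hnx]; exact hxL2)
  have hlow : 256 * L ^ 2 * x ≤ ‖D (1 + x)‖ := by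
    by_contra hcon
    push Not at hcon
    have : (1 : ℝ) ≤ (2 / x) ^ 3 * (256 * L ^ 2 * x) ^ 4 * (16 * L) := by
      refine h341.le.trans ?_
      gcongr
    have e : (2 / x) ^ 3 * (256 * L ^ 2 * x) ^ 4 * (16 * L) = 2 ^ 39 * L ^ 9 * x := by
      field_simp
      norm_num
    rw [e, hx] at this
    have e2 : 2 ^ 39 * L ^ 9 * (1 / (2 ^ 40 * L ^ 9)) = 1 / 2 := by
      field_simp
    rw [e2] at this
    norm_num at this
  have hdiff : ‖D (1 + x) - D s‖ ≤ 64 * L ^ 2 * ‖(1 + x : ℂ) - s‖ := by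
    refine Convex.norm_image_sub_le_of_norm_deriv_le (s := Metric.closedBall (1 : ℂ) x)
      (fun z _ => DirichletCharacter.differentiable_LFunction hχ1 z) ?_ (convex_closedBall _ _)
      (mem_closedBall_iff_norm.mpr hs) (mem_closedBall_iff_norm.mpr hnx.le)
    intro z hz
    exact norm_deriv_LFunction_le hq hχ1 ((mem_closedBall_iff_norm.mp hz).trans hxL)
  have hdist : ‖(1 + x : ℂ) - s‖ ≤ 2 * x := by
    calc ‖(1 + x : ℂ) - s‖ = ‖((1 + x : ℂ) - 1) - (s - 1)‖ := by ring_nf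
      _ ≤ x + x := (norm_sub_le _ _).trans (by rw [hnx]; gcongr)
      _ = 2 * x := by ring
  have hfin : 128 * L ^ 2 * x ≤ ‖D s‖ := by
    have h1 := norm_sub_norm_le (D (1 + x)) (D s)
    have h2 : 64 * L ^ 2 * ‖(1 + x : ℂ) - s‖ ≤ 64 * L ^ 2 * (2 * x) := by gcongr
    linarith
  have hpos : 0 < 128 * L ^ 2 * x := by positivity
  refine ⟨fun h0 => ?_, ?_⟩
  · rw [h0, norm_zero] at hfin; linarith
  · rw [norm_div]
    calc ‖deriv D s‖ / ‖D s‖ ≤ (64 * L ^ 2) / (128 * L ^ 2 * x) := by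
          gcongr
          exact norm_deriv_LFunction_le hq hχ1 (hs.trans hxL)
      _ = 1 / (2 * x) := by field_simp; norm_num

/-- One forward difference of a bounded holomorphic function. -/
lemma differentiableOn_forwardDiff {f : ℂ → ℂ} {R M δ ρ : ℝ} (hρ : 0 < ρ) (hδ0 : 0 ≤ δ)
    (hδ : δ ≤ ρ) (hf : DifferentiableOn ℂ f (Metric.ball 1 R))
    (hM : ∀ z ∈ Metric.ball (1 : ℂ) R, ‖f z‖ ≤ M) :
    DifferentiableOn ℂ (fun z => f (z + δ) - f z) (Metric.ball 1 (R - 2 * ρ)) ∧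
    ∀ z ∈ Metric.ball (1 : ℂ) (R - 2 * ρ), ‖f (z + δ) - f z‖ ≤ M / ρ * δ := by
  have hsub : Metric.ball (1 : ℂ) (R - 2 * ρ) ⊆ Metric.ball 1 (R - ρ) :=
    Metric.ball_subset_ball (by linarith)
  have hsub2 : Metric.ball (1 : ℂ) (R - ρ) ⊆ Metric.ball 1 R :=
    Metric.ball_subset_ball (by linarith)
  have hshift : ∀ z ∈ Metric.ball (1 : ℂ) (R - 2 * ρ), z + δ ∈ Metric.ball (1 : ℂ) (R - ρ) := by
    intro z hz
    rw [mem_ball_iff_norm] at hz ⊢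
    calc ‖z + δ - 1‖ = ‖(z - 1) + δ‖ := by ring_nf
      _ ≤ ‖z - 1‖ + ‖(δ : ℂ)‖ := norm_add_le _ _
      _ = ‖z - 1‖ + δ := by simp [abs_of_nonneg hδ0]
      _ < R - ρ := by linarith
  refine ⟨?_, fun z hz => ?_⟩
  · refine DifferentiableOn.sub ?_ (hf.mono (hsub.trans hsub2))
    exact hf.comp (by fun_prop) fun z hz => hsub2 (hshift z hz)
  · have hder : ∀ w ∈ Metric.ball (1 : ℂ) (R - ρ), ‖deriv f w‖ ≤ M / ρ := by
      intro w hw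
      have hin : ∀ u ∈ Metric.closedBall w ρ, u ∈ Metric.ball (1 : ℂ) R := by
        intro u hu
        rw [mem_closedBall_iff_norm] at hu
        rw [mem_ball_iff_norm] at hw ⊢
        calc ‖u - 1‖ = ‖(u - w) + (w - 1)‖ := by ring_nf
          _ ≤ ‖u - w‖ + ‖w - 1‖ := norm_add_le _ _
          _ < R := by linarith
      refine Complex.norm_deriv_le_of_forall_mem_sphere_norm_le hρ ?_
        fun u hu => hM u (hin u (Metric.sphere_subset_closedBall hu))
      refine (hf.mono ?_).diffContOnCl
      rw [closure_ball _ hρ.ne']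
      exact hin
    have := Convex.norm_image_sub_le_of_norm_deriv_le (f := f)
      (fun w hw => hf.differentiableAt (Metric.isOpen_ball.mem_nhds (hsub2 hw))) hder
      (convex_ball _ _) (hsub hz) (hshift z hz)
    simpa [abs_of_nonneg hδ0] using this

/-- Cubic extrapolation to the point `1` of a bounded holomorphic function. -/
lemma norm_third_diff_le {f : ℂ → ℂ} {R M δ : ℝ} (hR : 0 < R) (hδ0 : 0 ≤ δ) (hδ : δ ≤ R / 7)
    (hf : DifferentiableOn ℂ f (Metric.ball 1 R)) (hM : ∀ z ∈ Metric.ball (1 : ℂ) R, ‖f z‖ ≤ M) :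
    ‖f 1 - (3 * f (1 + δ) - 3 * f (1 + 2 * δ) + f (1 + 3 * δ))‖ ≤ M * (7 / R) ^ 3 * δ ^ 3 := by
  have hρ : 0 < R / 7 := by positivity
  obtain ⟨d1, b1⟩ := differentiableOn_forwardDiff hρ hδ0 hδ hf hM
  obtain ⟨d2, b2⟩ := differentiableOn_forwardDiff hρ hδ0 hδ d1 b1
  obtain ⟨d3, b3⟩ := differentiableOn_forwardDiff hρ hδ0 hδ d2 b2
  have := b3 1 (Metric.mem_ball_self (by linarith))
  rw [← norm_neg]
  convert this using 1
  · congr 1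
    ring_nf
  · field_simp

/-- The difference `1/(2 sinh t) - 1/(2t)`. -/
noncomputable def sinhKernel (t : ℝ) : ℝ := 1 / (2 * Real.sinh t) - 1 / (2 * t)

/-- The derivative of `sinhKernel`. -/
noncomputable def sinhKernelDeriv (t : ℝ) : ℝ :=
  1 / (2 * t ^ 2) - Real.cosh t / (2 * Real.sinh t ^ 2)

/-- The second derivative of `sinhKernel`. -/
noncomputable def sinhKernelDeriv₂ (t : ℝ) : ℝ :=
  (1 / Real.sinh t + 2 / Real.sinh t ^ 3 - 2 / t ^ 3) / 2

lemma hasDerivAt_sinhKernel {t : ℝ} (ht : 0 < t) :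
    HasDerivAt sinhKernel (sinhKernelDeriv t) t := by
  have hs : 0 < Real.sinh t := Real.sinh_pos_iff.mpr ht
  have h1 := (((Real.hasDerivAt_sinh t).const_mul 2).inv (by positivity))
  have h2 := (((hasDerivAt_id t).const_mul 2).inv (by simpa using ht.ne'))
  have := h1.sub h2
  refine HasDerivAt.congr_deriv (HasDerivAt.congr_of_eventuallyEq this ?_) ?_
  · exact Eventually.of_forall fun u => by simp [sinhKernel]
  · simp only [sinhKernelDeriv, id]
    field_simp
    ring

lemma hasDerivAt_sinhKernelDeriv {t : ℝ} (ht : 0 < t) :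
    HasDerivAt sinhKernelDeriv (sinhKernelDeriv₂ t) t := by
  have hs : 0 < Real.sinh t := Real.sinh_pos_iff.mpr ht
  have h1 := ((((hasDerivAt_id t).pow 2).const_mul 2).inv (by simpa using ht.ne'))
  have h2 := (Real.hasDerivAt_cosh t).div (((Real.hasDerivAt_sinh t).pow 2).const_mul 2)
    (by simp only [Pi.pow_apply]; positivity)
  have := h1.sub h2
  refine HasDerivAt.congr_deriv (HasDerivAt.congr_of_eventuallyEq this ?_) ?_
  · exact Eventually.of_forall fun u => by simp [sinhKernelDeriv]
  · simp only [sinhKernelDeriv₂, id, Pi.pow_apply]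
    have hc := Real.cosh_sq t
    field_simp
    simp only [hc]
    ring

lemma abs_sinh_sub_le {t : ℝ} (ht : 0 ≤ t) (ht1 : t ≤ 1) :
    |Real.sinh t - (t + t ^ 3 / 6)| ≤ t ^ 5 / 100 := by
  have h1 := Real.exp_bound (x := t) (by rw [abs_of_nonneg ht]; exact ht1) (n := 5) (by norm_num)
  have h2 := Real.exp_bound (x := -t) (by rw [abs_neg, abs_of_nonneg ht]; exact ht1) (n := 5)
    (by norm_num)
  rw [abs_neg] at h2
  rw [abs_of_nonneg ht] at h1 h2
  simp only [Finset.sum_range_succ, Finset.sum_range_zero, Nat.factorial] at h1 h2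
  rw [Real.sinh_eq]
  norm_num at h1 h2
  rw [abs_le] at h1 h2 ⊢
  constructor <;> nlinarith

lemma abs_sinhKernelDeriv₂_le_of_le_one {t : ℝ} (ht : 0 < t) (ht1 : t ≤ 1) :
    |sinhKernelDeriv₂ t| ≤ 6 := by
  have h := abs_sinh_sub_le ht.le ht1
  have hst : t ≤ Real.sinh t := Real.self_le_sinh_iff.mpr ht.le
  set s := Real.sinh t with hs
  have hs0 : 0 < s := by linarith
  obtain ⟨ε, hε⟩ : ∃ ε, s = t + t ^ 3 / 6 + t * ε := ⟨(s - t - t ^ 3 / 6) / t, by field_simp; ring⟩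
  have hεb : |ε| ≤ t ^ 4 / 100 := by
    have : s - (t + t ^ 3 / 6) = t * ε := by rw [hε]; ring
    rw [this, abs_mul, abs_of_pos ht] at h
    have e : t ^ 5 / 100 = t * (t ^ 4 / 100) := by ring
    rw [e] at h
    exact le_of_mul_le_mul_left h ht
  set v := t ^ 2 / 6 + ε with hv
  have hsv : s = t * (1 + v) := by rw [hε, hv]; ring
  have hv0 : 0 ≤ v := by
    have : t * 1 ≤ t * (1 + v) := by rw [← hsv]; linarith
    have := le_of_mul_le_mul_left this ht
    linarith
  have ht2 : t ^ 2 ≤ 1 := by nlinarith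
  have ht4 : t ^ 4 ≤ t ^ 2 := by nlinarith [sq_nonneg t]
  have hv1 : v ≤ t ^ 2 := by
    have := (abs_le.mp hεb).2
    rw [hv]; nlinarith [sq_nonneg t]
  have hnum : |-6 * ε + t ^ 2 * (2 * v + v ^ 2) - 6 * v ^ 2 - 2 * v ^ 3| ≤ 12 * t ^ 4 := by
    obtain ⟨e1, e2⟩ := abs_le.mp hεb
    have a1 : v ^ 2 ≤ t ^ 4 := by nlinarith
    have a2 : v ^ 3 ≤ t ^ 4 := by nlinarith
    have a3 : t ^ 2 * v ≤ t ^ 4 := by nlinarith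
    have a4 : t ^ 2 * v ^ 2 ≤ t ^ 4 := by nlinarith
    have a5 : 0 ≤ v ^ 2 := by positivity
    have a6 : 0 ≤ v ^ 3 := by positivity
    have a7 : 0 ≤ t ^ 2 * v := by positivity
    have a8 : 0 ≤ t ^ 2 * v ^ 2 := by positivity
    have a9 : 0 ≤ t ^ 4 := by positivity
    rw [abs_le]
    constructor <;> nlinarith
  have hmain : sinhKernelDeriv₂ t =
      (t ^ 3 * (-6 * ε + t ^ 2 * (2 * v + v ^ 2) - 6 * v ^ 2 - 2 * v ^ 3)) / (2 * (s ^ 3 * t ^ 3)) := by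
    have e : sinhKernelDeriv₂ t = (t ^ 3 * s ^ 2 + 2 * t ^ 3 - 2 * s ^ 3) / (2 * (s ^ 3 * t ^ 3)) := by
      rw [sinhKernelDeriv₂, ← hs]; field_simp
    rw [e]
    congr 1
    rw [hsv]
    have : ε = v - t ^ 2 / 6 := by rw [hv]; ring
    rw [this]
    ring
  rw [hmain, abs_div, abs_mul, abs_of_pos (by positivity : 0 < 2 * (s ^ 3 * t ^ 3)),
    abs_of_pos (by positivity : 0 < t ^ 3), div_le_iff₀ (by positivity)]
  have hs3 : t ^ 3 ≤ s ^ 3 := by gcongr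
  calc t ^ 3 * |-6 * ε + t ^ 2 * (2 * v + v ^ 2) - 6 * v ^ 2 - 2 * v ^ 3| ≤ t ^ 3 * (12 * t ^ 4) := by
        gcongr
    _ = 12 * t ^ 6 * t := by ring
    _ ≤ 12 * t ^ 6 * 1 := by gcongr
    _ = 6 * (2 * (t ^ 3 * t ^ 3)) := by ring
    _ ≤ 6 * (2 * (s ^ 3 * t ^ 3)) := by gcongr

lemma abs_sinhKernelDeriv₂_le_of_one_le {t : ℝ} (ht1 : 1 ≤ t) :
    |sinhKernelDeriv₂ t| ≤ 4 / t ^ 2 := by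
  have ht : 0 < t := by linarith
  have hst : t ≤ Real.sinh t := Real.self_le_sinh_iff.mpr ht.le
  have hs2 : t ^ 2 / 4 ≤ Real.sinh t := by
    rw [Real.sinh_eq]
    have h1 := Real.quadratic_le_exp_of_nonneg ht.le
    have h2 : Real.exp (-t) ≤ 1 := Real.exp_le_one_iff.mpr (by linarith)
    linarith
  set s := Real.sinh t
  have hs0 : 0 < s := by linarith
  have h1 : 1 / s ≤ 4 / t ^ 2 := by
    rw [div_le_div_iff₀ hs0 (by positivity)]; linarith
  have h3 : 2 / t ^ 3 ≤ 2 / t ^ 2 := by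
    gcongr
    norm_num [ht1]
  have h2 : 2 / s ^ 3 ≤ 2 / t ^ 3 := by gcongr
  have p1 : 0 < 1 / s := by positivity
  have p2 : 0 < 2 / s ^ 3 := by positivity
  have p3 : 0 < 2 / t ^ 3 := by positivity
  have e : (4 : ℝ) / t ^ 2 = 2 * (2 / t ^ 2) := by ring
  rw [sinhKernelDeriv₂, abs_le]
  constructor <;> linarith

lemma abs_sinhKernelDeriv₂_le {t : ℝ} (ht : 0 < t) : |sinhKernelDeriv₂ t| ≤ 6 := by
  rcases le_total t 1 with h | h
  · exact abs_sinhKernelDeriv₂_le_of_le_one ht h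
  · refine (abs_sinhKernelDeriv₂_le_of_one_le h).trans ?_
    rw [div_le_iff₀ (by positivity)]
    nlinarith

lemma abs_sinhKernel_le {t : ℝ} (ht : 0 < t) (ht1 : t ≤ 1) : |sinhKernel t| ≤ t := by
  have h := abs_le.mp (abs_sinh_sub_le ht.le ht1)
  have hst : t ≤ Real.sinh t := Real.self_le_sinh_iff.mpr ht.le
  have e : sinhKernel t = -((Real.sinh t - t) / (2 * (t * Real.sinh t))) := by
    have : 0 < Real.sinh t := by linarith
    rw [sinhKernel]; field_simp; ring
  set s := Real.sinh t
  have hs0 : 0 < s := by linarith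
  rw [e, abs_neg, abs_of_nonneg (div_nonneg (by linarith) (by positivity)),
    div_le_iff₀ (by positivity)]
  have h5 : t ^ 5 ≤ t ^ 3 := pow_le_pow_of_le_one ht.le ht1 (by norm_num)
  have h3 : 0 < t ^ 3 := by positivity
  have : t ^ 3 ≤ t * (t * s) := by nlinarith
  nlinarith

lemma abs_sinhKernel_le_inv {t : ℝ} (ht : 0 < t) : |sinhKernel t| ≤ 1 / t := by
  have hst : t ≤ Real.sinh t := Real.self_le_sinh_iff.mpr ht.le
  have h1 : 1 / (2 * Real.sinh t) ≤ 1 / (2 * t) := by gcongr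
  have h2 : 0 < 1 / (2 * Real.sinh t) := by
    have : 0 < Real.sinh t := by linarith
    positivity
  have h3 : 1 / t = 2 * (1 / (2 * t)) := by field_simp
  rw [sinhKernel, abs_le]
  constructor <;> linarith

lemma abs_second_diff_le {a y B : ℝ} (ha : 0 < a) (hy : 0 ≤ y)
    (hB : ∀ t ∈ Set.Icc a (a + 2 * y), |sinhKernelDeriv₂ t| ≤ B) :
    |(sinhKernel a - sinhKernel (a + y)) - (sinhKernel (a + y) - sinhKernel (a + 2 * y))| ≤
      B * y ^ 2 := by
  have h1 : ∀ t ∈ Set.Icc a (a + y), ‖sinhKernelDeriv (t + y) - sinhKernelDeriv t‖ ≤ B * y := by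
    intro t ht
    have := Convex.norm_image_sub_le_of_norm_hasDerivWithin_le (f := sinhKernelDeriv)
      (f' := sinhKernelDeriv₂) (s := Set.Icc a (a + 2 * y)) (C := B)
      (fun u hu => (hasDerivAt_sinhKernelDeriv (ha.trans_le hu.1)).hasDerivWithinAt)
      (fun u hu => hB u hu) (convex_Icc _ _) (x := t) (y := t + y)
      ⟨ht.1, by linarith [ht.2]⟩ ⟨by linarith [ht.1], by linarith [ht.2]⟩
    simpa [abs_of_nonneg hy] using this
  have h2 := Convex.norm_image_sub_le_of_norm_hasDerivWithin_le
    (f := fun t => sinhKernel (t + y) - sinhKernel t)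
    (f' := fun t => sinhKernelDeriv (t + y) - sinhKernelDeriv t) (s := Set.Icc a (a + y))
    (C := B * y) (fun u hu => by
      have hu0 : 0 < u := ha.trans_le hu.1
      exact (((hasDerivAt_sinhKernel (by linarith : 0 < u + y)).comp_add_const u y).sub
        (hasDerivAt_sinhKernel hu0)).hasDerivWithinAt) h1 (convex_Icc _ _) (x := a) (y := a + y)
      ⟨le_rfl, by linarith⟩ ⟨by linarith, le_rfl⟩
  simp only [add_sub_cancel_left, Real.norm_eq_abs, abs_of_nonneg hy] at h2
  rw [show a + y + y = a + 2 * y by ring] at h2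
  calc _ = |sinhKernel (a + 2 * y) - sinhKernel (a + y) - (sinhKernel (a + y) - sinhKernel a)| := by
        congr 1; ring
    _ ≤ B * y * y := h2
    _ = B * y ^ 2 := by ring

lemma sum_inv_sq_tail_le {Q : ℕ} (hQ : 1 ≤ Q) (N : ℕ) :
    ∑ n ∈ Finset.range N, (if Q ≤ n + 1 then 1 / ((n + 1 : ℕ) : ℝ) ^ 2 else (0 : ℝ)) ≤ (2 : ℝ) / (Q : ℝ) := by
  have hQ0 : (0 : ℝ) < Q := by exact_mod_cast hQ
  have : ∑ n ∈ Finset.range N, (if Q ≤ n + 1 then 1 / ((n + 1 : ℕ) : ℝ) ^ 2 else (0 : ℝ)) ≤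
      (2 : ℝ) / (Q : ℝ) - 2 / ((max Q (N + 1) : ℕ) : ℝ) := by
    induction N with
    | zero => simp [hQ]
    | succ N ih =>
      rw [Finset.sum_range_succ]
      by_cases h : Q ≤ N + 1
      · rw [max_eq_right h] at ih
        rw [max_eq_right (by omega), if_pos h]
        have : 1 / ((N + 1 : ℕ) : ℝ) ^ 2 ≤ 2 / ((N + 1 : ℕ) : ℝ) - 2 / ((N + 1 + 1 : ℕ) : ℝ) := by
          push_cast
          rw [div_sub_div _ _ (by positivity) (by positivity),
            div_le_div_iff₀ (by positivity) (by positivity)]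
          have : (0 : ℝ) ≤ N := by positivity
          nlinarith
        linarith
      · rw [if_neg h, max_eq_left (by omega)]
        rw [max_eq_left (by omega)] at ih
        linarith
  refine this.trans ?_
  have : (0 : ℝ) ≤ (2 : ℝ) / ((max Q (N + 1) : ℕ) : ℝ) := by positivity
  linarith

/-- The second differences of `n ↦ sinhKernel (n / Q)` sum to `≪ 1 / Q`. -/
lemma sum_second_diff_le {Q : ℕ} (hQ : 1 ≤ Q) (N : ℕ) :
    ∑ n ∈ Finset.range N, |(sinhKernel ((n + 1 : ℕ) / Q) - sinhKernel ((n + 2 : ℕ) / Q)) -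
      (sinhKernel ((n + 2 : ℕ) / Q) - sinhKernel ((n + 3 : ℕ) / Q))| ≤ 14 / Q := by
  have hQ0 : (0 : ℝ) < Q := by exact_mod_cast hQ
  have hb : ∀ n : ℕ, |(sinhKernel ((n + 1 : ℕ) / Q) - sinhKernel ((n + 2 : ℕ) / Q)) -
      (sinhKernel ((n + 2 : ℕ) / Q) - sinhKernel ((n + 3 : ℕ) / Q))| ≤
      (if n < Q then 6 / (Q : ℝ) ^ 2 else 0) +
      4 * (if Q ≤ n + 1 then 1 / ((n + 1 : ℕ) : ℝ) ^ 2 else 0) := by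
    intro n
    have e2 : (((n + 2 : ℕ) : ℝ)) / Q = ((n + 1 : ℕ) : ℝ) / Q + 1 / Q := by push_cast; ring
    have e3 : (((n + 3 : ℕ) : ℝ)) / Q = ((n + 1 : ℕ) : ℝ) / Q + 2 * (1 / Q) := by push_cast; ring
    have hn0 : (0 : ℝ) < ((n + 1 : ℕ) : ℝ) / Q := by positivity
    rw [e2, e3]
    by_cases h : Q ≤ n + 1
    · have h1 : (1 : ℝ) ≤ ((n + 1 : ℕ) : ℝ) / Q := by
        rw [le_div_iff₀ hQ0, one_mul]; exact_mod_cast h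
      have := abs_second_diff_le (y := 1 / Q) (B := 4 / (((n + 1 : ℕ) : ℝ) / Q) ^ 2) hn0
        (by positivity) (fun t ht => (abs_sinhKernelDeriv₂_le_of_one_le (h1.trans ht.1)).trans (by
          gcongr; exact ht.1))
      rw [if_pos h]
      have hnn : (0 : ℝ) ≤ if n < Q then 6 / (Q : ℝ) ^ 2 else 0 := by split_ifs <;> positivity
      have e : 4 / (((n + 1 : ℕ) : ℝ) / Q) ^ 2 * (1 / (Q : ℝ)) ^ 2 =
        4 * (1 / ((n + 1 : ℕ) : ℝ) ^ 2) := by field_simp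
      rw [e] at this
      linarith
    · have := abs_second_diff_le (y := 1 / Q) (B := 6) hn0
        (by positivity) (fun t ht => abs_sinhKernelDeriv₂_le (hn0.trans_le ht.1))
      rw [if_neg h, if_pos (by omega)]
      have e : 6 * (1 / (Q : ℝ)) ^ 2 = 6 / (Q : ℝ) ^ 2 := by ring
      linarith
  refine (Finset.sum_le_sum fun n _ => hb n).trans ?_
  rw [Finset.sum_add_distrib, ← Finset.mul_sum]
  have h1 := sum_inv_sq_tail_le hQ N
  have h2 : ∑ n ∈ Finset.range N, (if n < Q then 6 / (Q : ℝ) ^ 2 else (0 : ℝ)) ≤ (6 : ℝ) / (Q : ℝ) := by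
    rw [← Finset.sum_filter]
    calc ∑ n ∈ (Finset.range N).filter (· < Q), (6 : ℝ) / (Q : ℝ) ^ 2
        ≤ ∑ n ∈ Finset.range Q, (6 : ℝ) / (Q : ℝ) ^ 2 := by
          refine Finset.sum_le_sum_of_subset_of_nonneg ?_ fun _ _ _ => by positivity
          intro n hn
          exact Finset.mem_range.mpr (Finset.mem_filter.mp hn).2
      _ = (6 : ℝ) / (Q : ℝ) := by simp; field_simp
  have e : (14 : ℝ) / Q = 6 / Q + 4 * (2 / Q) := by ring
  linarith

lemma norm_stdAddChar_natCast_sub_one_ge {q : ℕ} [NeZero q] {v : ℕ} (hv : 2 * v ≤ q) :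
    4 * v / q ≤ ‖ZMod.stdAddChar (v : ZMod q) - 1‖ := by
  have hq : (0 : ℝ) < q := by exact_mod_cast NeZero.pos q
  rw [ZMod.stdAddChar_apply, ZMod.toCircle_natCast]
  have e : (2 * Real.pi * Complex.I * v / q : ℂ) =
      Complex.I * ((2 * (Real.pi * v / q) : ℝ) : ℂ) := by push_cast; ring
  rw [e, Complex.norm_exp_I_mul_ofReal_sub_one]
  have h2 : (2 : ℝ) * v ≤ q := by exact_mod_cast hv
  have hx0 : 0 ≤ Real.pi * v / q := by positivity
  have hx1 : Real.pi * v / q ≤ Real.pi / 2 := by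
    rw [div_le_div_iff₀ hq (by norm_num)]
    nlinarith [Real.pi_pos]
  have := Real.mul_le_sin hx0 hx1
  rw [show 2 * (Real.pi * v / q) / 2 = Real.pi * v / q by ring]
  rw [Real.norm_eq_abs]
  refine le_trans ?_ (le_abs_self _)
  calc 4 * v / q = 2 * (2 / Real.pi * (Real.pi * v / q)) := by
        field_simp; ring
    _ ≤ _ := by linarith

lemma norm_stdAddChar_neg_sub_one {q : ℕ} [NeZero q] (k : ZMod q) :
    ‖ZMod.stdAddChar (-k) - 1‖ = ‖ZMod.stdAddChar k - 1‖ := by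
  have h1 : ‖ZMod.stdAddChar k‖ = 1 := by rw [ZMod.stdAddChar_apply]; exact Circle.norm_coe _
  have h0 : ZMod.stdAddChar k ≠ 0 := by
    intro h; rw [h] at h1; simp at h1
  rw [AddChar.map_neg_eq_inv]
  have : (ZMod.stdAddChar k)⁻¹ - 1 = -((ZMod.stdAddChar k)⁻¹ * (ZMod.stdAddChar k - 1)) := by
    field_simp; ring
  rw [this, norm_neg, norm_mul, norm_inv, h1, inv_one, one_mul]

lemma inv_norm_stdAddChar_sub_one_sq_le {q : ℕ} [NeZero q] {v : ℕ} (hv0 : 0 < v) (hv : v < q) :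
    (‖ZMod.stdAddChar (v : ZMod q) - 1‖ ^ 2)⁻¹ ≤
      (q : ℝ) ^ 2 / 16 * (((v : ℝ) ^ 2)⁻¹ + (((q - v : ℕ) : ℝ) ^ 2)⁻¹) := by
  have hq : (0 : ℝ) < q := by exact_mod_cast NeZero.pos q
  have key : ∀ u : ℕ, 0 < u → 2 * u ≤ q → (‖ZMod.stdAddChar (u : ZMod q) - 1‖ ^ 2)⁻¹ ≤
      (q : ℝ) ^ 2 / 16 * ((u : ℝ) ^ 2)⁻¹ := by
    intro u hu huq
    have hu0 : (0 : ℝ) < u := by exact_mod_cast hu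
    calc (‖ZMod.stdAddChar (u : ZMod q) - 1‖ ^ 2)⁻¹ ≤ ((4 * u / q : ℝ) ^ 2)⁻¹ := by
          gcongr; exact norm_stdAddChar_natCast_sub_one_ge huq
      _ = _ := by field_simp; norm_num
  rcases le_total (2 * v) q with h | h
  · refine (key v hv0 h).trans ?_
    gcongr
    have : 0 ≤ (((q - v : ℕ) : ℝ) ^ 2)⁻¹ := by positivity
    linarith
  · have e : ((v : ℕ) : ZMod q) = -((q - v : ℕ) : ZMod q) := by
      rw [Nat.cast_sub hv.le]; simp
    rw [e, norm_stdAddChar_neg_sub_one]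
    refine (key (q - v) (by omega) (by omega)).trans ?_
    gcongr
    have : 0 ≤ ((v : ℝ) ^ 2)⁻¹ := by positivity
    linarith

lemma sum_inv_norm_stdAddChar_sub_one_sq_le {q : ℕ} [NeZero q] :
    ∑ k ∈ Finset.univ.erase (0 : ZMod q), (‖ZMod.stdAddChar k - 1‖ ^ 2)⁻¹ ≤ (q : ℝ) ^ 2 / 4 := by
  have hq1 : 1 ≤ q := NeZero.one_le
  have hre : ∑ k ∈ Finset.univ.erase (0 : ZMod q), (‖ZMod.stdAddChar k - 1‖ ^ 2)⁻¹ =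
      ∑ v ∈ Finset.range (q - 1), (‖ZMod.stdAddChar ((v + 1 : ℕ) : ZMod q) - 1‖ ^ 2)⁻¹ := by
    symm
    refine Finset.sum_bij' (fun v _ => ((v + 1 : ℕ) : ZMod q)) (fun a _ => a.val - 1) ?_ ?_ ?_ ?_ ?_
    · intro v hv
      rw [Finset.mem_range] at hv
      simp only [Finset.mem_erase, Finset.mem_univ, and_true]
      rw [Ne, ZMod.natCast_eq_zero_iff]
      exact Nat.not_dvd_of_pos_of_lt (by omega) (by omega)
    · intro a ha
      have h1 : a.val ≠ 0 := by
        rw [Ne, ZMod.val_eq_zero]; exact Finset.ne_of_mem_erase ha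
      have h2 := ZMod.val_lt a
      rw [Finset.mem_range]; omega
    · intro v hv
      rw [Finset.mem_range] at hv
      rw [ZMod.val_cast_of_lt (by omega)]; omega
    · intro a ha
      have h1 : a.val ≠ 0 := by
        rw [Ne, ZMod.val_eq_zero]; exact Finset.ne_of_mem_erase ha
      rw [Nat.sub_add_cancel (by omega)]; simp
    · intro v hv; rfl
  have h2 : ∑ v ∈ Finset.range (q - 1), (((v + 1 : ℕ) : ℝ) ^ 2)⁻¹ ≤ 2 := by
    have := sum_inv_sq_tail_le (le_refl 1) (q - 1)
    simpa using this
  have h3 : ∑ v ∈ Finset.range (q - 1), (((q - (v + 1) : ℕ) : ℝ) ^ 2)⁻¹ ≤ 2 := by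
    rw [← Finset.sum_range_reflect] at h2
    refine le_trans (le_of_eq (Finset.sum_congr rfl fun v hv => ?_)) h2
    rw [Finset.mem_range] at hv
    congr 3
    omega
  rw [hre]
  calc _ ≤ ∑ v ∈ Finset.range (q - 1), (q : ℝ) ^ 2 / 16 *
        ((((v + 1 : ℕ) : ℝ) ^ 2)⁻¹ + (((q - (v + 1) : ℕ) : ℝ) ^ 2)⁻¹) := by
        refine Finset.sum_le_sum fun v hv => ?_
        rw [Finset.mem_range] at hv
        exact inv_norm_stdAddChar_sub_one_sq_le (by omega) (by omega)
    _ ≤ (q : ℝ) ^ 2 / 16 * (2 + 2) := by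
        rw [← Finset.mul_sum, Finset.sum_add_distrib]
        gcongr
    _ = _ := by ring

lemma stdAddChar_ne_one {q : ℕ} [NeZero q] {k : ZMod q} (hk : k ≠ 0) :
    ZMod.stdAddChar k ≠ 1 := by
  intro h
  apply hk
  apply ZMod.injective_stdAddChar
  rw [h, AddChar.map_zero_eq_one]

lemma norm_gaussSum_sq {q : ℕ} [Fact q.Prime] {χ : DirichletCharacter ℂ q} (hχ : χ ≠ 1)
    (hχ2 : χ ^ 2 = 1) : ‖gaussSum χ ZMod.stdAddChar‖ ^ 2 = q := by
  have h := gaussSum_sq hχ (MulChar.isQuadratic_iff_sq_eq_one.mpr hχ2)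
    (ZMod.isPrimitive_stdAddChar q)
  rw [← norm_pow, h, norm_mul, ZMod.card]
  have : ‖χ (-1)‖ = 1 := χ.unit_norm_eq_one (-1)
  simp [this]

lemma sum_mul_stdAddChar_pow {q : ℕ} [Fact q.Prime] {χ : DirichletCharacter ℂ q} (hχ : χ ≠ 1)
    (hχ2 : χ ^ 2 = 1) (n : ℕ) :
    ∑ k, χ k * ZMod.stdAddChar k ^ n = χ n * gaussSum χ ZMod.stdAddChar := by
  have hinv : χ⁻¹ = χ := by
    rw [inv_eq_iff_mul_eq_one, ← sq, hχ2]
  by_cases hn : (n : ZMod q) = 0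
  · have : ∀ k : ZMod q, ZMod.stdAddChar k ^ n = (1 : ℂ) := by
      intro k
      rw [← AddChar.map_nsmul_eq_pow, nsmul_eq_mul, hn, zero_mul, AddChar.map_zero_eq_one]
    simp only [this, mul_one, hn]
    rw [MulChar.sum_eq_zero_of_ne_one hχ, MulChar.map_zero, zero_mul]
  · have h := gaussSum_mulShift_eq χ ZMod.stdAddChar (Units.mk0 _ hn)
    rw [hinv, Units.val_mk0] at h
    rw [← h, gaussSum]
    refine Finset.sum_congr rfl fun k _ => ?_
    rw [AddChar.mulShift_apply, ← AddChar.map_nsmul_eq_pow, nsmul_eq_mul]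

/-- The partial sums of a real Dirichlet character to a prime modulus `q` have a mean value, and
the fluctuations around it have partial sums of size `≪ q ^ (3 / 2)`. -/
lemma exists_charSum_mean {q : ℕ} [Fact q.Prime] {χ : DirichletCharacter ℂ q} (hχ : χ ≠ 1)
    (hχ2 : χ ^ 2 = 1) : ∃ M : ℂ, ‖M‖ ≤ q * √q ∧
      ∀ n, ‖∑ m ∈ Finset.range n, (charSum χ (m + 1) - M)‖ ≤ q * √q := by
  set G := gaussSum χ ZMod.stdAddChar with hG
  have hq0 : (0 : ℝ) < q := by exact_mod_cast (Fact.out : q.Prime).pos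
  have hGn : ‖G‖ = √q := by
    rw [← norm_gaussSum_sq hχ hχ2, Real.sqrt_sq (norm_nonneg _)]
  have hsq : (0 : ℝ) < √q := Real.sqrt_pos.mpr hq0
  have hG0 : G ≠ 0 := by
    rw [← norm_pos_iff, hGn]; exact hsq
  set K := Finset.univ.erase (0 : ZMod q)
  set ω : ZMod q → ℂ := fun k => ZMod.stdAddChar k with hω
  have hω1 : ∀ k, ‖ω k‖ = 1 := by
    intro k; simp only [hω]; rw [ZMod.stdAddChar_apply]; exact Circle.norm_coe _
  have hωne : ∀ k ∈ K, ω k - 1 ≠ 0 := fun k hk =>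
    sub_ne_zero.mpr (stdAddChar_ne_one (Finset.ne_of_mem_erase hk))
  have hχG : ∀ n : ℕ, χ n * G = ∑ k ∈ K, χ k * ω k ^ n := by
    intro n
    rw [hG, ← sum_mul_stdAddChar_pow hχ hχ2, ← Finset.add_sum_erase _ _ (Finset.mem_univ 0),
      MulChar.map_zero, zero_mul, zero_add]
  have hS : ∀ n : ℕ, charSum χ n * G = ∑ k ∈ K, χ k * ((ω k ^ (n + 1) - 1) / (ω k - 1)) := by
    intro n
    rw [charSum, Finset.sum_mul]
    simp only [hχG]
    rw [Finset.sum_comm]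
    refine Finset.sum_congr rfl fun k hk => ?_
    rw [← Finset.mul_sum, geom_sum_eq (sub_ne_zero.mp (hωne k hk))]
  have hbound : ∀ c : ZMod q → ℂ, (∀ k ∈ K, ‖c k‖ ≤ 2 * (‖ω k - 1‖ ^ 2)⁻¹) →
      ‖(∑ k ∈ K, χ k * c k) / G‖ ≤ q * √q := by
    intro c hc
    rw [norm_div, hGn, div_le_iff₀ hsq, mul_assoc, Real.mul_self_sqrt hq0.le]
    calc ‖∑ k ∈ K, χ k * c k‖ ≤ ∑ k ∈ K, 2 * (‖ω k - 1‖ ^ 2)⁻¹ := by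
          refine norm_sum_le_of_le _ fun k hk => ?_
          rw [norm_mul]
          calc ‖χ k‖ * ‖c k‖ ≤ 1 * ‖c k‖ := by gcongr; exact χ.norm_le_one k
            _ ≤ _ := by rw [one_mul]; exact hc k hk
      _ ≤ 2 * ((q : ℝ) ^ 2 / 4) := by
          rw [← Finset.mul_sum]
          gcongr
          exact sum_inv_norm_stdAddChar_sub_one_sq_le
      _ ≤ q * q := by nlinarith
  have hpos : ∀ k ∈ K, 0 < ‖ω k - 1‖ := fun k hk => norm_pos_iff.mpr (hωne k hk)
  refine ⟨(∑ k ∈ K, χ k * (-(1 / (ω k - 1)))) / G, hbound _ fun k hk => ?_, fun n => ?_⟩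
  · have h0 := hpos k hk
    have h2 : ‖ω k - 1‖ ≤ 2 := by
      refine (norm_sub_le _ _).trans ?_
      rw [hω1]; norm_num
    rw [norm_neg, norm_div, norm_one, ← div_eq_mul_inv, div_le_div_iff₀ h0 (by positivity)]
    nlinarith
  · have : ∑ m ∈ Finset.range n, (charSum χ (m + 1) - (∑ k ∈ K, χ k * (-(1 / (ω k - 1)))) / G) =
        (∑ k ∈ K, χ k * (ω k ^ 2 * (ω k ^ n - 1) / (ω k - 1) ^ 2)) / G := by
      rw [eq_div_iff hG0, Finset.sum_mul]
      have h1 : ∀ m : ℕ, (charSum χ (m + 1) - (∑ k ∈ K, χ k * (-(1 / (ω k - 1)))) / G) * G =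
          ∑ k ∈ K, χ k * (ω k ^ 2 / (ω k - 1) * ω k ^ m) := by
        intro m
        rw [sub_mul, hS, div_mul_cancel₀ _ hG0, ← Finset.sum_sub_distrib]
        refine Finset.sum_congr rfl fun k hk => ?_
        have := hωne k hk
        field_simp
        ring
      simp only [h1]
      rw [Finset.sum_comm]
      refine Finset.sum_congr rfl fun k hk => ?_
      have := hωne k hk
      rw [← Finset.mul_sum, ← Finset.mul_sum, geom_sum_eq (sub_ne_zero.mp this)]
      field_simp
    rw [this]
    refine hbound _ fun k hk => ?_
    have h0 := hpos k hk
    rw [norm_div, norm_mul, norm_pow, norm_pow, hω1, one_pow, one_mul, div_eq_mul_inv]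
    gcongr
    refine (norm_sub_le _ _).trans ?_
    rw [norm_pow, hω1]; norm_num

lemma tendsto_sum_char_mul_inv {q : ℕ} [NeZero q] (hq : 1 < q) {χ : DirichletCharacter ℂ q}
    (hχ : χ ≠ 1) :
    Tendsto (fun N => ∑ n ∈ Finset.range N, χ ((n + 1 : ℕ) : ZMod q) * ((n + 1 : ℕ) : ℂ)⁻¹) atTop
      (𝓝 (DirichletCharacter.LFunction χ 1)) := by
  have h1 : (0 : ℝ) < (1 : ℂ).re := by simp
  have hsum : Summable fun n => abelTerm χ n 1 := by
    refine Summable.of_norm_bounded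
      (g := fun n : ℕ => (q : ℝ) * (1 * ((n + 1 : ℕ) : ℝ) ^ (-(1 + (1 : ℝ)))))
      (((summable_rpow_succ one_pos).mul_left _).mul_left _) fun n => ?_
    refine (norm_abelTerm_le χ n h1).trans ?_
    rw [norm_one, Complex.one_re]
    gcongr
    exact norm_charSum_le hq hχ _
  have h2 := hsum.hasSum.tendsto_sum_nat
  rw [← LFunction_eq_tsum_abelTerm hq hχ h1] at h2
  have h3 : Tendsto (fun N : ℕ => charSum χ N * ((N + 1 : ℕ) : ℂ)⁻¹) atTop (𝓝 0) := by
    rw [tendsto_zero_iff_norm_tendsto_zero]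
    have h4 : Tendsto (fun N : ℕ => (q : ℝ) * (1 / ((N : ℝ) + 1))) atTop (𝓝 0) := by
      simpa using tendsto_one_div_add_atTop_nhds_zero_nat.const_mul (q : ℝ)
    refine squeeze_zero (fun N => norm_nonneg _) (fun N => ?_) h4
    rw [norm_mul, norm_inv, Complex.norm_natCast, one_div]
    push_cast
    gcongr
    exact norm_charSum_le hq hχ _
  have h5 := h3.add h2
  rw [zero_add] at h5
  refine h5.congr fun N => ?_
  have := sum_char_mul_cpow hq χ 1 N
  simp only [Complex.cpow_neg_one] at this
  exact this.symm

/-- Abel summation applied twice. -/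
lemma sum_char_mul_eq {q : ℕ} (hq : 1 < q) (χ : DirichletCharacter ℂ q) (M : ℂ) (g : ℕ → ℂ)
    (N : ℕ) :
    ∑ n ∈ Finset.range N, χ ((n + 1 : ℕ) : ZMod q) * g n =
      charSum χ N * g N + M * (g 0 - g N) +
      (∑ m ∈ Finset.range N, (charSum χ (m + 1) - M)) * (g N - g (N + 1)) +
      ∑ n ∈ Finset.range N, (∑ m ∈ Finset.range (n + 1), (charSum χ (m + 1) - M)) *
        ((g n - g (n + 1)) - (g (n + 1) - g (n + 2))) := by
  induction N with
  | zero => simp [charSum_zero hq]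
  | succ N ih =>
    rw [Finset.sum_range_succ, ih,
      Finset.sum_range_succ (fun n => (∑ m ∈ Finset.range (n + 1), (charSum χ (m + 1) - M)) * _),
      Finset.sum_range_succ (fun m => charSum χ (m + 1) - M), charSum_succ]
    ring

/-- The smoothed character sum `∑ χ(n) / (2 sinh (n / Q))` is close to `Q / 2 * L(1, χ)`. -/
lemma norm_sum_char_sinh_sub_le {q : ℕ} [Fact q.Prime] {χ : DirichletCharacter ℂ q} (hχ : χ ≠ 1)
    (hχ2 : χ ^ 2 = 1) {Q : ℕ} (hQ : 1 ≤ Q) {W : ℂ}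
    (hW : Tendsto (fun N => ∑ n ∈ Finset.range N, χ ((n + 1 : ℕ) : ZMod q) *
      ((1 / (2 * Real.sinh ((n + 1 : ℕ) / Q)) : ℝ) : ℂ)) atTop (𝓝 W)) :
    ‖W - Q / 2 * DirichletCharacter.LFunction χ 1‖ ≤ 15 * (q * √q) / Q := by
  have hq1 : 1 < q := (Fact.out : q.Prime).one_lt
  obtain ⟨M, hM, hT⟩ := exists_charSum_mean hχ hχ2
  have hQ0 : (0 : ℝ) < Q := by exact_mod_cast hQ
  set B : ℝ := q * √q with hB
  have hB0 : 0 ≤ B := by positivity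
  set g : ℕ → ℝ := fun n => sinhKernel ((n + 1 : ℕ) / Q) with hg
  have hlim : Tendsto (fun N => ∑ n ∈ Finset.range N, χ ((n + 1 : ℕ) : ZMod q) * (g n : ℂ)) atTop
      (𝓝 (W - Q / 2 * DirichletCharacter.LFunction χ 1)) := by
    refine (hW.sub ((tendsto_sum_char_mul_inv hq1 hχ).const_mul ((Q : ℂ) / 2))).congr fun N => ?_
    rw [Finset.mul_sum, ← Finset.sum_sub_distrib]
    refine Finset.sum_congr rfl fun n _ => ?_
    have : ((n + 1 : ℕ) : ℂ) ≠ 0 := Nat.cast_ne_zero.mpr (by omega)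
    have hQc : (Q : ℂ) ≠ 0 := Nat.cast_ne_zero.mpr (by omega)
    simp only [hg, sinhKernel]
    rw [Complex.ofReal_sub, mul_sub]
    congr 1
    push_cast at this ⊢
    field_simp
  have hg0 : |g 0| ≤ 1 / Q := by
    have := abs_sinhKernel_le (t := ((0 + 1 : ℕ) : ℝ) / Q) (by positivity)
      (by rw [div_le_one hQ0]; simpa using hQ)
    simpa [hg] using this
  have hgN : Tendsto g atTop (𝓝 0) := by
    have h4 : Tendsto (fun N : ℕ => (Q : ℝ) * (1 / ((N : ℝ) + 1))) atTop (𝓝 0) := by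
      simpa using tendsto_one_div_add_atTop_nhds_zero_nat.const_mul (Q : ℝ)
    refine squeeze_zero_norm (fun N => ?_) h4
    refine (abs_sinhKernel_le_inv (by positivity)).trans (le_of_eq ?_)
    push_cast
    field_simp
  have hbd : Tendsto (fun N => (q : ℝ) * |g N| + B * (|g 0| + |g N|) + B * (|g N| + |g (N + 1)|) +
      B * (14 / Q)) atTop (𝓝 ((q : ℝ) * 0 + B * (|g 0| + 0) + B * (0 + 0) + B * (14 / Q))) := by
    have ha : Tendsto (fun N => |g N|) atTop (𝓝 0) := by simpa using hgN.abs
    have hb : Tendsto (fun N => |g (N + 1)|) atTop (𝓝 0) := ha.comp (tendsto_add_atTop_nat 1)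
    exact (((ha.const_mul _).add ((tendsto_const_nhds.add ha).const_mul _)).add
      ((ha.add hb).const_mul _)).add tendsto_const_nhds
  have hfin := le_of_tendsto_of_tendsto' hlim.norm hbd fun N => ?_
  · refine hfin.trans ?_
    have : B * |g 0| ≤ B * (1 / Q) := by gcongr
    have e : 15 * B / Q = B * (1 / Q) + B * (14 / Q) := by ring
    rw [e]
    linarith
  · rw [sum_char_mul_eq hq1 χ M (fun n => (g n : ℂ)) N]
    have hn : ∀ n, ‖(g n : ℂ)‖ = |g n| := fun n => by rw [Complex.norm_real, Real.norm_eq_abs]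
    have t1 : ‖charSum χ N * (g N : ℂ)‖ ≤ q * |g N| := by
      rw [norm_mul, hn]
      gcongr
      exact norm_charSum_le hq1 hχ _
    have t2 : ‖M * ((g 0 : ℂ) - g N)‖ ≤ B * (|g 0| + |g N|) := by
      rw [norm_mul]
      gcongr
      exact (norm_sub_le _ _).trans (by rw [hn, hn])
    have t3 : ‖(∑ m ∈ Finset.range N, (charSum χ (m + 1) - M)) * ((g N : ℂ) - g (N + 1))‖ ≤
        B * (|g N| + |g (N + 1)|) := by
      rw [norm_mul]
      gcongr
      · exact hT N
      · exact (norm_sub_le _ _).trans (by rw [hn, hn])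
    have t4 : ‖∑ n ∈ Finset.range N, (∑ m ∈ Finset.range (n + 1), (charSum χ (m + 1) - M)) *
        (((g n : ℂ) - g (n + 1)) - (g (n + 1) - g (n + 2)))‖ ≤ B * (14 / Q) := by
      calc _ ≤ ∑ n ∈ Finset.range N, B * |(g n - g (n + 1)) - (g (n + 1) - g (n + 2))| := by
            refine norm_sum_le_of_le _ fun n _ => ?_
            rw [norm_mul]
            gcongr
            · exact hT (n + 1)
            · rw [← Real.norm_eq_abs, ← Complex.norm_real]
              push_cast
              rfl
        _ ≤ B * (14 / Q) := by
            rw [← Finset.mul_sum]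
            gcongr
            exact sum_second_diff_le hQ N
    refine (norm_add_le _ _).trans (add_le_add ((norm_add_le _ _).trans
      (add_le_add ((norm_add_le _ _).trans (add_le_add t1 t2)) t3)) t4)

open DirichletCharacter in
lemma zetaMul_eq_sum_divisors {q : ℕ} (χ : DirichletCharacter ℂ q) (n : ℕ) :
    zetaMul χ n = ∑ d ∈ n.divisors, χ d := by
  rw [zetaMul, ArithmeticFunction.coe_zeta_mul_apply]
  refine Finset.sum_congr rfl fun d hd => ?_
  have : d ≠ 0 := (Nat.pos_of_mem_divisors hd).ne'
  simp [toArithmeticFunction, this]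

open scoped ComplexOrder in
open DirichletCharacter in
lemma one_le_zetaMul_sq {q : ℕ} {χ : DirichletCharacter ℂ q} (hχ2 : χ ^ 2 = 1) {m : ℕ}
    (hm : m ≠ 0) : 1 ≤ zetaMul χ (m ^ 2) := by
  have hpp : ∀ p : ℕ, p.Prime → ∀ a : ℕ, 1 ≤ zetaMul χ (p ^ (2 * a)) := by
    intro p hp a
    rw [zetaMul_eq_sum_divisors, Nat.sum_divisors_prime_pow hp]
    simp only [Nat.cast_pow, map_pow]
    rcases MulChar.isQuadratic_iff_sq_eq_one.mpr hχ2 (p : ZMod q) with h | h | h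
    · rw [h, Finset.sum_range_succ']
      simp
    · rw [h]
      simp only [one_pow, Finset.sum_const, Finset.card_range, nsmul_eq_mul, mul_one]
      exact_mod_cast Nat.le_add_left 1 (2 * a)
    · rw [h, neg_one_geom_sum, if_neg]
      rw [Nat.not_even_iff_odd]
      exact odd_two_mul_add_one a
  have hprod : ∀ (s : Finset ℕ) (f : ℕ → ℂ), (∀ p ∈ s, 1 ≤ f p) → 1 ≤ ∏ p ∈ s, f p := by
    intro s f
    induction s using Finset.induction_on with
    | empty => simp
    | insert p s hp ih =>
      intro h
      rw [Finset.prod_insert hp]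
      exact one_le_mul_of_one_le_of_one_le (h p (Finset.mem_insert_self _ _))
        (ih fun x hx => h x (Finset.mem_insert_of_mem hx))
  rw [(isMultiplicative_zetaMul χ).multiplicative_factorization _ (pow_ne_zero 2 hm), Finsupp.prod]
  refine hprod _ _ fun p hp => ?_
  rw [Nat.factorization_pow]
  simp only [Finsupp.coe_smul, Pi.smul_apply, smul_eq_mul]
  refine hpp p ?_ _
  exact Nat.prime_of_mem_primeFactors (Nat.support_factorization _ ▸ hp)

/-- The kernel `e ^ (-t) - e ^ (-2 t)`. -/
noncomputable def expDiff (t : ℝ) : ℝ := Real.exp (-t) - Real.exp (-(2 * t))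

lemma expDiff_nonneg {t : ℝ} (ht : 0 ≤ t) : 0 ≤ expDiff t := by
  rw [expDiff, sub_nonneg, Real.exp_le_exp]; linarith

lemma expDiff_le {t : ℝ} : expDiff t ≤ Real.exp (-t) := by
  have := Real.exp_pos (-(2 * t))
  rw [expDiff]; linarith

lemma expDiff_ge {t : ℝ} (ht : 1 / 4 ≤ t) (ht1 : t ≤ 1) : 1 / 16 ≤ expDiff t := by
  have e : expDiff t = Real.exp (-t) * (1 - Real.exp (-t)) := by
    rw [expDiff, mul_sub, mul_one, ← Real.exp_add]; ring_nf
  have h1 : 1 / 3 ≤ Real.exp (-t) := by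
    rw [Real.exp_neg, one_div]
    gcongr
    exact (Real.exp_le_exp.mpr ht1).trans (by linarith [Real.exp_one_lt_d9])
  have h2 : Real.exp (-t) ≤ 4 / 5 := by
    rw [Real.exp_neg, inv_le_comm₀ (Real.exp_pos _) (by norm_num)]
    linarith [Real.add_one_le_exp t]
  rw [e]
  nlinarith

lemma hasSum_expDiff {t : ℝ} (ht : 0 < t) :
    HasSum (fun m : ℕ+ => expDiff (m * t)) (1 / (2 * Real.sinh t)) := by
  have hg : ∀ u : ℝ, 0 < u →
      HasSum (fun m : ℕ+ => Real.exp (-(m * u))) (Real.exp (-u) / (1 - Real.exp (-u))) := by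
    intro u hu
    rw [hasSum_pnat_iff_hasSum_succ (f := fun m : ℕ => Real.exp (-(m * u)))]
    have h1 : Real.exp (-u) < 1 := Real.exp_lt_one_iff.mpr (by linarith)
    have := (hasSum_geometric_of_lt_one (Real.exp_pos (-u)).le h1).mul_left (Real.exp (-u))
    rw [← div_eq_mul_inv] at this
    refine this.congr_fun fun m => ?_
    rw [← Real.exp_nat_mul, ← Real.exp_add]
    push_cast
    ring_nf
  have h := (hg t ht).sub (hg (2 * t) (by linarith))
  have hval : Real.exp (-t) / (1 - Real.exp (-t)) -
      Real.exp (-(2 * t)) / (1 - Real.exp (-(2 * t))) = 1 / (2 * Real.sinh t) := by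
    have h1 : Real.exp (-t) < 1 := Real.exp_lt_one_iff.mpr (by linarith)
    have h0 := Real.exp_pos (-t)
    have e2 : Real.exp (-(2 * t)) = Real.exp (-t) ^ 2 := by
      rw [← Real.exp_nat_mul]; push_cast; ring_nf
    have e1 : Real.exp t = (Real.exp (-t))⁻¹ := by rw [Real.exp_neg, inv_inv]
    rw [Real.sinh_eq, e2, e1]
    set x := Real.exp (-t)
    have a1 : 1 - x ≠ 0 := by linarith
    have a2 : 1 - x ^ 2 ≠ 0 := by nlinarith
    have a3 : 1 + x ≠ 0 := by linarith
    have a4 : x⁻¹ - x ≠ 0 := by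
      have : x⁻¹ - x = (1 - x ^ 2) / x := by field_simp
      rw [this]; positivity
    have : 1 - x ^ 2 = (1 - x) * (1 + x) := by ring
    have a5 : 2 * ((x⁻¹ - x) / 2) = (1 - x ^ 2) / x := by field_simp
    rw [a5, this]
    field_simp
    ring
  rw [hval] at h
  refine h.congr_fun fun m => ?_
  rw [expDiff]
  ring_nf

lemma summable_expDiff_mul {t : ℝ} (ht : 0 < t) :
    Summable fun c : ℕ+ × ℕ+ => expDiff ((c.1 : ℝ) * c.2 * t) := by
  have hg : Summable fun m : ℕ+ => Real.exp (-(m * (t / 2))) := by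
    rw [summable_pnat_iff_summable_nat (f := fun m : ℕ => Real.exp (-(m * (t / 2))))]
    have h1 : Real.exp (-(t / 2)) < 1 := Real.exp_lt_one_iff.mpr (by linarith)
    refine (summable_geometric_of_lt_one (Real.exp_pos _).le h1).congr fun m => ?_
    rw [← Real.exp_nat_mul]; ring_nf
  refine Summable.of_nonneg_of_le (fun c => expDiff_nonneg (by positivity)) (fun c => ?_)
    (hg.mul_of_nonneg hg (fun _ => (Real.exp_pos _).le) (fun _ => (Real.exp_pos _).le))
  refine expDiff_le.trans ?_
  rw [← Real.exp_add, Real.exp_le_exp]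
  have h1 : (1 : ℝ) ≤ c.1 := by exact_mod_cast one_le (a := c.1)
  have h2 : (1 : ℝ) ≤ c.2 := by exact_mod_cast one_le (a := c.2)
  have : ((c.1 : ℝ) + c.2) / 2 ≤ c.1 * c.2 := by nlinarith
  nlinarith

open DirichletCharacter in
/-- The smoothed character sum is a smoothed sum of the coefficients of `ζ(s) L(s, χ)`. -/
lemma exists_hasSum_zetaMul_expDiff {q : ℕ} (χ : DirichletCharacter ℂ q) {t : ℝ} (ht : 0 < t) :
    ∃ W : ℂ, HasSum (fun k : ℕ+ => zetaMul χ k * (expDiff (k * t) : ℂ)) W ∧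
      Tendsto (fun N => ∑ n ∈ Finset.range N, χ ((n + 1 : ℕ) : ZMod q) *
        ((1 / (2 * Real.sinh ((n + 1 : ℕ) * t)) : ℝ) : ℂ)) atTop (𝓝 W) := by
  set f : ℕ+ × ℕ+ → ℂ := fun c => χ (c.1 : ℕ) * (expDiff ((c.1 : ℝ) * c.2 * t) : ℂ) with hf
  have hsum : Summable f := by
    refine Summable.of_norm_bounded (summable_expDiff_mul ht) fun c => ?_
    rw [norm_mul, Complex.norm_real, Real.norm_of_nonneg (expDiff_nonneg (by positivity))]
    exact mul_le_of_le_one_left (expDiff_nonneg (by positivity)) (χ.norm_le_one _)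
  refine ⟨∑' c, f c, ?_, ?_⟩
  · have h1 : HasSum (f ∘ sigmaAntidiagonalEquivProd) (∑' c, f c) :=
      sigmaAntidiagonalEquivProd.hasSum_iff.mpr hsum.hasSum
    have h2 := h1.sigma (g := fun k : ℕ+ => zetaMul χ k * (expDiff (k * t) : ℂ)) ?_
    · exact h2
    · intro k
      have := hasSum_fintype fun x : Nat.divisorsAntidiagonal (k : ℕ) =>
        (f ∘ sigmaAntidiagonalEquivProd) ⟨k, x⟩
      convert this using 1
      have h3 : ∀ x : Nat.divisorsAntidiagonal (k : ℕ),
          (f ∘ sigmaAntidiagonalEquivProd) ⟨k, x⟩ = χ (x.1.1 : ℕ) * (expDiff (k * t) : ℂ) := by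
        intro x
        have h4 := (Nat.mem_divisorsAntidiagonal.mp x.2).1
        simp only [hf, Function.comp, sigmaAntidiagonalEquivProd, Equiv.coe_fn_mk,
          divisorsAntidiagonalFactors, PNat.mk_coe]
        have h5 : ((x.1.1 : ℕ) : ℝ) * ((x.1.2 : ℕ) : ℝ) = ((k : ℕ) : ℝ) := by exact_mod_cast h4
        rw [h5]
      simp only [h3]
      rw [Finset.sum_coe_sort (Nat.divisorsAntidiagonal (k : ℕ))
        (fun x => χ (x.1 : ℕ) * (expDiff (k * t) : ℂ)), ← Finset.sum_mul,
        Nat.sum_divisorsAntidiagonal (fun i _ => χ ((i : ℕ) : ZMod q)), zetaMul_eq_sum_divisors]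
  · have h1 := hsum.hasSum.prod_fiberwise
      (g := fun n : ℕ+ => χ (n : ℕ) * ((1 / (2 * Real.sinh (n * t)) : ℝ) : ℂ)) ?_
    · rw [hasSum_pnat_iff_hasSum_succ
        (f := fun n : ℕ => χ (n : ℕ) * ((1 / (2 * Real.sinh (n * t)) : ℝ) : ℂ))] at h1
      exact h1.tendsto_sum_nat
    · intro n
      have := (hasSum_expDiff (t := n * t) (by positivity))
      have h2 := (Complex.hasSum_ofReal.mpr this).mul_left (χ (n : ℕ))
      refine h2.congr_fun fun m => ?_
      simp only [hf]
      rw [← mul_assoc, mul_comm (n : ℝ)]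

open scoped ComplexOrder in
open DirichletCharacter in
lemma re_tsum_zetaMul_ge {q : ℕ} {χ : DirichletCharacter ℂ q} (hχ2 : χ ^ 2 = 1) {N : ℕ}
    (hN : 1 ≤ N) {W : ℂ}
    (hW : HasSum (fun k : ℕ+ => zetaMul χ k * (expDiff (k * (1 / (N ^ 2 : ℕ) : ℝ)) : ℂ)) W) :
    (N : ℝ) / 32 ≤ W.re := by
  have hN0 : (0 : ℝ) < N := by exact_mod_cast hN
  have hre : HasSum (fun k : ℕ+ => (zetaMul χ k).re * expDiff (k * (1 / (N ^ 2 : ℕ) : ℝ))) W.re := by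
    have := Complex.hasSum_re hW
    simpa [Complex.re_mul_ofReal] using this
  have hpos : ∀ n, 0 ≤ (zetaMul χ n).re := fun n => (Complex.le_def.mp (zetaMul_nonneg hχ2 n)).1
  rw [hasSum_iff_hasSum_of_ne_zero_bij (g := fun k : ℕ => if k = 0 then 0 else
    (zetaMul χ k).re * expDiff (k * (1 / (N ^ 2 : ℕ) : ℝ)))
    (fun x => ⟨(x : ℕ), Nat.pos_of_ne_zero fun h => by
      have := x.2; simp [Function.mem_support, h] at this⟩)] at hre
  rotate_left
  · intro x y h
    ext
    simpa using congrArg (fun z : ℕ+ => (z : ℕ)) h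
  · intro k hk
    refine ⟨⟨(k : ℕ), ?_⟩, rfl⟩
    rw [Function.mem_support] at hk ⊢
    simpa [k.ne_zero] using hk
  · intro x
    have : (x : ℕ) ≠ 0 := fun h => by
      have := x.2; simp [Function.mem_support, h] at this
    simp [this]
  set S : Finset ℕ := (Finset.Icc ((N + 1) / 2) N).image (· ^ 2) with hS
  have hle := sum_le_hasSum S (fun k _ => ?_) hre
  · refine le_trans ?_ hle
    rw [hS, Finset.sum_image (fun a _ b _ h => by simpa using h)]
    have hc : (N : ℝ) / 32 ≤ ∑ m ∈ Finset.Icc ((N + 1) / 2) N, (1 / 16 : ℝ) := by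
      rw [Finset.sum_const, Nat.card_Icc, nsmul_eq_mul]
      have : (N : ℝ) ≤ 2 * ((N + 1 - (N + 1) / 2 : ℕ) : ℝ) := by
        exact_mod_cast (by omega : N ≤ 2 * (N + 1 - (N + 1) / 2))
      linarith
    refine hc.trans (Finset.sum_le_sum fun m hm => ?_)
    rw [Finset.mem_Icc] at hm
    have hm0 : m ≠ 0 := by omega
    rw [if_neg (pow_ne_zero 2 hm0)]
    have h1 : 1 ≤ (zetaMul χ (m ^ 2)).re :=
      by simpa using (Complex.le_def.mp (one_le_zetaMul_sq hχ2 hm0)).1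
    have h2 : (N : ℝ) ≤ 2 * m := by exact_mod_cast (by omega : N ≤ 2 * m)
    have h3 : (m : ℝ) ≤ N := by exact_mod_cast hm.2
    have h4 : 1 / 16 ≤ expDiff (((m ^ 2 : ℕ) : ℝ) * (1 / (N ^ 2 : ℕ) : ℝ)) := by
      push_cast
      apply expDiff_ge
      · rw [mul_one_div, div_le_div_iff₀ (by norm_num) (by positivity)]
        nlinarith
      · rw [mul_one_div, div_le_one (by positivity)]
        gcongr
    nlinarith
  · split_ifs
    · exact le_rfl
    · exact mul_nonneg (hpos k) (expDiff_nonneg (by positivity))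

/-- Lower bound for `L(1, χ)` for a real character to a prime modulus. -/
lemma norm_LFunction_one_ge {q : ℕ} [Fact q.Prime] {χ : DirichletCharacter ℂ q} (hχ : χ ≠ 1)
    (hχ2 : χ ^ 2 = 1) : 1 / (640 * √q) ≤ ‖DirichletCharacter.LFunction χ 1‖ := by
  have hq1 : 1 ≤ q := (Fact.out : q.Prime).one_le
  have hq1' : (1 : ℝ) ≤ q := by exact_mod_cast hq1
  set N := 10 * (Nat.sqrt q + 1) with hNdef
  have hsq : 1 ≤ √(q : ℝ) := Real.one_le_sqrt.mpr hq1'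
  have hlo : 10 * √(q : ℝ) ≤ N := by
    have := Real.real_sqrt_lt_nat_sqrt_succ (a := q)
    rw [hNdef]; push_cast; linarith
  have hhi : (N : ℝ) ≤ 20 * √(q : ℝ) := by
    have := Real.nat_sqrt_le_real_sqrt (a := q)
    rw [hNdef]; push_cast; linarith
  have hN1 : 1 ≤ N := by omega
  have hN0 : (0 : ℝ) < N := by exact_mod_cast hN1
  have hQ : 1 ≤ N ^ 2 := Nat.one_le_pow _ _ hN1
  obtain ⟨W, h1, h2⟩ := exists_hasSum_zetaMul_expDiff χ (t := 1 / (N ^ 2 : ℕ)) (by positivity)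
  simp only [mul_one_div] at h2
  have h3 := norm_sum_char_sinh_sub_le hχ hχ2 hQ h2
  have h4 := re_tsum_zetaMul_ge hχ2 hN1 h1
  have h5 : (N : ℝ) / 32 ≤ ‖W‖ := h4.trans (Complex.re_le_norm W)
  set L := DirichletCharacter.LFunction χ 1
  have h6 : ‖W‖ ≤ 15 * (q * √q) / (N ^ 2 : ℕ) + (N : ℝ) ^ 2 / 2 * ‖L‖ := by
    have e : W = (W - (N ^ 2 : ℕ) / 2 * L) + (N ^ 2 : ℕ) / 2 * L := by ring
    calc ‖W‖ ≤ ‖W - (N ^ 2 : ℕ) / 2 * L‖ + ‖((N ^ 2 : ℕ) : ℂ) / 2 * L‖ := by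
          conv_lhs => rw [e]
          exact norm_add_le _ _
      _ ≤ _ := by
          refine add_le_add h3 (le_of_eq ?_)
          rw [norm_mul, norm_div, Complex.norm_natCast]
          push_cast
          simp
  have h7 : 15 * (q * √(q : ℝ)) / (N ^ 2 : ℕ) ≤ 15 * N / 1000 := by
    push_cast
    rw [div_le_iff₀ (by positivity)]
    have e : (q : ℝ) * √q = √q ^ 3 := by
      rw [pow_succ, Real.sq_sqrt (by linarith)]
    have h8 : (10 * √(q : ℝ)) ^ 3 ≤ (N : ℝ) ^ 3 := by gcongr
    rw [e]
    nlinarith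
  have h9 : (N : ℝ) / 64 ≤ (N : ℝ) ^ 2 / 2 * ‖L‖ := by linarith
  have h10 : 1 / (32 * (N : ℝ)) ≤ ‖L‖ := by
    rw [div_le_iff₀ (by positivity)]
    have e : (N : ℝ) ^ 2 / 2 * ‖L‖ = (N / 64) * (‖L‖ * (32 * N)) := by ring
    rw [e] at h9
    exact le_of_mul_le_mul_left (by linarith) (by positivity : (0 : ℝ) < N / 64)
  refine le_trans ?_ h10
  apply one_div_le_one_div_of_le (by positivity)
  linarith

/-- Bound for the logarithmic derivative at `1` attached to a real character. -/
lemma norm_logDeriv_one_le_of_sq_eq_one {q : ℕ} [Fact q.Prime] (hq : 3 ≤ q)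
    {χ : DirichletCharacter ℂ q} (hχ : χ ≠ 1) (hχ2 : χ ^ 2 = 1) :
    ‖deriv (DirichletCharacter.LFunction χ) 1 / DirichletCharacter.LFunction χ 1‖ ≤
      40960 * √q * Real.log q ^ 2 := by
  have h1 := norm_LFunction_one_ge hχ hχ2
  have hL := one_le_log_of_three_le hq
  have hq0 : (0 : ℝ) < q := by positivity
  have hs : 0 < √(q : ℝ) := Real.sqrt_pos.mpr hq0
  have h2 := norm_deriv_LFunction_le hq hχ (s := 1) (by simp; positivity)
  rw [norm_div]
  calc _ ≤ 64 * Real.log q ^ 2 / (1 / (640 * √q)) := by gcongr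
    _ = _ := by field_simp; norm_num

open Classical in
/-- The Dirichlet characters modulo `q` that are trivial on the `r`-th roots of unity. -/
noncomputable def charsTrivialOnRoots (q r : ℕ) [NeZero q] : Finset (DirichletCharacter ℂ q) :=
  Finset.univ.filter fun χ => ∀ a : ZMod q, a ^ r = 1 → χ a = 1

lemma mem_charsTrivialOnRoots {q r : ℕ} [NeZero q] {χ : DirichletCharacter ℂ q} :
    χ ∈ charsTrivialOnRoots q r ↔ ∀ a : ZMod q, a ^ r = 1 → χ a = 1 := by
  simp [charsTrivialOnRoots]

lemma one_mem_charsTrivialOnRoots {q r : ℕ} [NeZero q] (hr : r ≠ 0) :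
    1 ∈ charsTrivialOnRoots q r := by
  rw [mem_charsTrivialOnRoots]
  intro a ha
  exact MulChar.one_apply (IsUnit.of_pow_eq_one ha hr)

/-- The value at `s` of the logarithmic derivative of the Dirichlet `L`-function. -/
noncomputable def logDerivL {q : ℕ} [NeZero q] (χ : DirichletCharacter ℂ q) (s : ℂ) : ℂ :=
  deriv (DirichletCharacter.LFunction χ) s / DirichletCharacter.LFunction χ s

open Classical in
lemma gammaK_eq (q m : ℕ) [NeZero q] :
    gammaK q m = Real.eulerMascheroniConstant +
      (∑ χ ∈ (charsTrivialOnRoots q m).erase 1, logDerivL χ 1).re := by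
  have hL : ∀ χ : DirichletCharacter ℂ q, Lfun χ = DirichletCharacter.LFunction χ := by
    intro χ; funext s; rw [Lfun, dif_neg (NeZero.ne q)]
  rw [gammaK, finsum_mem_eq_finite_toFinset_sum _ (Set.toFinite _)]
  congr 2
  refine Finset.sum_congr ?_ fun χ _ => by rw [hL, logDerivL]
  ext χ
  simp [mem_charsTrivialOnRoots]

lemma apply_eq_one_or_of_mem {q r : ℕ} [Fact q.Prime] {b : ZMod q} (hb : b ^ r = -1)
    {χ : DirichletCharacter ℂ q} (hχ : χ ∈ charsTrivialOnRoots q r) : χ b = 1 ∨ χ b = -1 := by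
  rw [← sq_eq_one_iff, ← map_pow]
  refine mem_charsTrivialOnRoots.mp hχ _ ?_
  rw [← pow_mul, mul_comm, pow_mul, hb]
  norm_num

/-- `2 γ_{K_{2r}} - γ_{K_r}` as a twisted sum of logarithmic derivatives. -/
lemma two_mul_gammaK_sub {q r : ℕ} [Fact q.Prime] (hr : r ≠ 0) {b : ZMod q} (hb : b ^ r = -1) :
    2 * gammaK q (2 * r) - gammaK q r = Real.eulerMascheroniConstant +
      (∑ χ ∈ (charsTrivialOnRoots q r).erase 1, χ b * logDerivL χ 1).re := by
  classical
  have hb0 : IsUnit b := by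
    rw [isUnit_iff_ne_zero]
    rintro rfl
    rw [zero_pow hr] at hb
    simp at hb
  have hsub : charsTrivialOnRoots q (2 * r) =
      (charsTrivialOnRoots q r).filter fun χ => χ b = 1 := by
    ext χ
    rw [Finset.mem_filter, mem_charsTrivialOnRoots, mem_charsTrivialOnRoots]
    refine ⟨fun h => ⟨fun a ha => h a ?_, h b ?_⟩, fun h a ha => ?_⟩
    · rw [mul_comm, pow_mul, ha, one_pow]
    · rw [mul_comm, pow_mul, hb]; norm_num
    · rw [mul_comm, pow_mul, sq_eq_one_iff] at ha
      rcases ha with ha | ha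
      · exact h.1 a ha
      · have h1 : χ (a * b⁻¹) = 1 := h.1 _ (by rw [mul_pow, ha, inv_pow, hb]; norm_num)
        have h2 : a = a * b⁻¹ * b := by
          rw [mul_assoc, inv_mul_cancel₀ hb0.ne_zero, mul_one]
        rw [h2, map_mul, h1, h.2, one_mul]
  have key : 2 * ∑ χ ∈ (charsTrivialOnRoots q (2 * r)).erase 1, logDerivL χ 1 -
      ∑ χ ∈ (charsTrivialOnRoots q r).erase 1, logDerivL χ 1 =
      ∑ χ ∈ (charsTrivialOnRoots q r).erase 1, χ b * logDerivL χ 1 := by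
    rw [hsub, ← Finset.filter_erase, Finset.sum_filter, Finset.mul_sum, ← Finset.sum_sub_distrib]
    refine Finset.sum_congr rfl fun χ hχ => ?_
    rcases apply_eq_one_or_of_mem hb (Finset.mem_of_mem_erase hχ) with h | h
    · rw [if_pos h, h]; ring
    · rw [if_neg (by rw [h]; norm_num), h]; ring
  have := congrArg Complex.re key
  rw [Complex.sub_re, Complex.mul_re] at this
  simp only [Complex.re_ofNat, Complex.im_ofNat, zero_mul, sub_zero] at this
  rw [gammaK_eq, gammaK_eq, ← this]
  ring

/-- A family of characters whose `n`-th powers are trivial has at most `n` members. -/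
lemma card_chars_le {q : ℕ} [Fact q.Prime] {n : ℕ} (hn : 0 < n)
    {S : Finset (DirichletCharacter ℂ q)} {g : (ZMod q)ˣ} (hg : ∀ x, x ∈ Subgroup.zpowers g)
    (hS : ∀ χ ∈ S, χ g ^ n = 1) : S.card ≤ n := by
  classical
  refine le_trans ?_ (Polynomial.card_nthRoots n (1 : ℂ))
  refine le_trans ?_ (Multiset.toFinset_card_le _)
  refine Finset.card_le_card_of_injOn (fun χ => χ g) (fun χ hχ => ?_) fun χ _ ψ _ h => ?_
  · simpa [Polynomial.mem_nthRoots hn] using hS χ hχ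
  · refine MulChar.ext fun a => ?_
    obtain ⟨k, rfl⟩ := hg a
    have h' : χ g = ψ g := h
    have e : ∀ φ : DirichletCharacter ℂ q, φ ((g ^ k : (ZMod q)ˣ) : ZMod q) = φ g ^ k := by
      intro φ
      rw [← MulChar.coe_toUnitHom, map_zpow, Units.val_zpow_eq_zpow_val, MulChar.coe_toUnitHom]
    rw [e, e, h']

lemma card_charsTrivialOnRoots_le {q r : ℕ} [Fact q.Prime] (hr : r ∣ q - 1) :
    (charsTrivialOnRoots q r).card ≤ (q - 1) / r := by
  obtain ⟨g, hg⟩ := IsCyclic.exists_generator (α := (ZMod q)ˣ)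
  have hq1 : 0 < q - 1 := Nat.sub_pos_of_lt (Fact.out : q.Prime).one_lt
  refine card_chars_le (Nat.div_pos (Nat.le_of_dvd hq1 hr) (Nat.pos_of_dvd_of_pos hr hq1)) hg
    fun χ hχ => ?_
  rw [← map_pow]
  refine mem_charsTrivialOnRoots.mp hχ _ ?_
  rw [← pow_mul, Nat.div_mul_cancel hr]
  exact ZMod.pow_card_sub_one_eq_one g.ne_zero

lemma card_filter_sq_eq_one_le {q : ℕ} [Fact q.Prime] [DecidableEq (DirichletCharacter ℂ q)]
    (S : Finset (DirichletCharacter ℂ q)) : (S.filter fun χ => χ ^ 2 = 1).card ≤ 2 := by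
  obtain ⟨g, hg⟩ := IsCyclic.exists_generator (α := (ZMod q)ˣ)
  refine card_chars_le two_pos hg fun χ hχ => ?_
  rw [← MulChar.pow_apply_coe, (Finset.mem_filter.mp hχ).2, MulChar.one_apply_coe]

/-- Orthogonality for the characters trivial on the `r`-th roots of unity. -/
lemma sum_charsTrivialOnRoots_eq_zero {q r : ℕ} [Fact q.Prime] (hr : r ≠ 0) {c : ZMod q}
    (hc : c ^ r ≠ 1) : ∑ χ ∈ charsTrivialOnRoots q r, χ c = 0 := by
  obtain ⟨ψ, hψ⟩ :=
    DirichletCharacter.exists_apply_ne_one_of_hasEnoughRootsOfUnity ℂ (n := q) hc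
  have hψr : ∀ a : ZMod q, a ^ r = 1 → (ψ ^ r) a = 1 := by
    intro a ha
    rw [MulChar.pow_apply' _ hr, ← map_pow, ha, map_one]
  have h : ∑ χ ∈ charsTrivialOnRoots q r, χ c =
      (ψ ^ r) c * ∑ χ ∈ charsTrivialOnRoots q r, χ c := by
    rw [Finset.mul_sum]
    symm
    refine Finset.sum_equiv (Equiv.mulLeft (ψ ^ r)) (fun χ => ?_) fun χ _ => rfl
    rw [mem_charsTrivialOnRoots, mem_charsTrivialOnRoots]
    refine forall₂_congr fun a ha => ?_
    rw [Equiv.coe_mulLeft, MulChar.mul_apply, hψr a ha, one_mul]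
  rw [MulChar.pow_apply' _ hr, ← map_pow] at h
  have h2 : (ψ (c ^ r) - 1) * ∑ χ ∈ charsTrivialOnRoots q r, χ c = 0 := by
    rw [sub_mul, one_mul, ← h, sub_self]
  exact (mul_eq_zero.mp h2).resolve_left (sub_ne_zero.mpr hψ)

/-- The terms `Λ(n) n^{-(1+u)}` of the logarithmic derivative of the zeta function. -/
noncomputable def vonMangoldtTerm (u : ℝ) (n : ℕ) : ℝ :=
  ArithmeticFunction.vonMangoldt n * (n : ℝ) ^ (-(1 + u))

lemma vonMangoldtTerm_nonneg (u : ℝ) (n : ℕ) : 0 ≤ vonMangoldtTerm u n :=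
  mul_nonneg ArithmeticFunction.vonMangoldt_nonneg (by positivity)

lemma vonMangoldtTerm_zero (u : ℝ) : vonMangoldtTerm u 0 = 0 := by
  simp [vonMangoldtTerm]

lemma vonMangoldtTerm_le {u : ℝ} (hu : 0 < u) {n : ℕ} (hn : n ≠ 0) :
    vonMangoldtTerm u n ≤ 2 / u * (n : ℝ) ^ (-(1 + u / 2)) := by
  have hn0 : (0 : ℝ) < n := by positivity
  have h1 : ArithmeticFunction.vonMangoldt n ≤ (n : ℝ) ^ (u / 2) / (u / 2) :=
    ArithmeticFunction.vonMangoldt_le_log.trans (Real.log_le_rpow_div hn0.le (by positivity))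
  rw [vonMangoldtTerm]
  calc _ ≤ (n : ℝ) ^ (u / 2) / (u / 2) * (n : ℝ) ^ (-(1 + u)) := by gcongr
    _ = 2 / u * ((n : ℝ) ^ (u / 2) * (n : ℝ) ^ (-(1 + u))) := by ring
    _ = _ := by rw [← Real.rpow_add hn0]; ring_nf

lemma summable_vonMangoldtTerm {u : ℝ} (hu : 0 < u) : Summable (vonMangoldtTerm u) := by
  rw [← summable_nat_add_iff 1]
  exact Summable.of_nonneg_of_le (fun n => vonMangoldtTerm_nonneg _ _)
    (fun n => vonMangoldtTerm_le hu n.succ_ne_zero)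
    ((summable_rpow_succ (half_pos hu)).mul_left _)

lemma tsum_vonMangoldtTerm_le {u : ℝ} (hu : 0 < u) (hu1 : u ≤ 1) :
    ∑' n, vonMangoldtTerm u n ≤ 8 / u ^ 2 := by
  have hs := summable_vonMangoldtTerm hu
  rw [hs.tsum_eq_zero_add, vonMangoldtTerm_zero, zero_add]
  have h2 := (summable_rpow_succ (half_pos hu)).mul_left (2 / u)
  calc _ ≤ ∑' n : ℕ, 2 / u * ((n + 1 : ℕ) : ℝ) ^ (-(1 + u / 2)) :=
        ((summable_nat_add_iff 1).mpr hs).tsum_le_tsum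
          (fun n => vonMangoldtTerm_le hu n.succ_ne_zero) h2
    _ ≤ 2 / u * (2 / (u / 2)) := by
        rw [tsum_mul_left]
        gcongr
        exact tsum_rpow_succ_le (half_pos hu) (by linarith)
    _ = _ := by field_simp; norm_num

lemma hasSum_logDerivL {q : ℕ} [NeZero q] (χ : DirichletCharacter ℂ q) {u : ℝ} (hu : 0 < u) :
    HasSum (fun n : ℕ => -(χ n * (vonMangoldtTerm u n : ℂ))) (logDerivL χ (1 + u)) := by
  have hs : 1 < (1 + u : ℂ).re := by simp [hu]
  have h1 := (DirichletCharacter.LSeriesSummable_twist_vonMangoldt χ hs).hasSum.neg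
  have h2 := DirichletCharacter.LSeries_twist_vonMangoldt_eq χ hs
  have h3 : logDerivL χ (1 + u) = -∑' n, LSeries.term ((fun n : ℕ => χ n) *
      fun n : ℕ => (ArithmeticFunction.vonMangoldt n : ℂ)) (1 + u) n := by
    rw [logDerivL, DirichletCharacter.deriv_LFunction_eq_deriv_LSeries χ hs,
      DirichletCharacter.LFunction_eq_LSeries χ hs]
    have h2' := congrArg Neg.neg h2
    rw [neg_div, neg_neg] at h2'
    exact h2'.symm
  rw [h3]
  refine h1.congr_fun fun n => ?_
  congr 1
  rcases eq_or_ne n 0 with rfl | hn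
  · simp [vonMangoldtTerm_zero]
  · rw [LSeries.term_of_ne_zero hn, Pi.mul_apply, vonMangoldtTerm, Complex.ofReal_mul,
      Complex.ofReal_cpow (by positivity), div_eq_mul_inv, ← Complex.cpow_neg, mul_assoc]
    push_cast
    rfl

lemma norm_logDerivL_le {q : ℕ} [NeZero q] (χ : DirichletCharacter ℂ q) {u : ℝ} (hu : 0 < u)
    (hu1 : u ≤ 1) : ‖logDerivL χ (1 + u)‖ ≤ 8 / u ^ 2 := by
  rw [← (hasSum_logDerivL χ hu).tsum_eq]
  refine (tsum_of_norm_bounded (summable_vonMangoldtTerm hu).hasSum fun n => ?_).trans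
    (tsum_vonMangoldtTerm_le hu hu1)
  rw [norm_neg, norm_mul, Complex.norm_real, Real.norm_of_nonneg (vonMangoldtTerm_nonneg u n)]
  exact mul_le_of_le_one_left (vonMangoldtTerm_nonneg u n) (χ.norm_le_one _)

open Classical in
/-- Orthogonality turns the twisted sum of logarithmic derivatives into a sum over the integers
`n` with `n ^ r = -1` modulo `q`. -/
lemma norm_sum_mul_logDerivL_le {q r : ℕ} [Fact q.Prime] (hr : r ≠ 0) (hrq : r ∣ q - 1)
    {b : ZMod q} (hb : b ^ r = -1) {u : ℝ} (hu : 0 < u) (hu1 : u ≤ 1) :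
    ‖∑ χ ∈ (charsTrivialOnRoots q r).erase 1, χ b * logDerivL χ (1 + u)‖ ≤
      ((q - 1) / r : ℕ) *
        ∑' n : ℕ, (if (n : ZMod q) ^ r = -1 then vonMangoldtTerm u n else 0) + 8 / u ^ 2 := by
  have h1 : HasSum (fun n : ℕ => ∑ χ ∈ charsTrivialOnRoots q r,
      χ b * -(χ n * (vonMangoldtTerm u n : ℂ)))
      (∑ χ ∈ charsTrivialOnRoots q r, χ b * logDerivL χ (1 + u)) :=
    hasSum_sum fun χ _ => (hasSum_logDerivL χ hu).mul_left _
  have hs : Summable fun n : ℕ =>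
      (if (n : ZMod q) ^ r = -1 then vonMangoldtTerm u n else 0) := by
    refine Summable.of_nonneg_of_le (fun n => ?_) (fun n => ?_) (summable_vonMangoldtTerm hu)
    · split_ifs
      exacts [vonMangoldtTerm_nonneg u n, le_rfl]
    · split_ifs
      exacts [le_rfl, vonMangoldtTerm_nonneg u n]
  have h2 : ‖∑ χ ∈ charsTrivialOnRoots q r, χ b * logDerivL χ (1 + u)‖ ≤ ((q - 1) / r : ℕ) *
      ∑' n : ℕ, (if (n : ZMod q) ^ r = -1 then vonMangoldtTerm u n else 0) := by
    rw [← h1.tsum_eq]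
    refine tsum_of_norm_bounded (hs.hasSum.mul_left _) fun n => ?_
    have e : ∑ χ ∈ charsTrivialOnRoots q r, χ b * -(χ n * (vonMangoldtTerm u n : ℂ)) =
        -((vonMangoldtTerm u n : ℂ)) * ∑ χ ∈ charsTrivialOnRoots q r, χ (b * n) := by
      rw [Finset.mul_sum]
      refine Finset.sum_congr rfl fun χ _ => ?_
      rw [map_mul]
      ring
    rw [e, norm_mul, norm_neg, Complex.norm_real,
      Real.norm_of_nonneg (vonMangoldtTerm_nonneg u n)]
    by_cases hn : (n : ZMod q) ^ r = -1
    · rw [if_pos hn, mul_comm]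
      refine mul_le_mul_of_nonneg_right ?_ (vonMangoldtTerm_nonneg u n)
      refine (norm_sum_le_of_le _ fun χ _ => χ.norm_le_one (b * n)).trans ?_
      rw [Finset.sum_const, nsmul_eq_mul, mul_one]
      exact_mod_cast card_charsTrivialOnRoots_le hrq
    · rw [if_neg hn, sum_charsTrivialOnRoots_eq_zero hr, norm_zero, mul_zero, mul_zero]
      rw [mul_pow, hb]
      intro h
      exact hn (by linear_combination -h)
  have h3 := Finset.add_sum_erase (charsTrivialOnRoots q r)
    (fun χ => χ b * logDerivL χ (1 + u)) (one_mem_charsTrivialOnRoots (q := q) hr)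
  rw [← eq_sub_iff_add_eq'] at h3
  rw [h3]
  refine (norm_sub_le _ _).trans (add_le_add h2 ?_)
  rw [norm_mul]
  refine (mul_le_of_le_one_left (norm_nonneg _) (DirichletCharacter.norm_le_one _ _)).trans ?_
  exact norm_logDerivL_le _ hu hu1

lemma loglog_pos {q : ℕ} (hq : 3 ≤ q) : 0 < Real.log (Real.log q) := by
  refine Real.log_pos ?_
  have h : Real.exp 1 < q := by
    have := Real.exp_one_lt_d9
    have : (3 : ℝ) ≤ q := by exact_mod_cast hq
    linarith
  rwa [Real.lt_log_iff_exp_lt (by positivity)]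

lemma loglog_le {q : ℕ} (hq : 3 ≤ q) : Real.log (Real.log q) ≤ 2 * √(Real.log q) := by
  have h := Real.log_le_rpow_div (x := Real.log q) (ε := 1 / 2)
    (by linarith [one_le_log_of_three_le hq]) (by norm_num)
  rw [← Real.sqrt_eq_rpow] at h
  linarith

/-- If `q ^ (1 / r)` is not small against `log q` then `r` is small, and conversely. -/
lemma min_mul_log_le {q r : ℕ} (hq : 3 ≤ q) (hr : 1 ≤ r) {x : ℝ}
    (hx1 : x ≤ 2 * r / (q : ℝ) ^ ((1 : ℝ) / r)) (hx2 : x ≤ 2 * Real.log q) :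
    Real.log q * x ≤
      4 * (Real.log q ^ 3 / ((q : ℝ) ^ ((1 : ℝ) / r) * Real.log (Real.log q))) := by
  have hL := one_le_log_of_three_le hq
  have hl := loglog_pos hq
  have hl2 := loglog_le hq
  have hq0 : (0 : ℝ) < q := by positivity
  have hr0 : (0 : ℝ) < r := by exact_mod_cast hr
  have hy : 0 < (q : ℝ) ^ ((1 : ℝ) / r) := by positivity
  set L := Real.log q
  have hL0 : 0 ≤ L := by linarith
  set y := (q : ℝ) ^ ((1 : ℝ) / r) with hydef
  rw [← mul_div_assoc, le_div_iff₀ (by positivity)]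
  rcases le_total ((r : ℝ) * Real.log L) (2 * L) with h | h
  · rw [le_div_iff₀ hy] at hx1
    calc L * x * (y * Real.log L) = L * Real.log L * (x * y) := by ring
      _ ≤ L * Real.log L * (2 * r) := by gcongr
      _ = 2 * L * (r * Real.log L) := by ring
      _ ≤ 2 * L * (2 * L) := by gcongr
      _ = 4 * L ^ 2 := by ring
      _ ≤ 4 * L ^ 3 := by gcongr; norm_num
  · have hyL : y ≤ √L := by
      rw [Real.le_sqrt' hy, ← Real.log_le_log_iff (by positivity) (by positivity),
        Real.log_pow, hydef, Real.log_rpow hq0]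
      push_cast
      rw [one_div, ← mul_assoc, mul_comm (2 : ℝ), mul_assoc, inv_mul_le_iff₀ hr0]
      exact h
    have hyl : y * Real.log L ≤ 2 * L := by
      calc y * Real.log L ≤ √L * (2 * √L) := by gcongr
        _ = 2 * (√L * √L) := by ring
        _ = 2 * L := by rw [Real.mul_self_sqrt (by positivity)]
    calc L * x * (y * Real.log L) ≤ L * (2 * L) * (y * Real.log L) := by gcongr
      _ ≤ L * (2 * L) * (2 * L) := by gcongr
      _ = _ := by ring

lemma card_filter_pow_eq_le {q r : ℕ} [Fact q.Prime] (hr : 0 < r) (c : ZMod q) :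
    (Finset.univ.filter fun j : ZMod q => j ^ r = c).card ≤ r := by
  classical
  refine le_trans (Finset.card_le_card (t := (Polynomial.nthRoots r c).toFinset) fun j hj => ?_)
    ((Multiset.toFinset_card_le _).trans (Polynomial.card_nthRoots r c))
  simpa [Polynomial.mem_nthRoots hr] using hj

lemma inv_val_le {q r : ℕ} [Fact q.Prime] (hr : 1 ≤ r) {j : ZMod q} (hj : j ^ r = -1) :
    ((j.val : ℕ) : ℝ)⁻¹ ≤ 2 / (q : ℝ) ^ ((1 : ℝ) / r) := by
  have hq2 : 2 ≤ q := (Fact.out : q.Prime).two_le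
  have hr0 : (0 : ℝ) < r := by exact_mod_cast hr
  have h1 : q ≤ j.val ^ r + 1 := by
    refine Nat.le_of_dvd (Nat.succ_pos _) ?_
    rw [← ZMod.natCast_eq_zero_iff]
    push_cast
    rw [ZMod.natCast_zmod_val, hj, neg_add_cancel]
  have hpos : 0 < j.val := by
    rcases Nat.eq_zero_or_pos j.val with h | h
    · rw [h, zero_pow (by omega)] at h1
      omega
    · exact h
  have hp : (1 : ℝ) ≤ (j.val : ℝ) := by exact_mod_cast hpos
  have h2 : (q : ℝ) ≤ (2 * (j.val : ℝ)) ^ (r : ℝ) := by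
    rw [Real.rpow_natCast, mul_pow]
    have h1' : (q : ℝ) ≤ (j.val : ℝ) ^ r + 1 := by exact_mod_cast h1
    have h3 : (2 : ℝ) ≤ 2 ^ r := by
      calc (2 : ℝ) = 2 ^ 1 := by norm_num
        _ ≤ 2 ^ r := by gcongr; norm_num
    have h4 : (1 : ℝ) ≤ (j.val : ℝ) ^ r := one_le_pow₀ hp
    nlinarith
  have h3 : (q : ℝ) ^ ((1 : ℝ) / r) ≤ 2 * (j.val : ℝ) := by
    rw [one_div]
    exact (Real.rpow_inv_le_iff_of_pos (by positivity) (by positivity) hr0).mpr h2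
  rw [inv_eq_one_div, div_le_div_iff₀ (by linarith) (by positivity)]
  linarith

lemma sum_inv_val_le {q : ℕ} [Fact q.Prime] (hq : 3 ≤ q) (T : Finset (ZMod q)) :
    ∑ j ∈ T, ((j.val : ℕ) : ℝ)⁻¹ ≤ 2 * Real.log q := by
  have h1 : ∑ j ∈ T, ((j.val : ℕ) : ℝ)⁻¹ ≤ ∑ n ∈ Finset.range (q + 1), ((n : ℕ) : ℝ)⁻¹ := by
    rw [← Finset.sum_image (f := fun n : ℕ => (n : ℝ)⁻¹)
      fun x _ y _ h => ZMod.val_injective q h]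
    refine Finset.sum_le_sum_of_subset_of_nonneg (fun n hn => ?_) fun _ _ _ => by positivity
    obtain ⟨j, -, rfl⟩ := Finset.mem_image.mp hn
    exact Finset.mem_range.mpr ((ZMod.val_lt j).trans (Nat.lt_succ_self q))
  rw [Finset.sum_range_succ'] at h1
  have h2 := sum_inv_le_log (N := q)
  have := one_le_log_of_three_le hq
  simp only [Nat.cast_zero, inv_zero, add_zero] at h1
  linarith

lemma tsum_residueClass_le {q : ℕ} [NeZero q] (hq : 3 ≤ q) {j : ZMod q} (hj : j ≠ 0) {u : ℝ}
    (hu : 0 < u) (hu1 : u ≤ 1) :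
    ∑' m : ℕ, vonMangoldtTerm u (j.val + q * m) ≤
      Real.log q * (j.val : ℝ)⁻¹ + 8 / (q * u ^ 2) := by
  have hq0 : (0 : ℝ) < q := by positivity
  have hL := one_le_log_of_three_le hq
  have hv : j.val ≠ 0 := by rwa [Ne, ZMod.val_eq_zero]
  have hv1 : (1 : ℝ) ≤ j.val := by exact_mod_cast Nat.one_le_iff_ne_zero.mpr hv
  have hinj : Function.Injective fun m : ℕ => j.val + q * m := by
    intro a b h
    exact Nat.eq_of_mul_eq_mul_left (NeZero.pos q) (Nat.add_left_cancel h)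
  have hs : Summable fun m : ℕ => vonMangoldtTerm u (j.val + q * m) :=
    (summable_vonMangoldtTerm hu).comp_injective hinj
  rw [hs.tsum_eq_zero_add]
  have hb : ∀ m : ℕ, vonMangoldtTerm u (j.val + q * (m + 1)) ≤
      2 / u * (q : ℝ)⁻¹ * ((m + 1 : ℕ) : ℝ) ^ (-(1 + u / 2)) := by
    intro m
    refine (vonMangoldtTerm_le hu (by positivity)).trans ?_
    rw [mul_assoc]
    refine mul_le_mul_of_nonneg_left ?_ (by positivity)
    have hm : (0 : ℝ) < ((m + 1 : ℕ) : ℝ) := by positivity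
    calc ((j.val + q * (m + 1) : ℕ) : ℝ) ^ (-(1 + u / 2))
        ≤ ((q : ℝ) * ((m + 1 : ℕ) : ℝ)) ^ (-(1 + u / 2)) := by
          refine Real.rpow_le_rpow_of_nonpos (by positivity) ?_ (by linarith)
          push_cast
          linarith
      _ = (q : ℝ) ^ (-(1 + u / 2)) * ((m + 1 : ℕ) : ℝ) ^ (-(1 + u / 2)) :=
          Real.mul_rpow hq0.le hm.le
      _ ≤ (q : ℝ)⁻¹ * ((m + 1 : ℕ) : ℝ) ^ (-(1 + u / 2)) := by
          gcongr
          rw [← Real.rpow_neg_one]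
          refine Real.rpow_le_rpow_of_exponent_le ?_ (by linarith)
          have : (3 : ℝ) ≤ q := by exact_mod_cast hq
          linarith
  have hs2 := (summable_rpow_succ (half_pos hu)).mul_left (2 / u * (q : ℝ)⁻¹)
  refine add_le_add ?_ ?_
  · rw [mul_zero, add_zero, vonMangoldtTerm]
    have h1 : ArithmeticFunction.vonMangoldt j.val ≤ Real.log q :=
      ArithmeticFunction.vonMangoldt_le_log.trans
        (Real.log_le_log (by linarith) (by exact_mod_cast (ZMod.val_lt j).le))
    have h2 : (j.val : ℝ) ^ (-(1 + u)) ≤ (j.val : ℝ)⁻¹ := by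
      rw [← Real.rpow_neg_one]
      exact Real.rpow_le_rpow_of_exponent_le hv1 (by linarith)
    gcongr
  · calc _ ≤ ∑' m : ℕ, 2 / u * (q : ℝ)⁻¹ * ((m + 1 : ℕ) : ℝ) ^ (-(1 + u / 2)) :=
          ((summable_nat_add_iff 1).mpr hs).tsum_le_tsum hb hs2
      _ ≤ 2 / u * (q : ℝ)⁻¹ * (2 / (u / 2)) := by
          rw [tsum_mul_left]
          gcongr
          exact tsum_rpow_succ_le (half_pos hu) (by linarith)
      _ = _ := by field_simp; norm_num

open Classical in
/-- The sum over prime powers `n` with `n ^ r = -1` modulo `q`. -/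
lemma tsum_pow_eq_neg_one_le {q r : ℕ} [Fact q.Prime] (hq : 3 ≤ q) (hr : 1 ≤ r) {u : ℝ}
    (hu : 0 < u) (hu1 : u ≤ 1) :
    ∑' n : ℕ, (if (n : ZMod q) ^ r = -1 then vonMangoldtTerm u n else 0) ≤
      4 * (Real.log q ^ 3 / ((q : ℝ) ^ ((1 : ℝ) / r) * Real.log (Real.log q))) +
        r * (8 / (q * u ^ 2)) := by
  have hL := one_le_log_of_three_le hq
  have hs : Summable fun n : ℕ =>
      (if (n : ZMod q) ^ r = -1 then vonMangoldtTerm u n else 0) := by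
    refine Summable.of_nonneg_of_le (fun n => ?_) (fun n => ?_) (summable_vonMangoldtTerm hu)
    · split_ifs
      exacts [vonMangoldtTerm_nonneg u n, le_rfl]
    · split_ifs
      exacts [le_rfl, vonMangoldtTerm_nonneg u n]
  rw [Nat.sumByResidueClasses hs q]
  set T := Finset.univ.filter fun j : ZMod q => j ^ r = -1 with hT
  have h1 : ∀ j : ZMod q, ∑' m : ℕ, (if ((j.val + q * m : ℕ) : ZMod q) ^ r = -1 then
      vonMangoldtTerm u (j.val + q * m) else 0) ≤
      if j ^ r = -1 then Real.log q * (j.val : ℝ)⁻¹ + 8 / (q * u ^ 2) else 0 := by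
    intro j
    have hc : ∀ m : ℕ, ((j.val + q * m : ℕ) : ZMod q) = j := by
      intro m
      push_cast
      rw [ZMod.natCast_zmod_val, ZMod.natCast_self, zero_mul, add_zero]
    simp only [hc]
    split_ifs with h
    · refine tsum_residueClass_le hq ?_ hu hu1
      rintro rfl
      rw [zero_pow (by omega)] at h
      simp at h
    · simp
  refine (Finset.sum_le_sum fun j _ => h1 j).trans ?_
  rw [← Finset.sum_filter, Finset.sum_add_distrib, ← Finset.mul_sum, Finset.sum_const,
    nsmul_eq_mul]
  have hcard : ((T.card : ℕ) : ℝ) ≤ r := by exact_mod_cast card_filter_pow_eq_le hr (-1)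
  refine add_le_add (min_mul_log_le hq hr ?_ (sum_inv_val_le hq T)) (by gcongr)
  calc ∑ j ∈ T, ((j.val : ℕ) : ℝ)⁻¹ ≤ ∑ j ∈ T, 2 / (q : ℝ) ^ ((1 : ℝ) / r) :=
        Finset.sum_le_sum fun j hj => inv_val_le hr (Finset.mem_filter.mp hj).2
    _ = T.card * (2 / (q : ℝ) ^ ((1 : ℝ) / r)) := by rw [Finset.sum_const, nsmul_eq_mul]
    _ ≤ r * (2 / (q : ℝ) ^ ((1 : ℝ) / r)) := by gcongr
    _ = _ := by ring

/-- The error term of the main theorem. -/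
noncomputable def errorTerm (q r : ℕ) : ℝ :=
  Real.log q ^ 3 / ((q : ℝ) ^ ((1 : ℝ) / r) * Real.log (Real.log q))
    + r * Real.log q ^ 2 / Real.sqrt q

/-- The value at `1` minus its cubic extrapolation from `1 + δ`, `1 + 2δ` and `1 + 3δ`. -/
noncomputable def extrapolationError (f : ℂ → ℂ) (δ : ℝ) : ℂ :=
  f 1 - (3 * f (1 + δ) - 3 * f (1 + 2 * δ) + f (1 + 3 * δ))

lemma norm_extrapolationError_le_of_sq_ne_one {q : ℕ} [NeZero q] (hq : 3 ≤ q)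
    {χ : DirichletCharacter ℂ q} (hχ : χ ^ 2 ≠ 1) {δ : ℝ} (hδ : 0 ≤ δ)
    (hδx : δ ≤ (1 / (2 ^ 40 * Real.log q ^ 9)) ^ 4) :
    ‖extrapolationError (logDerivL χ) δ‖ ≤ 172 * δ ^ 2 := by
  have hL := one_le_log_of_three_le hq
  set x := 1 / (2 ^ 40 * Real.log q ^ 9) with hx
  have hx0 : 0 < x := by positivity
  have hx1 : x ≤ 1 / 2 ^ 40 := by
    rw [hx]
    gcongr
    exact le_mul_of_one_le_right (by norm_num) (one_le_pow₀ hL)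
  have hδ7 : δ ≤ x / 7 := by
    refine hδx.trans ?_
    have h3 : x ^ 3 ≤ (1 / 2 ^ 40) ^ 3 := by gcongr
    calc x ^ 4 = x * x ^ 3 := by ring
      _ ≤ x * (1 / 2 ^ 40) ^ 3 := by gcongr
      _ ≤ x * (1 / 7) := by gcongr; norm_num
      _ = x / 7 := by ring
  have hb : ∀ s : ℂ, ‖s - 1‖ ≤ x → DirichletCharacter.LFunction χ s ≠ 0 ∧
      ‖deriv (DirichletCharacter.LFunction χ) s / DirichletCharacter.LFunction χ s‖ ≤
        1 / (2 * x) := fun s hs => logDeriv_LFunction_bound_of_sq_ne_one hq hχ hx hs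
  have hχ1 : χ ≠ 1 := by
    rintro rfl
    exact hχ (one_pow 2)
  have hd : Differentiable ℂ (DirichletCharacter.LFunction χ) :=
    DirichletCharacter.differentiable_LFunction hχ1
  have hmem : ∀ s ∈ Metric.ball (1 : ℂ) x, ‖s - 1‖ ≤ x := fun s hs =>
    (mem_ball_iff_norm.mp hs).le
  have h := norm_third_diff_le (f := logDerivL χ) hx0 hδ hδ7
    (fun s hs => ((hd.deriv.differentiableAt).div hd.differentiableAt
      (hb s (hmem s hs)).1).differentiableWithinAt) fun s hs => (hb s (hmem s hs)).2
  refine h.trans ?_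
  calc 1 / (2 * x) * (7 / x) ^ 3 * δ ^ 3 = 343 / 2 * (δ / x ^ 4) * δ ^ 2 := by
        field_simp; ring
    _ ≤ 343 / 2 * 1 * δ ^ 2 := by
        gcongr
        rw [div_le_one (by positivity)]
        exact hδx
    _ ≤ _ := by nlinarith [sq_nonneg δ]

lemma norm_extrapolation_le {a b c : ℂ} {M : ℝ} (ha : ‖a‖ ≤ M) (hb : ‖b‖ ≤ M) (hc : ‖c‖ ≤ M) :
    ‖3 * a - 3 * b + c‖ ≤ 7 * M := by
  calc ‖3 * a - 3 * b + c‖ ≤ ‖3 * a‖ + ‖3 * b‖ + ‖c‖ :=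
        (norm_add_le _ _).trans (by gcongr; exact norm_sub_le _ _)
    _ = 3 * ‖a‖ + 3 * ‖b‖ + ‖c‖ := by simp
    _ ≤ _ := by linarith

lemma norm_extrapolationError_le_of_sq_eq_one {q : ℕ} [Fact q.Prime] (hq : 3 ≤ q)
    {χ : DirichletCharacter ℂ q} (hχ : χ ≠ 1) (hχ2 : χ ^ 2 = 1) {δ : ℝ} (hδ : 0 < δ)
    (hδ1 : 3 * δ ≤ 1) :
    ‖extrapolationError (logDerivL χ) δ‖ ≤ 40960 * √q * Real.log q ^ 2 + 56 / δ ^ 2 := by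
  have h1 : ∀ u : ℝ, δ ≤ u → u ≤ 1 → ‖logDerivL χ (1 + u)‖ ≤ 8 / δ ^ 2 := fun u hu hu1 =>
    (norm_logDerivL_le χ (hδ.trans_le hu) hu1).trans (by gcongr)
  have a := h1 δ le_rfl (by linarith)
  have b := h1 (2 * δ) (by linarith) (by linarith)
  have c := h1 (3 * δ) (by linarith) (by linarith)
  push_cast at a b c
  refine (norm_sub_le _ _).trans (add_le_add (norm_logDeriv_one_le_of_sq_eq_one hq hχ hχ2) ?_)
  refine (norm_extrapolation_le a b c).trans (le_of_eq ?_)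
  ring

/-- The twisted sum of the logarithmic derivatives at `1`. -/
lemma norm_sum_mul_logDerivL_one_le {q r : ℕ} [Fact q.Prime] (hq : 3 ≤ q) (hr : 1 ≤ r)
    (hrq : r ∣ q - 1) {b : ZMod q} (hb : b ^ r = -1)
    (hqL : 2 ^ 160 * Real.log q ^ 36 ≤ (q : ℝ) ^ ((1 : ℝ) / 4)) :
    1 / (((q - 1) / r : ℕ) : ℝ) *
      ‖∑ χ ∈ (charsTrivialOnRoots q r).erase 1, χ b * logDerivL χ 1‖ ≤
      200000 * errorTerm q r := by
  classical
  have hL := one_le_log_of_three_le hq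
  have hl := loglog_pos hq
  have hq0 : (0 : ℝ) < q := by positivity
  have hr0 : (1 : ℝ) ≤ r := by exact_mod_cast hr
  have hsq : 0 < √(q : ℝ) := Real.sqrt_pos.mpr hq0
  set L := Real.log q with hLdef
  set δ : ℝ := ((q : ℝ) ^ ((1 : ℝ) / 4))⁻¹ with hδdef
  have hδ : 0 < δ := by positivity
  have hδ2 : δ ^ 2 = (√q)⁻¹ := by
    rw [hδdef, inv_pow, ← Real.rpow_natCast, ← Real.rpow_mul hq0.le, Real.sqrt_eq_rpow]
    norm_num
  have hδx : δ ≤ (1 / (2 ^ 40 * L ^ 9)) ^ 4 := by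
    have e : (1 / (2 ^ 40 * L ^ 9)) ^ 4 = (2 ^ 160 * L ^ 36)⁻¹ := by
      field_simp
    rw [e]
    exact inv_anti₀ (by positivity) hqL
  have hδ1 : 3 * δ ≤ 1 := by
    have h1 : (3 : ℝ) ≤ 2 ^ 160 * L ^ 36 := by
      have : (1 : ℝ) ≤ L ^ 36 := one_le_pow₀ hL
      norm_num
      linarith
    have : δ ≤ 1 / 3 := by
      rw [hδdef, one_div (3 : ℝ)]
      exact inv_anti₀ (by norm_num) (h1.trans hqL)
    linarith
  set Y := (charsTrivialOnRoots q r).erase 1 with hY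
  set h : ℕ := (q - 1) / r with hh
  set E1 := L ^ 3 / ((q : ℝ) ^ ((1 : ℝ) / r) * Real.log L) with hE1
  have hE1pos : 0 ≤ E1 := by positivity
  have hq1 : 0 < q - 1 := by omega
  have hh0 : 0 < h := Nat.div_pos (Nat.le_of_dvd hq1 hrq) hr
  have hhr : (h : ℝ) * r = q - 1 := by
    have : h * r = q - 1 := Nat.div_mul_cancel hrq
    have h2 : ((h * r : ℕ) : ℝ) = ((q - 1 : ℕ) : ℝ) := by rw [this]
    rw [Nat.cast_mul, Nat.cast_sub (by omega), Nat.cast_one] at h2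
    exact h2
  have hh0' : (0 : ℝ) < h := by exact_mod_cast hh0
  have hshift : ∀ u : ℝ, δ ≤ u → u ≤ 1 → ‖∑ χ ∈ Y, χ b * logDerivL χ (1 + u)‖ ≤
      h * (4 * E1 + 8 * r / √q) + 8 * √q := by
    intro u hu hu1
    have hu0 := hδ.trans_le hu
    have hu2 : (√q)⁻¹ ≤ u ^ 2 := by rw [← hδ2]; gcongr
    refine (norm_sum_mul_logDerivL_le (by omega) hrq hb hu0 hu1).trans ?_
    have hA := tsum_pow_eq_neg_one_le (r := r) hq hr hu0 hu1
    have h8 : 8 / u ^ 2 ≤ 8 * √q := by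
      calc 8 / u ^ 2 ≤ 8 / (√q)⁻¹ := by gcongr
        _ = _ := by rw [div_inv_eq_mul]
    have h9 : r * (8 / (q * u ^ 2)) ≤ 8 * r / √q := by
      calc r * (8 / (q * u ^ 2)) ≤ r * (8 / (q * (√q)⁻¹)) := by gcongr
        _ = _ := by
          rw [← div_eq_mul_inv, Real.div_sqrt]; ring
    gcongr
    exact hA.trans (by gcongr)
  have a := hshift δ le_rfl (by linarith)
  have b' := hshift (2 * δ) (by linarith) (by linarith)
  have c := hshift (3 * δ) (by linarith) (by linarith)
  push_cast at a b' c
  have habc := norm_extrapolation_le a b' c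
  have hE : ‖∑ χ ∈ Y, χ b * extrapolationError (logDerivL χ) δ‖ ≤
      h * (172 / √q) + 2 * (40960 * √q * L ^ 2 + 56 * √q) := by
    have hterm : ∀ χ ∈ Y, ‖χ b * extrapolationError (logDerivL χ) δ‖ ≤
        172 / √q + if χ ^ 2 = 1 then 40960 * √q * L ^ 2 + 56 * √q else 0 := by
      intro χ hχ
      rw [norm_mul]
      refine (mul_le_of_le_one_left (norm_nonneg _) (χ.norm_le_one b)).trans ?_
      split_ifs with h2
      · have := norm_extrapolationError_le_of_sq_eq_one hq (Finset.ne_of_mem_erase hχ) h2 hδ hδ1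
        rw [hδ2, div_inv_eq_mul] at this
        have h0 : 0 ≤ 172 / √(q : ℝ) := by positivity
        linarith
      · have := norm_extrapolationError_le_of_sq_ne_one hq h2 hδ.le hδx
        rw [hδ2, ← div_eq_mul_inv] at this
        rwa [add_zero]
    refine (norm_sum_le_of_le _ hterm).trans ?_
    rw [Finset.sum_add_distrib, ← Finset.sum_filter, Finset.sum_const, Finset.sum_const,
      nsmul_eq_mul, nsmul_eq_mul]
    have hc1 : ((Y.card : ℕ) : ℝ) ≤ h := by
      exact_mod_cast (Finset.card_le_card (Finset.erase_subset _ _)).trans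
        (card_charsTrivialOnRoots_le hrq)
    have hc2 : (((Y.filter fun χ => χ ^ 2 = 1).card : ℕ) : ℝ) ≤ 2 := by
      exact_mod_cast card_filter_sq_eq_one_le Y
    gcongr
  have hdecomp : ∑ χ ∈ Y, χ b * logDerivL χ 1 =
      ∑ χ ∈ Y, χ b * extrapolationError (logDerivL χ) δ +
      (3 * ∑ χ ∈ Y, χ b * logDerivL χ (1 + δ) - 3 * ∑ χ ∈ Y, χ b * logDerivL χ (1 + 2 * δ) +
        ∑ χ ∈ Y, χ b * logDerivL χ (1 + 3 * δ)) := by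
    rw [Finset.mul_sum, Finset.mul_sum, ← Finset.sum_sub_distrib, ← Finset.sum_add_distrib,
      ← Finset.sum_add_distrib]
    refine Finset.sum_congr rfl fun χ _ => ?_
    rw [extrapolationError]
    ring
  have htot : ‖∑ χ ∈ Y, χ b * logDerivL χ 1‖ ≤
      h * (28 * E1 + 56 * r / √q + 172 / √q) + 82088 * (√q * L ^ 2) := by
    rw [hdecomp]
    refine (norm_add_le _ _).trans ((add_le_add hE habc).trans ?_)
    have h2 : √(q : ℝ) ≤ √q * L ^ 2 := le_mul_of_one_le_right hsq.le (one_le_pow₀ hL)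
    have e : h * (172 / √q) + 2 * (40960 * √q * L ^ 2 + 56 * √q) +
        7 * (h * (4 * E1 + 8 * r / √q) + 8 * √q) =
        h * (28 * E1 + 56 * r / √q + 172 / √q) + 81920 * (√q * L ^ 2) + 168 * √q := by ring
    rw [e]
    linarith
  have hhinv : √(q : ℝ) / h ≤ 2 * r / √q := by
    rw [div_le_div_iff₀ hh0' hsq, Real.mul_self_sqrt hq0.le]
    have : (3 : ℝ) ≤ q := by exact_mod_cast hq
    have e : 2 * (r : ℝ) * h = 2 * (h * r) := by ring
    rw [e, hhr]
    linarith
  have hr2 : 1 / √(q : ℝ) ≤ r * L ^ 2 / √q := by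
    gcongr
    have : (1 : ℝ) ≤ L ^ 2 := one_le_pow₀ hL
    nlinarith
  have hr3 : (r : ℝ) / √q ≤ r * L ^ 2 / √q := by
    gcongr
    exact le_mul_of_one_le_right (by linarith) (one_le_pow₀ hL)
  calc 1 / (h : ℝ) * ‖∑ χ ∈ Y, χ b * logDerivL χ 1‖
      ≤ 1 / (h : ℝ) * (h * (28 * E1 + 56 * r / √q + 172 / √q) + 82088 * (√q * L ^ 2)) := by
        gcongr
    _ = 28 * E1 + 56 * (r / √q) + 172 * (1 / √q) + 82088 * L ^ 2 * (√q / h) := by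
        field_simp
    _ ≤ 28 * E1 + 56 * (r * L ^ 2 / √q) + 172 * (r * L ^ 2 / √q) +
        82088 * L ^ 2 * (2 * r / √q) := by gcongr
    _ = 28 * E1 + 164404 * (r * L ^ 2 / √q) := by ring
    _ ≤ 200000 * (E1 + r * L ^ 2 / √q) := by
        have : 0 ≤ r * L ^ 2 / √q := by positivity
        linarith
    _ = _ := rfl

lemma natCast_mul_log_div_pow_antitone {p : ℕ} (hp : 2 ≤ p) {a b : ℕ} (ha : 1 ≤ a)
    (hab : a ≤ b) : (b : ℝ) * Real.log p / (p : ℝ) ^ b ≤ a * Real.log p / (p : ℝ) ^ a := by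
  have hp2 : (2 : ℝ) ≤ p := by exact_mod_cast hp
  have hlog : 0 ≤ Real.log p := Real.log_natCast_nonneg p
  induction b, hab using Nat.le_induction with
  | base => exact le_rfl
  | succ n hn ih =>
    refine le_trans ?_ ih
    have hn1 : (1 : ℝ) ≤ n := by exact_mod_cast ha.trans hn
    have hpn : (0 : ℝ) < (p : ℝ) ^ n := by positivity
    rw [div_le_div_iff₀ (by positivity) hpn, pow_succ]
    push_cast
    calc ((n : ℝ) + 1) * Real.log p * (p : ℝ) ^ n ≤ (n * 2) * Real.log p * (p : ℝ) ^ n := by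
          gcongr; linarith
      _ ≤ (n * p) * Real.log p * (p : ℝ) ^ n := by gcongr
      _ = _ := by ring

lemma natCast_mul_log_div_pow_sub_one_le {p : ℕ} (hp : 2 ≤ p) {n : ℕ} (hn : 1 ≤ n) :
    0 ≤ (n : ℝ) * Real.log p / ((p : ℝ) ^ n - 1) ∧
    (n : ℝ) * Real.log p / ((p : ℝ) ^ n - 1) ≤ 2 * (n * Real.log p / (p : ℝ) ^ n) := by
  have hp2 : (2 : ℝ) ≤ p := by exact_mod_cast hp
  have hlog : 0 ≤ Real.log p := Real.log_natCast_nonneg p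
  have h2 : (2 : ℝ) ≤ (p : ℝ) ^ n := hp2.trans (le_self_pow₀ (by linarith) (by omega))
  refine ⟨div_nonneg (by positivity) (by linarith), ?_⟩
  rw [← mul_div_assoc, div_le_div_iff₀ (by linarith) (by linarith)]
  have : 0 ≤ (n : ℝ) * Real.log p := by positivity
  nlinarith

lemma abs_sub_log_div_pow_le {p : ℕ} (hp : 2 ≤ p) {n : ℕ} (hn : 2 ≤ n) :
    |(n : ℝ) * Real.log p / ((p : ℝ) ^ n - 1)
      - ((n : ℝ) - 1) * Real.log p / ((p : ℝ) ^ (n - 1) - 1)| ≤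
    2 * (((n - 1 : ℕ) : ℝ) * Real.log p / (p : ℝ) ^ (n - 1)) := by
  have h1 := natCast_mul_log_div_pow_sub_one_le hp (n := n) (by omega)
  have h2 := natCast_mul_log_div_pow_sub_one_le hp (n := n - 1) (by omega)
  have h3 := natCast_mul_log_div_pow_antitone hp (a := n - 1) (b := n) (by omega) (by omega)
  have e : ((n : ℝ) - 1) = ((n - 1 : ℕ) : ℝ) := by rw [Nat.cast_sub (by omega), Nat.cast_one]
  rw [e, abs_le]
  constructor <;> linarith [h1.1, h1.2, h2.1, h2.2]

lemma le_two_mul_pow_of_orderOf {q r p : ℕ} [Fact q.Prime] (hr : 1 ≤ r) (hp : 2 ≤ p)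
    (hg : 2 ≤ gp q r p) : q ≤ 2 * p ^ ((gp q r p - 1) * r) := by
  set g := gp q r p with hgdef
  have hx1 : (p : ZMod q) ^ r ≠ 1 := by
    intro h
    rw [hgdef, gp, h, orderOf_one] at hg
    omega
  have hxg : ((p : ZMod q) ^ r) ^ g = 1 := pow_orderOf_eq_one _
  have h0 : ∑ i ∈ Finset.range g, ((p : ZMod q) ^ r) ^ i = 0 := by
    have h := geom_sum_mul ((p : ZMod q) ^ r) g
    rw [hxg, sub_self] at h
    exact (mul_eq_zero.mp h).resolve_right (sub_ne_zero.mpr hx1)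
  have hdvd : q ∣ ∑ i ∈ Finset.range g, (p ^ r) ^ i := by
    rw [← ZMod.natCast_eq_zero_iff]
    push_cast
    exact h0
  have hX : 2 ≤ p ^ r := hp.trans (Nat.le_self_pow (by omega) p)
  have hle := Nat.le_of_dvd (Finset.sum_pos (fun i _ => by positivity) ⟨0, by simp; omega⟩) hdvd
  obtain ⟨m, hm⟩ : ∃ m, g = m + 1 := ⟨g - 1, by omega⟩
  rw [hm, Finset.sum_range_succ] at hle
  have h1 := Nat.geomSum_lt hX (s := Finset.range m) (n := m) fun k hk => Finset.mem_range.mp hk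
  rw [hm, Nat.add_sub_cancel, mul_comm m r, pow_mul]
  omega

lemma le_two_mul_pow_of_orderOf_even {q r p m : ℕ} [Fact q.Prime] (hp : 2 ≤ p)
    (hm : 1 ≤ m) (hg : gp q r p = 2 * m) : q ≤ 2 * p ^ (m * r) := by
  have hxg : ((p : ZMod q) ^ r) ^ (2 * m) = 1 := by rw [← hg]; exact pow_orderOf_eq_one _
  have hne : ((p : ZMod q) ^ r) ^ m ≠ 1 := by
    intro h
    have := Nat.le_of_dvd hm (orderOf_dvd_of_pow_eq_one h)
    rw [← gp, hg] at this
    omega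
  rw [mul_comm, pow_mul, sq_eq_one_iff] at hxg
  have h := hxg.resolve_left hne
  have hdvd : q ∣ p ^ (m * r) + 1 := by
    rw [← ZMod.natCast_eq_zero_iff]
    push_cast
    rw [mul_comm, pow_mul, h, neg_add_cancel]
  have := Nat.le_of_dvd (Nat.succ_pos _) hdvd
  have : 1 ≤ p ^ (m * r) := Nat.one_le_pow _ _ (by omega)
  omega

/-- Each local term is controlled by `e log p / p ^ e` for a suitable exponent `e`. -/
lemma exists_Sterm_le {q r p : ℕ} [Fact q.Prime] (hq : 3 ≤ q) (hr : 1 ≤ r) (hp : p.Prime)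
    (hpq : p ≠ q) : ∃ e : ℕ, 2 ≤ e ∧
      |Sterm q r p| ≤ 3 * (e * Real.log p / (p : ℝ) ^ e) ∧ q ≤ 2 * p ^ (e * r) ∧
      ((p : ZMod q) ^ (2 * e * r) = 1 ∨ (p : ZMod q) ^ ((e + 1) * r) = 1) := by
  have hp2 := hp.two_le
  have hp2' : (2 : ℝ) ≤ p := by exact_mod_cast hp2
  have hlog : 0 ≤ Real.log p := Real.log_natCast_nonneg p
  have hnn : ∀ e : ℕ, 0 ≤ (e : ℝ) * Real.log p / (p : ℝ) ^ e := fun e => by positivity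
  have hp0 : (p : ZMod q) ≠ 0 := by
    rw [Ne, ZMod.natCast_eq_zero_iff, Nat.prime_dvd_prime_iff_eq Fact.out hp]
    exact hpq.symm
  have hgpos : 0 < gp q r p := by
    rw [gp, orderOf_pos_iff]
    exact isOfFinOrder_iff_pow_eq_one.mpr ⟨q - 1, by omega, by
      rw [← pow_mul, mul_comm, pow_mul, ZMod.pow_card_sub_one_eq_one hp0, one_pow]⟩
  have hxg : (p : ZMod q) ^ (gp q r p * r) = 1 := by
    rw [mul_comm, pow_mul]
    exact pow_orderOf_eq_one _
  have hgeom : 2 ≤ gp q r p → q ≤ 2 * p ^ ((gp q r p - 1) * r) :=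
    le_two_mul_pow_of_orderOf hr hp2
  have heven : ∀ m, 1 ≤ m → gp q r p = 2 * m → q ≤ 2 * p ^ (m * r) := fun m hm h =>
    le_two_mul_pow_of_orderOf_even hp2 hm h
  rw [Sterm, if_neg hpq]
  generalize gp q r p = g at *
  rcases (by omega : g = 1 ∨ g = 2 ∨ g = 3 ∨ (4 ≤ g ∧ 2 ∣ g) ∨ (4 ≤ g ∧ ¬ 2 ∣ g)) with
    h | h | h | h | h
  · subst h
    refine ⟨q - 1, by omega, ?_, ?_, Or.inl ?_⟩
    · have h1 := abs_sub_log_div_pow_le hp2 (n := q) (by omega)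
      simp only [if_true, Nat.not_ofNat_le_one, if_false, OfNat.one_ne_ofNat, false_and, add_zero]
      linarith [hnn (q - 1)]
    · rw [one_mul] at hxg
      have hdvd : q ∣ p ^ r - 1 := by
        rw [← ZMod.natCast_eq_zero_iff, Nat.cast_sub (Nat.one_le_pow _ _ (by omega))]
        push_cast
        rw [hxg, sub_self]
      have h2 : 2 ≤ p ^ r := hp2.trans (Nat.le_self_pow (by omega) p)
      have h3 := Nat.le_of_dvd (by omega) hdvd
      have h4 : p ^ r ≤ p ^ ((q - 1) * r) :=
        Nat.pow_le_pow_right (by omega) (Nat.le_mul_of_pos_left r (by omega))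
      omega
    · rw [one_mul] at hxg
      rw [mul_comm, pow_mul, hxg, one_pow]
  · subst h
    refine ⟨2, le_rfl, ?_, ?_, Or.inl ?_⟩
    · have h1 := natCast_mul_log_div_pow_sub_one_le hp2 (n := 2) (by omega)
      norm_num at h1 ⊢
      rw [abs_of_nonneg (div_nonneg hlog (by nlinarith))]
      have e : 2 * Real.log p / ((p : ℝ) ^ 2 - 1) = 2 * (Real.log p / ((p : ℝ) ^ 2 - 1)) := by
        ring
      have := hnn 2
      push_cast at this
      linarith [h1.1, h1.2]
    · have := hgeom le_rfl
      have h4 : p ^ ((2 - 1) * r) ≤ p ^ (2 * r) := Nat.pow_le_pow_right (by omega) (by omega)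
      omega
    · rw [mul_assoc, mul_comm, pow_mul, hxg, one_pow]
  · subst h
    refine ⟨2, le_rfl, ?_, hgeom (by omega), Or.inr hxg⟩
    have h1 := abs_sub_log_div_pow_le hp2 (n := 3) (by omega)
    have := hnn 2
    norm_num at h1 this ⊢
    linarith
  · obtain ⟨h4, m, rfl⟩ := h
    have hm2 : 2 ≤ m := by omega
    refine ⟨m, hm2, ?_, heven m (by omega) rfl, Or.inl hxg⟩
    have h1 := abs_sub_log_div_pow_le hp2 (n := 2 * m) (by omega)
    have h2 := natCast_mul_log_div_pow_antitone hp2 (a := m) (b := 2 * m - 1)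
      (by omega) (by omega)
    rw [if_neg (by omega), if_pos (by omega), if_neg (by omega), if_pos ⟨h4, ⟨m, rfl⟩⟩,
      Nat.mul_div_cancel_left m two_pos]
    have hP : (4 : ℝ) ≤ (p : ℝ) ^ m := by
      calc (4 : ℝ) = 2 ^ 2 := by norm_num
        _ ≤ 2 ^ m := by gcongr; norm_num
        _ ≤ _ := by gcongr
    have hPinv : ((p : ℝ) ^ m)⁻¹ ≤ 1 := inv_le_one_of_one_le₀ (by linarith)
    have h3 : Real.log p / ((p : ℝ) ^ m - ((p : ℝ) ^ m)⁻¹) ≤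
        (m : ℝ) * Real.log p / (p : ℝ) ^ m := by
      rw [div_le_div_iff₀ (by linarith) (by linarith)]
      have hm2' : (2 : ℝ) ≤ m := by exact_mod_cast hm2
      calc Real.log p * (p : ℝ) ^ m ≤ Real.log p * (2 * ((p : ℝ) ^ m - ((p : ℝ) ^ m)⁻¹)) := by
            gcongr; linarith
        _ = 2 * Real.log p * ((p : ℝ) ^ m - ((p : ℝ) ^ m)⁻¹) := by ring
        _ ≤ m * Real.log p * ((p : ℝ) ^ m - ((p : ℝ) ^ m)⁻¹) := by
            gcongr
            linarith
    have h5 : 0 ≤ Real.log p / ((p : ℝ) ^ m - ((p : ℝ) ^ m)⁻¹) :=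
      div_nonneg hlog (by linarith)
    rw [abs_le] at h1 ⊢
    constructor <;> linarith [h1.1, h1.2]
  · refine ⟨g - 1, by omega, ?_, hgeom (by omega), Or.inr ?_⟩
    · have h1 := abs_sub_log_div_pow_le hp2 (n := g) (by omega)
      rw [if_neg (by omega), if_pos (by omega), if_neg (by omega), if_neg (by tauto)]
      rw [zero_add, add_zero, add_zero]
      linarith [hnn (g - 1)]
    · rwa [Nat.sub_add_cancel (by omega)]

lemma log_div_sq_le {n : ℕ} (hn : 1 ≤ n) :
    Real.log n / (n : ℝ) ^ 2 ≤ 2 * (n : ℝ) ^ (-(3 / 2) : ℝ) := by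
  have hn0 : (0 : ℝ) < n := by exact_mod_cast hn
  have h := Real.log_le_rpow_div (x := (n : ℝ)) (ε := 1 / 2) hn0.le (by norm_num)
  have e : (n : ℝ) ^ (-(3 / 2) : ℝ) = (n : ℝ) ^ ((1 : ℝ) / 2) / (n : ℝ) ^ 2 := by
    rw [← Real.rpow_natCast (n : ℝ) 2, ← Real.rpow_sub hn0]
    norm_num
  rw [e, ← mul_div_assoc]
  gcongr
  linarith

lemma summable_rpow_three_halves : Summable fun n : ℕ => (n : ℝ) ^ (-(3 / 2) : ℝ) :=
  Real.summable_nat_rpow.mpr (by norm_num)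

lemma tsum_rpow_three_halves_le : ∑' n : ℕ, (n : ℝ) ^ (-(3 / 2) : ℝ) ≤ 4 := by
  rw [summable_rpow_three_halves.tsum_eq_zero_add]
  have h := tsum_rpow_succ_le (x := 1 / 2) (by norm_num) (by norm_num)
  norm_num at h ⊢
  exact h

lemma abs_Smq_le {q r : ℕ} {B : ℕ → ℝ} (hB : Summable B) (hB0 : ∀ n, 0 ≤ B n)
    (h : ∀ p : ℕ, p.Prime → |Sterm q r p| ≤ B p) : |Smq q r| ≤ ∑' n, B n := by
  have h1 : Summable fun p : Nat.Primes => B p :=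
    hB.comp_injective Nat.Primes.coe_nat_injective
  rw [Smq, ← Real.norm_eq_abs]
  refine (tsum_of_norm_bounded h1.hasSum fun p => h p p.2).trans ?_
  exact tsum_comp_le_tsum_of_inj hB hB0 Nat.Primes.coe_nat_injective

lemma natCast_mul_log_div_pow_le {p e : ℕ} (hp : 2 ≤ p) (he : 2 ≤ e) :
    (e : ℝ) * Real.log p / (p : ℝ) ^ e ≤ 4 * (p : ℝ) ^ (-(3 / 2) : ℝ) := by
  have h1 := natCast_mul_log_div_pow_antitone hp one_le_two he
  have h2 := log_div_sq_le (n := p) (by omega)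
  push_cast at h1
  rw [mul_div_assoc (2 : ℝ)] at h1
  linarith

lemma abs_Smq_le_of_log_lt {q r : ℕ} [Fact q.Prime] (hq : 3 ≤ q) (hr : 1 ≤ r)
    (hrL : Real.log q < r) : |Smq q r| ≤ 144 *
      (Real.log q ^ 3 / ((q : ℝ) ^ ((1 : ℝ) / r) * Real.log (Real.log q))) := by
  have hL := one_le_log_of_three_le hq
  have hl := loglog_pos hq
  have hq0 : (0 : ℝ) < q := by positivity
  have hr0 : (0 : ℝ) < r := by exact_mod_cast hr
  have h1 : |Smq q r| ≤ ∑' n : ℕ, 12 * (n : ℝ) ^ (-(3 / 2) : ℝ) := by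
    refine abs_Smq_le (summable_rpow_three_halves.mul_left _) (fun n => by positivity) ?_
    intro p hp
    by_cases hpq : p = q
    · rw [Sterm, if_pos hpq, abs_zero]
      positivity
    · obtain ⟨e, he, h, -⟩ := exists_Sterm_le hq hr hp hpq
      linarith [natCast_mul_log_div_pow_le hp.two_le he]
  rw [tsum_mul_left] at h1
  have hy : (q : ℝ) ^ ((1 : ℝ) / r) ≤ 3 := by
    rw [Real.rpow_def_of_pos hq0, mul_one_div]
    refine (Real.exp_le_exp.mpr ((div_le_one hr0).mpr hrL.le)).trans ?_
    have := Real.exp_one_lt_d9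
    linarith
  have hlL : Real.log (Real.log q) ≤ Real.log q :=
    (Real.log_le_sub_one_of_pos (by linarith)).trans (by linarith)
  have h2 : 1 / 3 ≤ Real.log q ^ 3 / ((q : ℝ) ^ ((1 : ℝ) / r) * Real.log (Real.log q)) := by
    rw [div_le_div_iff₀ (by norm_num) (by positivity)]
    calc 1 * ((q : ℝ) ^ ((1 : ℝ) / r) * Real.log (Real.log q)) ≤ 1 * (3 * Real.log q) := by
          gcongr
      _ = Real.log q ^ 1 * 3 := by ring
      _ ≤ Real.log q ^ 3 * 3 := by gcongr; norm_num
  linarith [tsum_rpow_three_halves_le]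

lemma rpow_inv_le_two_mul_pow {q r p e : ℕ} (hr : 1 ≤ r) (h : q ≤ 2 * p ^ (e * r)) :
    (q : ℝ) ^ ((1 : ℝ) / r) ≤ 2 * (p : ℝ) ^ e := by
  have hr0 : (0 : ℝ) < r := by exact_mod_cast hr
  rw [one_div, Real.rpow_inv_le_iff_of_pos (by positivity) (by positivity) hr0,
    Real.rpow_natCast, mul_pow, ← pow_mul]
  have h' : (q : ℝ) ≤ 2 * (p : ℝ) ^ (e * r) := by exact_mod_cast h
  refine h'.trans ?_
  gcongr
  exact le_self_pow₀ (by norm_num) (by omega)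

lemma natCast_mul_log_div_pow_le_of_le {q r p e : ℕ} (hq : 3 ≤ q) (hr : 1 ≤ r) (hp : 2 ≤ p)
    (hrL : (r : ℝ) ≤ Real.log q) (h : q ≤ 2 * p ^ (e * r)) :
    (e : ℝ) * Real.log p / (p : ℝ) ^ e ≤
      4 * Real.log q / (r * (q : ℝ) ^ ((1 : ℝ) / r)) := by
  have hq0 : (0 : ℝ) < q := by positivity
  have hr0 : (0 : ℝ) < r := by exact_mod_cast hr
  have hp0 : (0 : ℝ) < p := by positivity
  have hlogy : Real.log ((q : ℝ) ^ ((1 : ℝ) / r)) = Real.log q / r := by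
    rw [Real.log_rpow hq0, one_div_mul_eq_div]
  have hyP := rpow_inv_le_two_mul_pow hr h
  have hy : 0 < (q : ℝ) ^ ((1 : ℝ) / r) := by positivity
  set y := (q : ℝ) ^ ((1 : ℝ) / r)
  set P := (p : ℝ) ^ e with hP
  have hP0 : 0 < P := by positivity
  have h1 : (e : ℝ) * Real.log p ≤ Real.log q / r + 2 * P / y := by
    have h2 : Real.log (2 * P / y) ≤ 2 * P / y - 1 := Real.log_le_sub_one_of_pos (by positivity)
    rw [Real.log_div (by positivity) (by positivity), Real.log_mul (by norm_num) (by positivity),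
      hP, Real.log_pow, hlogy] at h2
    have := Real.log_nonneg (x := 2) (by norm_num)
    linarith
  have hLr : 1 ≤ Real.log q / r := (one_le_div hr0).mpr hrL
  have h3 : P⁻¹ ≤ 2 / y := by
    rw [inv_eq_one_div, div_le_div_iff₀ hP0 hy]
    linarith
  calc (e : ℝ) * Real.log p / P ≤ (Real.log q / r + 2 * P / y) / P := by gcongr
    _ = Real.log q / r * P⁻¹ + 2 / y := by field_simp
    _ ≤ Real.log q / r * (2 / y) + Real.log q / r * (2 / y) := by
        gcongr
        exact le_mul_of_one_le_left (by positivity) hLr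
    _ = _ := by field_simp; ring

lemma natCast_le_three_mul_rpow {p e : ℕ} (hp : 2 ≤ p) (h : 2 ≤ e) :
    (e : ℝ) ≤ 3 * (p : ℝ) ^ (((e : ℝ) - 2) / 2) := by
  have hp2 : (2 : ℝ) ≤ p := by exact_mod_cast hp
  have he : (2 : ℝ) ≤ e := by exact_mod_cast h
  have h1 : (2 : ℝ) ^ (((e : ℝ) - 2) / 2) ≤ (p : ℝ) ^ (((e : ℝ) - 2) / 2) := by
    gcongr
  have h2 : Real.log 2 * (((e : ℝ) - 2) / 2) + 1 ≤ (2 : ℝ) ^ (((e : ℝ) - 2) / 2) := by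
    rw [Real.rpow_def_of_pos two_pos]
    exact Real.add_one_le_exp _
  have := Real.log_two_gt_d9
  nlinarith

lemma natCast_mul_log_div_pow_le_of_lt {q r p e : ℕ} (hq : 3 ≤ q) (hr : 1 ≤ r) (hp : 2 ≤ p)
    (hpL : Real.log q < p)
    (he : 2 * Real.log q / (r * Real.log (Real.log q)) + 2 < e) :
    (e : ℝ) * Real.log p / (p : ℝ) ^ e ≤
      6 / (q : ℝ) ^ ((1 : ℝ) / r) * (p : ℝ) ^ (-(3 / 2) : ℝ) := by
  have hL := one_le_log_of_three_le hq
  have hl := loglog_pos hq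
  have hq0 : (0 : ℝ) < q := by positivity
  have hr0 : (0 : ℝ) < r := by exact_mod_cast hr
  have hp0 : (0 : ℝ) < p := by positivity
  have hlog : 0 ≤ Real.log p := Real.log_natCast_nonneg p
  set u := ((e : ℝ) - 2) / 2 with hu
  have hu1 : Real.log q / (r * Real.log (Real.log q)) ≤ u := by
    rw [mul_div_assoc] at he
    rw [hu]
    linarith
  have hy : (q : ℝ) ^ ((1 : ℝ) / r) ≤ (p : ℝ) ^ u := by
    rw [Real.rpow_def_of_pos hq0, Real.rpow_def_of_pos hp0, Real.exp_le_exp]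
    calc Real.log q * (1 / r)
        = Real.log (Real.log q) * (Real.log q / (r * Real.log (Real.log q))) := by
          field_simp
      _ ≤ Real.log p * u := by
          gcongr
  have hsplit : (p : ℝ) ^ e = (p : ℝ) ^ 2 * ((p : ℝ) ^ u * (p : ℝ) ^ u) := by
    rw [← Real.rpow_add hp0, ← Real.rpow_natCast, ← Real.rpow_natCast (p : ℝ) 2,
      ← Real.rpow_add hp0, hu]
    congr 1
    push_cast
    ring
  have he2 : 2 ≤ e := by
    have h0 : 0 < 2 * Real.log q / (r * Real.log (Real.log q)) := by positivity
    have : (2 : ℝ) < e := by linarith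
    exact_mod_cast this.le
  have h3 := natCast_le_three_mul_rpow hp he2
  rw [← hu] at h3
  have hpu : 0 < (p : ℝ) ^ u := by positivity
  rw [hsplit]
  calc (e : ℝ) * Real.log p / ((p : ℝ) ^ 2 * ((p : ℝ) ^ u * (p : ℝ) ^ u))
      ≤ 3 * (p : ℝ) ^ u * Real.log p / ((p : ℝ) ^ 2 * ((p : ℝ) ^ u * (p : ℝ) ^ u)) := by
        gcongr
    _ = 3 * (Real.log p / (p : ℝ) ^ 2) / (p : ℝ) ^ u := by field_simp
    _ ≤ 3 * (2 * (p : ℝ) ^ (-(3 / 2) : ℝ)) / (q : ℝ) ^ ((1 : ℝ) / r) := by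
        gcongr
        exact log_div_sq_le (by omega)
    _ = _ := by ring

open Classical in
/-- The residues `n < q` whose order is compatible with an exponent `e ≤ N`. -/
noncomputable def smallOrderResidues (q r N : ℕ) : Finset ℕ :=
  (Finset.range q).filter fun n => ∃ e ∈ Finset.Icc 1 N,
    (n : ZMod q) ^ (2 * e * r) = 1 ∨ (n : ZMod q) ^ ((e + 1) * r) = 1

lemma mem_smallOrderResidues {q r N n : ℕ} : n ∈ smallOrderResidues q r N ↔
    n ∈ Finset.range q ∧ ∃ e ∈ Finset.Icc 1 N,
      (n : ZMod q) ^ (2 * e * r) = 1 ∨ (n : ZMod q) ^ ((e + 1) * r) = 1 := by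
  simp only [smallOrderResidues, Finset.mem_filter]

lemma card_filter_range_pow_eq_le {q m : ℕ} [Fact q.Prime] (hm : 0 < m) :
    ((Finset.range q).filter fun n : ℕ => (n : ZMod q) ^ m = 1).card ≤ m := by
  refine le_trans ?_ (card_filter_pow_eq_le hm (1 : ZMod q))
  refine Finset.card_le_card_of_injOn (fun n : ℕ => (n : ZMod q)) (fun n hn => ?_) ?_
  · simpa using (Finset.mem_filter.mp hn).2
  · intro a ha b hb hab
    have ha' := Finset.mem_range.mp (Finset.mem_filter.mp ha).1
    have hb' := Finset.mem_range.mp (Finset.mem_filter.mp hb).1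
    have := congrArg ZMod.val hab
    simpa [ZMod.val_natCast, Nat.mod_eq_of_lt ha', Nat.mod_eq_of_lt hb'] using this

lemma card_smallOrderResidues_le {q r : ℕ} [Fact q.Prime] (hr : 1 ≤ r) (N : ℕ) :
    (smallOrderResidues q r N).card ≤ 4 * r * N ^ 2 := by
  classical
  have hsub : smallOrderResidues q r N ⊆ (Finset.Icc 1 N).biUnion fun e =>
      ((Finset.range q).filter fun n : ℕ => (n : ZMod q) ^ (2 * e * r) = 1) ∪
      ((Finset.range q).filter fun n : ℕ => (n : ZMod q) ^ ((e + 1) * r) = 1) := by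
    intro n hn
    obtain ⟨h1, e, he, h2⟩ := mem_smallOrderResidues.mp hn
    refine Finset.mem_biUnion.mpr ⟨e, he, Finset.mem_union.mpr ?_⟩
    exact h2.imp (fun h => Finset.mem_filter.mpr ⟨h1, h⟩) fun h => Finset.mem_filter.mpr ⟨h1, h⟩
  refine (Finset.card_le_card hsub).trans (Finset.card_biUnion_le.trans ?_)
  have hterm : ∀ e ∈ Finset.Icc 1 N,
      (((Finset.range q).filter fun n : ℕ => (n : ZMod q) ^ (2 * e * r) = 1) ∪
      ((Finset.range q).filter fun n : ℕ => (n : ZMod q) ^ ((e + 1) * r) = 1)).card ≤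
      4 * r * N := by
    intro e he
    obtain ⟨he1, heN⟩ := Finset.mem_Icc.mp he
    refine (Finset.card_union_le _ _).trans ((add_le_add
      (card_filter_range_pow_eq_le (by positivity))
      (card_filter_range_pow_eq_le (by positivity))).trans ?_)
    calc 2 * e * r + (e + 1) * r ≤ 2 * N * r + (N + N) * r := by gcongr; omega
      _ = 4 * r * N := by ring
  refine (Finset.sum_le_sum hterm).trans (le_of_eq ?_)
  rw [Finset.sum_const, Nat.card_Icc, smul_eq_mul, Nat.add_sub_cancel]
  ring

lemma hasSum_indicator_const (s : Finset ℕ) (c : ℝ) [DecidablePred (· ∈ s)] :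
    HasSum (fun n : ℕ => if n ∈ s then c else 0) (s.card * c) := by
  have h := hasSum_sum_of_ne_finset_zero (L := SummationFilter.unconditional ℕ)
    (f := fun n : ℕ => if n ∈ s then c else 0) (s := s) fun n hn => if_neg hn
  rwa [Finset.sum_congr rfl (fun n hn => if_pos hn), Finset.sum_const, nsmul_eq_mul] at h

lemma abs_Smq_le_of_le_log {q r : ℕ} [Fact q.Prime] (hq : 3 ≤ q) (hr : 1 ≤ r)
    (hrL : (r : ℝ) ≤ Real.log q) (hl1 : 1 ≤ Real.log (Real.log q)) :
    |Smq q r| ≤ 1000 * errorTerm q r := by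
  classical
  have hL := one_le_log_of_three_le hq
  have hq0 : (0 : ℝ) < q := by positivity
  have hr0 : (1 : ℝ) ≤ r := by exact_mod_cast hr
  have hsq : 0 < √(q : ℝ) := Real.sqrt_pos.mpr hq0
  have hlL : Real.log (Real.log q) ≤ Real.log q :=
    (Real.log_le_sub_one_of_pos (by linarith)).trans (by linarith)
  have hbig := fun p e => natCast_mul_log_div_pow_le_of_lt (q := q) (r := r) (p := p) (e := e)
    hq hr
  have hmid := fun p e => natCast_mul_log_div_pow_le_of_le (q := q) (r := r) (p := p) (e := e)
    hq hr
  rw [errorTerm]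
  set L := Real.log q with hLdef
  set l := Real.log L with hldef
  set y := (q : ℝ) ^ ((1 : ℝ) / r) with hydef
  have hy : 0 < y := by positivity
  set G := 2 * L / (r * l) + 2 with hG
  have hG0 : 0 ≤ G := by positivity
  set S := Finset.Icc 1 ⌊L⌋₊ with hS
  set F := smallOrderResidues q r ⌊G⌋₊ with hF
  set c := 4 * L / (r * y) with hc
  have hc0 : 0 ≤ c := by positivity
  obtain ⟨ht1, ht2⟩ := tsum_tail_three_halves (N := q) (by omega)
  set B : ℕ → ℝ := fun n => (if n ∈ S then c else 0) + (if n ∈ F then c else 0) +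
    6 / y * (n : ℝ) ^ (-(3 / 2) : ℝ) +
    4 * (if q < n then (n : ℝ) ^ (-(3 / 2) : ℝ) else 0) with hB
  have hB0 : ∀ n, 0 ≤ B n := fun n => by
    simp only [hB]
    positivity
  have hBs := (((hasSum_indicator_const S c).add (hasSum_indicator_const F c)).add
    (summable_rpow_three_halves.hasSum.mul_left (6 / y))).add (ht1.hasSum.mul_left 4)
  have h1 : |Smq q r| ≤ ∑' n, 3 * B n := by
    refine abs_Smq_le (hBs.summable.mul_left 3) (fun n => mul_nonneg (by norm_num) (hB0 n)) ?_
    intro p hp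
    by_cases hpq : p = q
    · rw [Sterm, if_pos hpq, abs_zero]
      exact mul_nonneg (by norm_num) (hB0 p)
    · obtain ⟨e, he, h, hqp, hord⟩ := exists_Sterm_le hq hr hp hpq
      refine h.trans (mul_le_mul_of_nonneg_left ?_ (by norm_num))
      have b1 : 0 ≤ if p ∈ S then c else 0 := by positivity
      have b2 : 0 ≤ if p ∈ F then c else 0 := by positivity
      have b3 : 0 ≤ 6 / y * (p : ℝ) ^ (-(3 / 2) : ℝ) := by positivity
      have b4 : 0 ≤ 4 * (if q < p then (p : ℝ) ^ (-(3 / 2) : ℝ) else 0) := by positivity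
      have hm := hmid p e hp.two_le hrL hqp
      simp only [hB]
      rcases le_or_gt (p : ℝ) L with hpL | hpL
      · have : p ∈ S := Finset.mem_Icc.mpr ⟨hp.one_lt.le, Nat.le_floor hpL⟩
        rw [if_pos this] at b1 ⊢
        linarith
      rcases lt_or_ge q p with hqp' | hqp'
      · have := natCast_mul_log_div_pow_le hp.two_le he
        rw [if_pos hqp'] at b4 ⊢
        linarith
      rcases le_or_gt (e : ℝ) G with heG | heG
      · have : p ∈ F := mem_smallOrderResidues.mpr ⟨Finset.mem_range.mpr (lt_of_le_of_ne hqp' hpq),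
          e, Finset.mem_Icc.mpr ⟨by omega, Nat.le_floor heG⟩, hord⟩
        rw [if_pos this] at b2 ⊢
        linarith
      · have := hbig p e hp.two_le hpL heG
        linarith
  rw [tsum_mul_left, hBs.tsum_eq] at h1
  have hE1 : 0 ≤ L ^ 3 / (y * l) := by positivity
  have k1 : (S.card : ℝ) * c ≤ 4 * (L ^ 3 / (y * l)) := by
    have hcard : (S.card : ℝ) ≤ L := by
      rw [hS, Nat.card_Icc, Nat.add_sub_cancel]
      exact Nat.floor_le (by linarith)
    have hc' : c ≤ 4 * L / y := by
      rw [hc]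
      gcongr
      exact le_mul_of_one_le_left hy.le hr0
    calc (S.card : ℝ) * c ≤ L * (4 * L / y) := by gcongr
      _ = 4 * (L ^ 2 * l / (y * l)) := by field_simp
      _ ≤ 4 * (L ^ 2 * L / (y * l)) := by gcongr
      _ = _ := by ring
  have k2 : (F.card : ℝ) * c ≤ 256 * (L ^ 3 / (y * l)) := by
    have hcard : (F.card : ℝ) ≤ 4 * r * G ^ 2 := by
      have h := card_smallOrderResidues_le (q := q) hr ⌊G⌋₊
      have h' : (F.card : ℝ) ≤ 4 * r * (⌊G⌋₊ : ℝ) ^ 2 := by exact_mod_cast h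
      refine h'.trans ?_
      gcongr
      exact Nat.floor_le hG0
    have hG4 : G ≤ 4 * L / l := by
      have e1 : 2 * L / (r * l) ≤ 2 * L / l := by
        gcongr
        exact le_mul_of_one_le_left (by linarith) hr0
      have e2 : 2 ≤ 2 * L / l := by
        rw [le_div_iff₀ (by linarith)]
        linarith
      have e3 : 4 * L / l = 2 * L / l + 2 * L / l := by ring
      linarith
    calc (F.card : ℝ) * c ≤ 4 * r * (4 * L / l) ^ 2 * c := by
          gcongr
          exact hcard.trans (by gcongr)
      _ = 256 * (L ^ 3 / (y * (l * l))) := by rw [hc]; field_simp; norm_num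
      _ ≤ 256 * (L ^ 3 / (y * l)) := by
          gcongr
          exact le_mul_of_one_le_left (by linarith) hl1
  have k3 : 6 / y * ∑' n : ℕ, (n : ℝ) ^ (-(3 / 2) : ℝ) ≤ 24 * (L ^ 3 / (y * l)) := by
    have hlL3 : l ≤ L ^ 3 := hlL.trans (le_self_pow₀ hL (by norm_num))
    calc 6 / y * ∑' n : ℕ, (n : ℝ) ^ (-(3 / 2) : ℝ) ≤ 6 / y * 4 := by
          gcongr
          exact tsum_rpow_three_halves_le
      _ = 24 * (l / (y * l)) := by field_simp; norm_num
      _ ≤ _ := by gcongr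
  have k4 : 1 / √(q : ℝ) ≤ r * L ^ 2 / √q := by
    gcongr
    have : (1 : ℝ) ≤ L ^ 2 := one_le_pow₀ hL
    nlinarith
  have k6 : 0 ≤ r * L ^ 2 / √(q : ℝ) := by positivity
  have k5 : (2 : ℝ) / √q = 2 * (1 / √q) := by ring
  linarith

lemma exists_pow_eq_neg_one {q r : ℕ} [Fact q.Prime] (hq : 3 ≤ q) (hrq : r ∣ q - 1)
    (h2 : 2 ∣ (q - 1) / r) : ∃ b : ZMod q, b ^ r = -1 := by
  obtain ⟨g, hg⟩ := IsCyclic.exists_generator (α := (ZMod q)ˣ)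
  have hord : orderOf g = q - 1 := by
    rw [orderOf_eq_card_of_forall_mem_zpowers hg, Nat.card_eq_fintype_card,
      ZMod.card_units_eq_totient, Nat.totient_prime Fact.out]
  obtain ⟨m, hm⟩ := h2
  have hqm : q - 1 = 2 * (m * r) := by
    rw [← Nat.div_mul_cancel hrq, hm, mul_assoc]
  have hone : (g : ZMod q) ^ (q - 1) = 1 := ZMod.pow_card_sub_one_eq_one g.ne_zero
  rw [hqm, mul_comm, pow_mul, sq_eq_one_iff] at hone
  refine ⟨(g : ZMod q) ^ m, ?_⟩
  rw [← pow_mul]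
  refine hone.resolve_left fun h => ?_
  have h1 : g ^ (m * r) = 1 := Units.ext (by push_cast; exact h)
  have := Nat.le_of_dvd (by omega) (orderOf_dvd_of_pow_eq_one h1)
  omega

lemma errorTerm_pos {q r : ℕ} (hq : 3 ≤ q) (hr : 1 ≤ r) : 0 < errorTerm q r := by
  have hL := one_le_log_of_three_le hq
  have hl := loglog_pos hq
  have hq0 : (0 : ℝ) < q := by positivity
  have hr0 : (0 : ℝ) < r := by exact_mod_cast hr
  rw [errorTerm]
  positivity

lemma gammakq_gcd (q k : ℕ) : gammakq q (Nat.gcd k (q - 1)) = gammakq q k := by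
  have h : Nat.gcd (Nat.gcd k (q - 1)) (q - 1) = Nat.gcd k (q - 1) :=
    Nat.gcd_eq_left (Nat.gcd_dvd_right _ _)
  simp only [gammakq, h]

/-- The main theorem for all sufficiently large moduli. -/
lemma abs_gammakq_sub_le {q k r : ℕ} [Fact q.Prime] (hq : 3 ≤ q) (hrk : r = Nat.gcd k (q - 1))
    (h2 : 2 ∣ (q - 1) / r)
    (hqL : 2 ^ 160 * Real.log q ^ 36 ≤ (q : ℝ) ^ ((1 : ℝ) / 4))
    (hl1 : 1 ≤ Real.log (Real.log q)) :
    |gammakq q k - Real.eulerMascheroniConstant| ≤ 300000 * errorTerm q r := by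
  have hrq : r ∣ q - 1 := hrk ▸ Nat.gcd_dvd_right _ _
  have hq1 : 0 < q - 1 := by omega
  have hr : 1 ≤ r := Nat.pos_of_dvd_of_pos hrq hq1
  obtain ⟨b, hb⟩ := exists_pow_eq_neg_one hq hrq h2
  have hL := one_le_log_of_three_le hq
  have hq0 : (0 : ℝ) < q := by positivity
  have hq3 : (3 : ℝ) ≤ q := by exact_mod_cast hq
  have hr0 : (1 : ℝ) ≤ r := by exact_mod_cast hr
  have hsq : 0 < √(q : ℝ) := Real.sqrt_pos.mpr hq0
  have hsum := norm_sum_mul_logDerivL_one_le hq hr hrq hb hqL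
  have hS : |Smq q r| ≤ 1000 * errorTerm q r := by
    rcases le_or_gt (r : ℝ) (Real.log q) with h | h
    · exact abs_Smq_le_of_le_log hq hr h hl1
    · have h1 := abs_Smq_le_of_log_lt hq hr h
      have e : 0 ≤ Real.log q ^ 3 / ((q : ℝ) ^ ((1 : ℝ) / r) * Real.log (Real.log q)) := by
        positivity
      have e2 : 0 ≤ r * Real.log q ^ 2 / √(q : ℝ) := by positivity
      rw [errorTerm]
      linarith
  have hgam := two_mul_gammaK_sub (q := q) (r := r) (by omega) hb
  have hR : (r : ℝ) * Real.log q ^ 2 / √q ≤ errorTerm q r := by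
    rw [errorTerm]
    refine le_add_of_nonneg_left ?_
    positivity
  rw [gammakq, ← hrk, hgam]
  set Z := ∑ χ ∈ (charsTrivialOnRoots q r).erase 1, χ b * logDerivL χ 1
  set h : ℕ := (q - 1) / r with hh
  have hh0 : (0 : ℝ) < h := by
    exact_mod_cast Nat.div_pos (Nat.le_of_dvd hq1 hrq) hr
  have hhr : (h : ℝ) * r = q - 1 := by
    have e : h * r = q - 1 := Nat.div_mul_cancel hrq
    have e2 : ((h * r : ℕ) : ℝ) = ((q - 1 : ℕ) : ℝ) := by rw [e]
    rwa [Nat.cast_mul, Nat.cast_sub (by omega), Nat.cast_one] at e2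
  have hhinv : 1 / (h : ℝ) ≤ 2 * (r / √q) := by
    have h1 : √(q : ℝ) ≤ q := by
      rw [Real.sqrt_le_left hq0.le]
      nlinarith
    rw [← mul_div_assoc, div_le_div_iff₀ hh0 hsq]
    have e : 2 * (r : ℝ) * h = 2 * (h * r) := by ring
    rw [e, hhr]
    linarith
  have hA : 1 / (h : ℝ) * |Real.eulerMascheroniConstant| ≤ 2 * errorTerm q r := by
    have hg : |Real.eulerMascheroniConstant| ≤ 1 := by
      have h1 := Real.one_half_lt_eulerMascheroniConstant
      have h2 := Real.eulerMascheroniConstant_lt_two_thirds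
      rw [abs_le]
      constructor <;> linarith
    calc 1 / (h : ℝ) * |Real.eulerMascheroniConstant| ≤ 2 * (r / √q) * 1 := by gcongr
      _ = 2 * (r * 1 / √q) := by ring
      _ ≤ 2 * (r * Real.log q ^ 2 / √q) := by gcongr; exact one_le_pow₀ hL
      _ ≤ _ := by gcongr
  have hB : |Real.log q / (h * ((q : ℝ) - 1))| ≤ 2 * errorTerm q r := by
    rw [abs_of_nonneg (div_nonneg (by linarith) (mul_nonneg hh0.le (by linarith)))]
    calc Real.log q / (h * ((q : ℝ) - 1)) ≤ Real.log q / (h * 1) := by gcongr; linarith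
      _ = 1 / (h : ℝ) * Real.log q := by ring
      _ ≤ 2 * (r / √q) * Real.log q := by gcongr
      _ = 2 * (r * Real.log q ^ 1 / √q) := by ring
      _ ≤ 2 * (r * Real.log q ^ 2 / √q) := by gcongr; norm_num
      _ ≤ _ := by gcongr
  have hC : |1 / (h : ℝ) * (Real.eulerMascheroniConstant + Z.re)| ≤
      200002 * errorTerm q r := by
    rw [abs_mul, abs_of_pos (one_div_pos.mpr hh0)]
    calc 1 / (h : ℝ) * |Real.eulerMascheroniConstant + Z.re|
        ≤ 1 / (h : ℝ) * (|Real.eulerMascheroniConstant| + ‖Z‖) := by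
          gcongr
          exact (abs_add_le _ _).trans (by gcongr; exact Complex.abs_re_le_norm Z)
      _ = 1 / (h : ℝ) * |Real.eulerMascheroniConstant| + 1 / (h : ℝ) * ‖Z‖ := by ring
      _ ≤ 2 * errorTerm q r + 200000 * errorTerm q r := add_le_add hA hsum
      _ = _ := by ring
  have hpos := errorTerm_pos hq hr
  rw [abs_le] at hB hC hS ⊢
  constructor <;> linarith [hB.1, hB.2, hC.1, hC.2, hS.1, hS.2]

lemma eventually_log_pow_le : ∃ N : ℕ, ∀ q : ℕ, N ≤ q →
    2 ^ 160 * Real.log q ^ 36 ≤ (q : ℝ) ^ ((1 : ℝ) / 4) ∧ 1 ≤ Real.log (Real.log q) := by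
  rw [← eventually_atTop]
  have h1 := (isLittleO_log_rpow_rpow_atTop (s := 1 / 4) (36 : ℝ) (by norm_num)).bound
    (c := (2 ^ 160)⁻¹) (by positivity)
  have h2 := (Real.tendsto_log_atTop.comp Real.tendsto_log_atTop).eventually_ge_atTop 1
  have h3 := h1.and (h2.and (eventually_ge_atTop (1 : ℝ)))
  filter_upwards [tendsto_natCast_atTop_atTop.eventually h3] with q hq
  obtain ⟨hq1, hq2, hq3⟩ := hq
  refine ⟨?_, hq2⟩
  have hlog : 0 ≤ Real.log q := Real.log_nonneg hq3
  rw [Real.norm_of_nonneg (by positivity), Real.norm_of_nonneg (by positivity),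
    ← div_eq_inv_mul, le_div_iff₀ (by positivity)] at hq1
  have e : Real.log (q : ℝ) ^ (36 : ℝ) = Real.log q ^ 36 := by
    rw [← Real.rpow_natCast]
    norm_num
  rw [e] at hq1
  linarith

lemma exists_bound_of_lt (F : ℕ → ℕ → ℝ) (hF : ∀ a b, 0 ≤ F a b) (N : ℕ) :
    ∃ D : ℝ, 0 ≤ D ∧ ∀ a b, a < N → b < N → F a b ≤ D := by
  refine ⟨∑ a ∈ Finset.range N, ∑ b ∈ Finset.range N, F a b,
    Finset.sum_nonneg fun a _ => Finset.sum_nonneg fun b _ => hF a b, fun a b ha hb => ?_⟩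
  exact (Finset.single_le_sum (f := fun b => F a b) (fun b _ => hF a b)
    (Finset.mem_range.mpr hb)).trans
    (Finset.single_le_sum (f := fun a => ∑ b ∈ Finset.range N, F a b)
      (fun a _ => Finset.sum_nonneg fun b _ => hF a b) (Finset.mem_range.mpr ha))

/-- There is an absolute constant `C > 0` such that for every odd prime `q`
and integer `k ≥ 1` with `r = gcd(k, q−1)` and `h = (q−1)/r` even,
`|γ_{k,q} − γ| ≤ C·((log q)³/(q^{1/r}·log log q) + r·(log q)²/√q)`. -/
theorem statement3 :
    ∃ C : ℝ, 0 < C ∧ ∀ q k r : ℕ, q.Prime → q ≠ 2 → 1 ≤ k →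
      r = Nat.gcd k (q - 1) → 2 ∣ (q - 1) / r →
      |gammakq q k - Real.eulerMascheroniConstant| ≤
        C * (Real.log q ^ 3 / ((q : ℝ) ^ ((1 : ℝ) / r) * Real.log (Real.log q))
          + r * Real.log q ^ 2 / Real.sqrt q) := by
  obtain ⟨N, hN⟩ := eventually_log_pow_le
  obtain ⟨D, hD0, hD⟩ := exists_bound_of_lt
    (fun q r => |gammakq q r - Real.eulerMascheroniConstant| / |errorTerm q r|)
    (fun _ _ => div_nonneg (abs_nonneg _) (abs_nonneg _)) N
  refine ⟨300000 + D, by positivity, fun q k r hqp hq2 _ hrk h2 => ?_⟩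
  change _ ≤ (300000 + D) * errorTerm q r
  have : Fact q.Prime := ⟨hqp⟩
  have hq : 3 ≤ q := by
    have := hqp.two_le
    omega
  have hrq : r ∣ q - 1 := hrk ▸ Nat.gcd_dvd_right _ _
  have hr : 1 ≤ r := Nat.pos_of_dvd_of_pos hrq (by omega)
  have hpos := errorTerm_pos hq hr
  rcases le_or_gt N q with h | h
  · refine (abs_gammakq_sub_le hq hrk h2 (hN q h).1 (hN q h).2).trans ?_
    gcongr
    linarith
  · have hrN : r < N := by
      have := Nat.le_of_dvd (by omega) hrq
      omega
    have h1 : |gammakq q r - Real.eulerMascheroniConstant| / |errorTerm q r| ≤ D :=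
      hD q r h hrN
    rw [abs_of_pos hpos, div_le_iff₀ hpos] at h1
    rw [← gammakq_gcd, ← hrk]
    refine h1.trans ?_
    gcongr
    linarith
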